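/- arXiv:0811.2806 — 2 statements merged into one kernel-verified Lean document; each statement's English description precedes it below -/
import Mathlib

section
/- (Logarithm law for unipotent flows) Let n ≥ 2, let {u_t} be a one-parameter unipotent subgroup of SL(n,ℝ), and let α₁(Λ) = sup_{0≠v∈Λ} 1/‖v‖. Then for Haar-almost every unimodular lattice Λ ∈ X_n, limsup_{t→∞} log α₁(u_t Λ) / log t = 1/n. -/
open MeasureTheory Filter Matrix Real ENNReal

noncomputable section

/-- `SL(n, ℝ)`. -/
abbrev SLR (n : ℕ) := Matrix.SpecialLinearGroup (Fin n) ℝ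

instance (n : ℕ) : TopologicalSpace (SLR n) :=
  TopologicalSpace.induced (fun g => (g : Matrix (Fin n) (Fin n) ℝ)) inferInstance

/-- The image of `SL(n, ℤ)` in `SL(n, ℝ)`. -/
def latticeGamma (n : ℕ) : Subgroup (SLR n) :=
  (Matrix.SpecialLinearGroup.map (n := Fin n) (Int.castRingHom ℝ)).range

/-- The space of unimodular lattices `X_n = SL(n,ℝ)/SL(n,ℤ)`. -/
abbrev LatticeSpace (n : ℕ) := SLR n ⧸ latticeGamma n

instance (n : ℕ) : MeasurableSpace (LatticeSpace n) := borel _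

/-- The real vector `g · m` of the lattice `g ℤⁿ` coming from the integer vector `m`. -/
def vecOf (n : ℕ) (g : SLR n) (m : Fin n → ℤ) : Fin n → ℝ :=
  (g : Matrix (Fin n) (Fin n) ℝ).mulVec (fun i => (m i : ℝ))

/-- Euclidean norm on `Fin n → ℝ`. -/
def eNorm {n : ℕ} (v : Fin n → ℝ) : ℝ := ‖(WithLp.equiv 2 (Fin n → ℝ)).symm v‖

/-- The lattice `Λ` contains a nonzero vector lying in `A`. -/
def Intersects (n : ℕ) (Λ : LatticeSpace n) (A : Set (Fin n → ℝ)) : Prop :=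
  ∀ g : SLR n, (QuotientGroup.mk g : LatticeSpace n) = Λ →
    ∃ m : Fin n → ℤ, m ≠ 0 ∧ vecOf n g m ∈ A

/-- `α₁(Λ) = sup_{0 ≠ v ∈ Λ} 1/‖v‖` (Euclidean norm). -/
def alpha1 (n : ℕ) (Λ : LatticeSpace n) : ℝ :=
  sSup {r : ℝ | ∃ g : SLR n, (QuotientGroup.mk g : LatticeSpace n) = Λ ∧
    ∃ m : Fin n → ℤ, m ≠ 0 ∧ r = 1 / eNorm (vecOf n g m)}

/-- A nonempty finite set of integers contains two elements whose distance is at least its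
cardinality minus one. -/
lemma exists_card_sub_one_le_sub (C : Finset ℤ) (hC : C.Nonempty) :
    ∃ x ∈ C, ∃ y ∈ C, (C.card : ℤ) - 1 ≤ y - x := by
  refine ⟨C.min' hC, C.min'_mem hC, C.max' hC, C.max'_mem hC, ?_⟩
  have h : C ⊆ Finset.Icc (C.min' hC) (C.max' hC) := fun x hx =>
    Finset.mem_Icc.2 ⟨C.min'_le x hx, C.le_max' x hx⟩
  have h2 := Finset.card_le_card h
  rw [Int.card_Icc] at h2
  have h3 := C.min'_le _ (C.max'_mem hC)
  omega

/-- Membership of an integer point in the strip `|k| ≤ R`, `|k' - lam k| ≤ ρ`. -/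
def InStrip (R ρ lam : ℝ) (p : ℤ × ℤ) : Prop :=
  |(p.1 : ℝ)| ≤ R ∧ |(p.2 : ℝ) - lam * p.1| ≤ ρ

lemma exists_primitive_inStrip {R ρ lam : ℝ} {u : ℤ × ℤ} (hu : InStrip R ρ lam u) (h0 : u ≠ 0) :
    ∃ w : ℤ × ℤ, ∃ g : ℤ, g ≠ 0 ∧ InStrip R ρ lam w ∧ IsCoprime w.1 w.2 ∧
      u.1 = g * w.1 ∧ u.2 = g * w.2 := by
  obtain ⟨a, b⟩ := u
  have hg : 0 < Int.gcd a b := by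
    rw [Int.gcd_pos_iff]
    by_contra! h
    exact h0 (Prod.ext h.1 h.2)
  obtain ⟨a', b', hcop, ha, hb⟩ := Int.exists_gcd_one hg
  set g := Int.gcd a b
  have hg1 : (1 : ℝ) ≤ (g : ℝ) := by exact_mod_cast hg
  refine ⟨(a', b'), g, by exact_mod_cast hg.ne', ?_, Int.isCoprime_iff_gcd_eq_one.2 hcop,
    by simp only; rw [mul_comm]; exact ha, by simp only; rw [mul_comm]; exact hb⟩
  obtain ⟨h1, h2⟩ := hu
  have ea : (a : ℝ) = g * a' := by rw [ha]; push_cast; ring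
  have eb : (b : ℝ) = g * b' := by rw [hb]; push_cast; ring
  simp only [ea, eb] at h1 h2
  have e2 : (g : ℝ) * b' - lam * (g * a') = g * (b' - lam * a') := by ring
  rw [abs_mul, abs_of_pos (by linarith : (0 : ℝ) < g)] at h1
  rw [e2, abs_mul, abs_of_pos (by linarith : (0 : ℝ) < g)] at h2
  exact ⟨by nlinarith [abs_nonneg (a' : ℝ)], by
    simp only; nlinarith [abs_nonneg ((b' : ℝ) - lam * a')]⟩

lemma abs_det_le_of_inStrip {R ρ lam : ℝ} {v w : ℤ × ℤ} (hw : InStrip R ρ lam w) :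
    |(v.1 * w.2 - v.2 * w.1 : ℝ)| ≤ |(v.1 : ℝ)| * ρ + R * |(v.2 : ℝ) - lam * v.1| := by
  have e : (v.1 * w.2 - v.2 * w.1 : ℝ) =
    v.1 * (w.2 - lam * w.1) - w.1 * (v.2 - lam * v.1) := by ring
  rw [e]
  refine (abs_sub _ _).trans ?_
  rw [abs_mul, abs_mul]
  gcongr
  · exact hw.2
  · exact hw.1

/-- A strip containing two linearly independent integer points contains at most a constant times
its area many integer points. -/
lemma card_le_of_inStrip (P : Finset (ℤ × ℤ)) {R ρ lam : ℝ} (hP : ∀ p ∈ P, InStrip R ρ lam p)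
    {u v : ℤ × ℤ} (hu : InStrip R ρ lam u) (hv : InStrip R ρ lam v)
    (hdet : u.1 * v.2 - u.2 * v.1 ≠ 0) : (P.card : ℝ) ≤ 18 * (R * ρ) := by
  obtain ⟨w, g, hg, hw, hcop, e1, e2⟩ := exists_primitive_inStrip hu (by
    rintro rfl; simp at hdet)
  set a := |(w.1 : ℝ)| with ha
  set θ := |(w.2 : ℝ) - lam * w.1| with hθ
  have haR : a ≤ R := hw.1
  have hθρ : θ ≤ ρ := hw.2
  have ha0 : 0 ≤ a := abs_nonneg _
  have hθ0 : 0 ≤ θ := abs_nonneg _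
  set J := a * ρ + R * θ with hJ
  have hJ1 : 1 ≤ J := by
    refine le_trans ?_ (abs_det_le_of_inStrip (v := w) hv)
    have : w.1 * v.2 - w.2 * v.1 ≠ 0 := by
      intro h
      apply hdet
      rw [e1, e2]
      linear_combination g * h
    exact_mod_cast Int.one_le_abs this
  let f : ℤ × ℤ → ℤ := fun p => w.1 * p.2 - w.2 * p.1
  have himg : ((P.image f).card : ℝ) ≤ 3 * J := by
    have hsub : P.image f ⊆ Finset.Icc (-⌊J⌋) ⌊J⌋ := by
      intro j hj
      obtain ⟨p, hp, rfl⟩ := Finset.mem_image.1 hj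
      have h := abs_det_le_of_inStrip (v := w) (hP p hp)
      have h' : |((f p : ℤ) : ℝ)| ≤ J := by simpa [f] using h
      rw [Finset.mem_Icc, neg_le, Int.le_floor, Int.le_floor]
      push_cast
      exact ⟨(neg_le_abs _).trans h', (le_abs_self _).trans h'⟩
    have h1 := Finset.card_le_card hsub
    rw [Int.card_Icc] at h1
    have hfl : 0 ≤ ⌊J⌋ := Int.floor_nonneg.2 (by linarith)
    have h2 : ((P.image f).card : ℤ) ≤ 2 * ⌊J⌋ + 1 := by omega
    have h3 : ((P.image f).card : ℝ) ≤ 2 * (⌊J⌋ : ℝ) + 1 := by exact_mod_cast h2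
    linarith [Int.floor_le J]
  have hfib : ∀ j ∈ P.image f, (((P.filter fun p => f p = j).card : ℕ) : ℝ) * J ≤ 6 * (R * ρ) := by
    intro j hj
    obtain ⟨p0, hp0, hp0j⟩ := Finset.mem_image.1 hj
    have hc : ∀ p, f p = j → ∃ c : ℤ, p.1 = p0.1 + c * w.1 ∧ p.2 = p0.2 + c * w.2 := by
      intro p hp
      have hz : w.1 * (p.2 - p0.2) = w.2 * (p.1 - p0.1) := by
        have : f p = f p0 := by rw [hp, hp0j]
        simp only [f] at this
        linear_combination this
      obtain ⟨x, y, hxy⟩ := hcop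
      refine ⟨x * (p.1 - p0.1) + y * (p.2 - p0.2), ?_, ?_⟩
      · linear_combination (-(p.1 - p0.1)) * hxy - y * hz
      · linear_combination (-(p.2 - p0.2)) * hxy + x * hz
    choose! c hc1 hc2 using hc
    set F := P.filter fun p => f p = j
    have hinj : Set.InjOn c (F : Set (ℤ × ℤ)) := by
      intro p hp q hq h
      have hp' := (Finset.mem_filter.1 (Finset.mem_coe.1 hp)).2
      have hq' := (Finset.mem_filter.1 (Finset.mem_coe.1 hq)).2
      ext
      · rw [hc1 p hp', hc1 q hq', h]
      · rw [hc2 p hp', hc2 q hq', h]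
    have hne : (F.image c).Nonempty := ⟨c p0, Finset.mem_image_of_mem _
      (Finset.mem_filter.2 ⟨hp0, hp0j⟩)⟩
    obtain ⟨x, hx, y, hy, hxy⟩ := exists_card_sub_one_le_sub _ hne
    rw [Finset.card_image_of_injOn hinj] at hxy
    obtain ⟨p, hp, rfl⟩ := Finset.mem_image.1 hx
    obtain ⟨q, hq, rfl⟩ := Finset.mem_image.1 hy
    obtain ⟨hpP, hpj⟩ := Finset.mem_filter.1 hp
    obtain ⟨hqP, hqj⟩ := Finset.mem_filter.1 hq
    have hxy' : (F.card : ℝ) - 1 ≤ |((c q : ℝ) - c p)| := by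
      refine le_trans ?_ (le_abs_self _)
      exact_mod_cast hxy
    have hA : |((c q : ℝ) - c p)| * a ≤ 2 * R := by
      have e : (q.1 : ℝ) - p.1 = (c q - c p) * w.1 := by
        rw [hc1 q hqj, hc1 p hpj]; push_cast; ring
      rw [ha, ← abs_mul, ← e]
      exact (abs_sub _ _).trans (by linarith [(hP p hpP).1, (hP q hqP).1])
    have hB : |((c q : ℝ) - c p)| * θ ≤ 2 * ρ := by
      have e : ((q.2 : ℝ) - lam * q.1) - (p.2 - lam * p.1) =
          (c q - c p) * (w.2 - lam * w.1) := by
        rw [hc1 q hqj, hc1 p hpj, hc2 q hqj, hc2 p hpj]; push_cast; ring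
      rw [hθ, ← abs_mul, ← e]
      exact (abs_sub _ _).trans (by linarith [(hP p hpP).2, (hP q hqP).2])
    have hA' : (F.card : ℝ) * a ≤ 3 * R := by nlinarith
    have hB' : (F.card : ℝ) * θ ≤ 3 * ρ := by nlinarith
    have hR0 : 0 ≤ R := ha0.trans haR
    have hρ0 : 0 ≤ ρ := hθ0.trans hθρ
    calc (F.card : ℝ) * J = (F.card * a) * ρ + R * (F.card * θ) := by rw [hJ]; ring
      _ ≤ (3 * R) * ρ + R * (3 * ρ) := by gcongr
      _ = 6 * (R * ρ) := by ring
  have hcard : (P.card : ℝ) = ∑ j ∈ P.image f, ((P.filter fun p => f p = j).card : ℝ) := by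
    exact_mod_cast Finset.card_eq_sum_card_image f P
  have hRρ : 0 ≤ R * ρ := mul_nonneg (ha0.trans haR) (hθ0.trans hθρ)
  have hJ0 : 0 < J := by linarith
  rw [hcard]
  calc ∑ j ∈ P.image f, ((P.filter fun p => f p = j).card : ℝ)
      ≤ ∑ j ∈ P.image f, 6 * (R * ρ) / J := Finset.sum_le_sum fun j hj =>
        (le_div_iff₀ hJ0).2 (hfib j hj)
    _ = (P.image f).card * (6 * (R * ρ) / J) := by rw [Finset.sum_const, nsmul_eq_mul]
    _ ≤ (3 * J) * (6 * (R * ρ) / J) := by gcongr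
    _ = 18 * (R * ρ) := by field_simp; ring

/-- The linear combination `∑ j, v j • A j` of the columns `A j` of a matrix. -/
def comb {n : ℕ} (A : Fin n → Fin n → ℝ) (v : Fin n → ℝ) : Fin n → ℝ := ∑ j, v j • A j

/-- The ball of radius `1 / (2n)` (in the sup norm) around the `j`-th standard basis vector. -/
def colBox (n : ℕ) (j : Fin n) : Set (Fin n → ℝ) :=
  Metric.closedBall (Pi.single j 1) (1 / (2 * n))

/-- A product neighbourhood of the identity matrix. -/
def matBox (n : ℕ) : Set (Fin n → Fin n → ℝ) := Set.univ.pi (colBox n)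

lemma measurable_comb {n : ℕ} (v : Fin n → ℝ) : Measurable fun A => comb A v := by
  unfold comb; fun_prop

lemma comb_update {n : ℕ} (A : Fin n → Fin n → ℝ) (v : Fin n → ℝ) (j : Fin n) (a : Fin n → ℝ) :
    comb (Function.update A j a) v = v j • a + comb (Function.update A j 0) v := by
  unfold comb
  rw [← Finset.add_sum_erase _ _ (Finset.mem_univ j),
    ← Finset.add_sum_erase _ (fun i => v i • Function.update A j 0 i) (Finset.mem_univ j)]
  simp only [Function.update_self, smul_zero, zero_add]
  congr 1
  refine Finset.sum_congr rfl fun i hi => ?_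
  rw [Function.update_of_ne (Finset.ne_of_mem_erase hi),
    Function.update_of_ne (Finset.ne_of_mem_erase hi)]

lemma measurableSet_matBox (n : ℕ) : MeasurableSet (matBox n) :=
  MeasurableSet.univ_pi fun _ => Metric.isClosed_closedBall.measurableSet

lemma volume_colBox_le (n : ℕ) (j : Fin n) : volume (colBox n j) ≤ 1 := by
  have hn : 1 ≤ n := Fin.pos j
  have hn' : (1 : ℝ) ≤ n := by exact_mod_cast hn
  rw [colBox, Real.volume_pi_closedBall _ (by positivity)]
  rw [ENNReal.ofReal_le_one, Fintype.card_fin]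
  refine pow_le_one₀ (by positivity) ?_
  rw [show 2 * (1 / (2 * (n : ℝ))) = 1 / n by field_simp, div_le_one (by linarith)]
  exact hn'

lemma lintegral_comp_smul_add {n : ℕ} (φ : (Fin n → ℝ) → ℝ≥0∞) (hφ : Measurable φ) {α : ℝ}
    (hα : α ≠ 0) (c : Fin n → ℝ) :
    ∫⁻ x, φ (α • x + c) = (ENNReal.ofReal (|α| ^ n))⁻¹ * ∫⁻ x, φ x := by
  have h1 : ∫⁻ x, φ (α • x + c) = ∫⁻ y, φ (y + c) ∂(Measure.map (α • ·) volume) := by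
    rw [lintegral_map (f := fun y => φ (y + c)) (hφ.comp (by fun_prop)) (by fun_prop)]
  rw [h1, Measure.map_addHaar_smul _ hα, lintegral_smul_measure, lintegral_add_right_eq_self]
  rw [Module.finrank_fin_fun, abs_inv, abs_pow, ENNReal.ofReal_inv_of_pos (by positivity)]
  rfl

lemma lintegral_lintegral_comp_pair {n : ℕ} (φ : (Fin n → ℝ) → (Fin n → ℝ) → ℝ≥0∞)
    (hφ : Measurable (Function.uncurry φ)) {p q p' q' : ℝ} (hΔ : p * q' - q * p' ≠ 0)
    (c c' : Fin n → ℝ) :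
    ∫⁻ b, ∫⁻ a, φ (p • a + (q • b + c)) (p' • a + (q' • b + c')) =
      (ENNReal.ofReal (|p * q' - q * p'| ^ n))⁻¹ * ∫⁻ x, ∫⁻ y, φ x y := by
  by_cases hp : p = 0
  · subst hp
    have hq : q ≠ 0 := by rintro rfl; simp at hΔ
    have hp' : p' ≠ 0 := by rintro rfl; simp at hΔ
    have h1 : ∀ b, ∫⁻ a, φ ((0 : ℝ) • a + (q • b + c)) (p' • a + (q' • b + c')) =
        (ENNReal.ofReal (|p'| ^ n))⁻¹ * ∫⁻ y, φ (q • b + c) y := by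
      intro b
      simp only [zero_smul, zero_add]
      exact lintegral_comp_smul_add (fun y => φ (q • b + c) y) (by fun_prop) hp' _
    simp only [h1]
    rw [lintegral_const_mul _ (by fun_prop),
      lintegral_comp_smul_add (fun x => ∫⁻ y, φ x y) (by fun_prop) hq, ← mul_assoc]
    congr 1
    rw [← ENNReal.mul_inv (by simp [hp']) (by simp), ← ENNReal.ofReal_mul (by positivity),
      ← mul_pow, ← abs_mul]
    congr 3
    rw [← abs_neg]
    congr 1
    ring
  · have hr : q' - p' * q / p ≠ 0 := by
      intro h
      apply hΔ
      field_simp at h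
      linear_combination h
    have h1 : ∀ b, ∫⁻ a, φ (p • a + (q • b + c)) (p' • a + (q' • b + c')) =
        (ENNReal.ofReal (|p| ^ n))⁻¹ *
          ∫⁻ x, φ x ((q' - p' * q / p) • b + ((p' / p) • x - (p' / p) • c + c')) := by
      intro b
      rw [← lintegral_comp_smul_add
        (fun x => φ x ((q' - p' * q / p) • b + ((p' / p) • x - (p' / p) • c + c')))
        (by fun_prop) hp (q • b + c)]
      refine lintegral_congr fun a => ?_
      congr 1
      ext i
      simp only [Pi.add_apply, Pi.smul_apply, smul_eq_mul, Pi.sub_apply]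
      field_simp
      ring
    simp only [h1]
    rw [lintegral_const_mul _ (by fun_prop), lintegral_lintegral_swap (by fun_prop)]
    have h2 : ∀ x, ∫⁻ b, φ x ((q' - p' * q / p) • b + ((p' / p) • x - (p' / p) • c + c')) =
        (ENNReal.ofReal (|q' - p' * q / p| ^ n))⁻¹ * ∫⁻ y, φ x y := fun x =>
      lintegral_comp_smul_add (fun y => φ x y) (by fun_prop) hr _
    simp only [h2]
    rw [lintegral_const_mul _ (by fun_prop), ← mul_assoc]
    congr 1
    rw [← ENNReal.mul_inv (by simp [hp]) (by simp), ← ENNReal.ofReal_mul (by positivity),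
      ← mul_pow, ← abs_mul]
    congr 4
    field_simp

lemma lintegral_update_comb {n : ℕ} (F : (Fin n → Fin n → ℝ) → ℝ≥0∞) (hF : Measurable F)
    (m : Fin n → ℝ) (j : Fin n) (hj : m j ≠ 0) :
    ∫⁻ A, F (Function.update A j (comb A m)) =
      (ENNReal.ofReal (|m j| ^ n))⁻¹ * ∫⁻ A, F A := by
  have hG : Measurable fun A : Fin n → Fin n → ℝ => F (Function.update A j (comb A m)) :=
    hF.comp (measurable_update'.comp (measurable_id.prodMk (measurable_comb m)))
  have e : ∀ G : (Fin n → Fin n → ℝ) → ℝ≥0∞, Measurable G → ∫⁻ A, G A =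
      (∫⋯∫⁻_(Finset.univ.erase j), (fun x => ∫⁻ a, G (Function.update x j a))
        ∂(fun _ => volume)) 0 := by
    intro G hG
    rw [← lmarginal_erase' _ hG (Finset.mem_univ j), lmarginal_univ]
    rfl
  rw [e _ hG, e _ hF]
  have h1 : ∀ x : Fin n → Fin n → ℝ, ∫⁻ a, F (Function.update (Function.update x j a) j
      (comb (Function.update x j a) m)) =
      (ENNReal.ofReal (|m j| ^ n))⁻¹ * ∫⁻ a, F (Function.update x j a) := by
    intro x
    rw [← lintegral_comp_smul_add (fun a => F (Function.update x j a))
      (hF.comp (measurable_update x)) hj (comb (Function.update x j 0) m)]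
    refine lintegral_congr fun a => ?_
    rw [Function.update_idem, comb_update]
  simp only [h1]
  unfold lmarginal
  rw [lintegral_const_mul']
  simp [hj]

/-- Volume of the set of matrices near the identity sending `m` to `E`: upper bound. -/
lemma volume_comb_mem_le {n : ℕ} (m : Fin n → ℝ) (j : Fin n) (hj : m j ≠ 0)
    (E : Set (Fin n → ℝ)) (hE : MeasurableSet E) :
    volume (matBox n ∩ {A | comb A m ∈ E}) ≤ (ENNReal.ofReal (|m j| ^ n))⁻¹ * volume E := by
  set F : Set (Fin n → Fin n → ℝ) := Set.univ.pi (Function.update (colBox n) j E) with hF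
  have hFm : MeasurableSet F := by
    refine MeasurableSet.univ_pi fun k => ?_
    by_cases hk : k = j
    · subst hk; simpa using hE
    · rw [Function.update_of_ne hk]; exact Metric.isClosed_closedBall.measurableSet
  have hm : Measurable fun A : Fin n → Fin n → ℝ => Function.update A j (comb A m) :=
    measurable_update'.comp (measurable_id.prodMk (measurable_comb m))
  have hvol : volume F ≤ volume E := by
    rw [hF, volume_pi_pi, ← Finset.mul_prod_erase _ _ (Finset.mem_univ j), Function.update_self]
    refine mul_le_of_le_one_right' (Finset.prod_le_one' fun k hk => ?_)
    rw [Function.update_of_ne (Finset.ne_of_mem_erase hk)]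
    exact volume_colBox_le n k
  calc volume (matBox n ∩ {A | comb A m ∈ E})
      ≤ volume ((fun A => Function.update A j (comb A m)) ⁻¹' F) := by
        refine measure_mono fun A hA => ?_
        rw [Set.mem_preimage, hF, Set.mem_univ_pi]
        intro k
        by_cases hk : k = j
        · subst hk; simpa using hA.2
        · rw [Function.update_of_ne hk, Function.update_of_ne hk]
          exact hA.1 k (Set.mem_univ k)
    _ = ∫⁻ A, F.indicator 1 (Function.update A j (comb A m)) := by
        rw [← lintegral_indicator_one (hm hFm)]; rfl
    _ = (ENNReal.ofReal (|m j| ^ n))⁻¹ * volume F := by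
        rw [lintegral_update_comb _ (measurable_one.indicator hFm) m j hj,
          lintegral_indicator_one hFm]
    _ ≤ _ := by gcongr

lemma norm_sub_single_le {n : ℕ} {A : Fin n → Fin n → ℝ} (hA : A ∈ matBox n) (j : Fin n) :
    ‖A j - Pi.single j 1‖ ≤ 1 / (2 * n) := by
  have := hA j (Set.mem_univ j)
  rwa [colBox, mem_closedBall_iff_norm] at this

lemma comb_sub_self {n : ℕ} (A : Fin n → Fin n → ℝ) (v : Fin n → ℝ) :
    comb A v - v = ∑ j, v j • (A j - Pi.single j 1) := by
  simp only [comb, smul_sub, Finset.sum_sub_distrib]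
  congr 1
  ext i
  simp [Finset.sum_apply, Pi.single_apply]

lemma norm_comb_sub_le {n : ℕ} {A : Fin n → Fin n → ℝ} (hA : A ∈ matBox n) (v : Fin n → ℝ) :
    ‖comb A v - v‖ ≤ ‖v‖ / 2 := by
  rw [comb_sub_self]
  rcases Nat.eq_zero_or_pos n with rfl | hn
  · rw [Finset.univ_eq_empty, Finset.sum_empty, norm_zero]
    positivity
  have hn' : (0 : ℝ) < n := by exact_mod_cast hn
  calc ‖∑ j, v j • (A j - Pi.single j 1)‖ ≤ ∑ j : Fin n, ‖v‖ * (1 / (2 * n)) := by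
        refine norm_sum_le_of_le _ fun j _ => ?_
        rw [norm_smul]
        exact mul_le_mul (norm_le_pi_norm v j) (norm_sub_single_le hA j) (norm_nonneg _)
          (norm_nonneg _)
    _ = ‖v‖ / 2 := by
        rw [Finset.sum_const, Finset.card_univ, Fintype.card_fin, nsmul_eq_mul]
        field_simp

lemma half_norm_le_norm_comb {n : ℕ} {A : Fin n → Fin n → ℝ} (hA : A ∈ matBox n)
    (v : Fin n → ℝ) : ‖v‖ / 2 ≤ ‖comb A v‖ := by
  have h1 := norm_comb_sub_le hA v
  have h2 := norm_sub_norm_le v (comb A v)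
  rw [norm_sub_rev] at h2
  linarith

lemma norm_comb_le {n : ℕ} {A : Fin n → Fin n → ℝ} (hA : A ∈ matBox n)
    (v : Fin n → ℝ) : ‖comb A v‖ ≤ 3 / 2 * ‖v‖ := by
  have h1 := norm_comb_sub_le hA v
  have h2 := norm_sub_norm_le (comb A v) v
  linarith

lemma comb_sub_smul {n : ℕ} (A : Fin n → Fin n → ℝ) (v w : Fin n → ℝ) (c : ℝ) :
    comb A (w - c • v) = comb A w - c • comb A v := by
  simp [comb, sub_smul, Finset.sum_sub_distrib, Finset.smul_sum, mul_smul]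

/-- Volume of the set of matrices near the identity sending `m` to `E`: lower bound. -/
lemma le_volume_comb_mem {n : ℕ} (hn : 1 ≤ n) (m : Fin n → ℝ) (hm : m ≠ 0)
    (E : Set (Fin n → ℝ)) (hE : MeasurableSet E)
    (hEm : E ⊆ Metric.closedBall m (‖m‖ / (4 * n))) :
    ENNReal.ofReal (((1 / (2 * (n : ℝ) ^ 2)) ^ n) ^ (n - 1)) *
      ((ENNReal.ofReal (‖m‖ ^ n))⁻¹ * volume E) ≤ volume (matBox n ∩ {A | comb A m ∈ E}) := by
  have hn' : (1 : ℝ) ≤ n := by exact_mod_cast hn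
  have : Nonempty (Fin n) := ⟨⟨0, hn⟩⟩
  obtain ⟨j, hj⟩ : ∃ j, |m j| = ‖m‖ := by
    obtain ⟨j, hj⟩ := Finite.exists_max fun j => |m j|
    refine ⟨j, le_antisymm (norm_le_pi_norm m j) ?_⟩
    rw [pi_norm_le_iff_of_nonneg (abs_nonneg _)]
    exact hj
  have hmpos : 0 < ‖m‖ := norm_pos_iff.mpr hm
  have hj0 : m j ≠ 0 := by rw [← abs_pos, hj]; exact hmpos
  set B : Fin n → Set (Fin n → ℝ) :=
    fun k => Metric.closedBall (Pi.single k 1) (1 / (2 * n) / (2 * n)) with hB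
  set F : Set (Fin n → Fin n → ℝ) := Set.univ.pi (Function.update B j E) with hF
  have hFm : MeasurableSet F := by
    refine MeasurableSet.univ_pi fun k => ?_
    by_cases hk : k = j
    · subst hk; simpa using hE
    · rw [Function.update_of_ne hk]; exact Metric.isClosed_closedBall.measurableSet
  have hmeas : Measurable fun A : Fin n → Fin n → ℝ => Function.update A j (comb A m) :=
    measurable_update'.comp (measurable_id.prodMk (measurable_comb m))
  have hvol : volume F =
      ENNReal.ofReal (((1 / (2 * (n : ℝ) ^ 2)) ^ n) ^ (n - 1)) * volume E := by
    rw [hF, volume_pi_pi, ← Finset.mul_prod_erase _ _ (Finset.mem_univ j), Function.update_self,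
      mul_comm]
    congr 1
    rw [Finset.prod_congr rfl (g := fun _ => ENNReal.ofReal ((1 / (2 * (n : ℝ) ^ 2)) ^ n))]
    · rw [Finset.prod_const, Finset.card_erase_of_mem (Finset.mem_univ j), Finset.card_univ,
        Fintype.card_fin, ← ENNReal.ofReal_pow (by positivity)]
    · intro k hk
      rw [Function.update_of_ne (Finset.ne_of_mem_erase hk), hB,
        Real.volume_pi_closedBall _ (by positivity), Fintype.card_fin]
      congr 2
      field_simp
      try ring
  calc _ = (ENNReal.ofReal (|m j| ^ n))⁻¹ * volume F := by
        rw [hvol, hj]; ring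
    _ = ∫⁻ A, F.indicator 1 (Function.update A j (comb A m)) := by
        rw [lintegral_update_comb _ (measurable_one.indicator hFm) m j hj0,
          lintegral_indicator_one hFm]
    _ = volume ((fun A => Function.update A j (comb A m)) ⁻¹' F) := by
        rw [← lintegral_indicator_one (hmeas hFm)]; rfl
    _ ≤ _ := by
        refine measure_mono fun A hA => ?_
        rw [Set.mem_preimage, hF, Set.mem_univ_pi] at hA
        have hAE : comb A m ∈ E := by simpa using hA j
        have hAk : ∀ k ≠ j, ‖A k - Pi.single k 1‖ ≤ 1 / (2 * n) / (2 * n) := by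
          intro k hk
          have := hA k
          rwa [Function.update_of_ne hk, Function.update_of_ne hk, hB,
            mem_closedBall_iff_norm] at this
        refine ⟨fun k _ => ?_, hAE⟩
        rw [colBox, mem_closedBall_iff_norm]
        by_cases hk : k = j
        · subst hk
          have h1 : m k • (A k - Pi.single k 1) = (comb A m - m) -
              ∑ i ∈ Finset.univ.erase k, m i • (A i - Pi.single i 1) := by
            rw [comb_sub_self, ← Finset.add_sum_erase _ _ (Finset.mem_univ k)]
            simp
          have h2 : ‖comb A m - m‖ ≤ ‖m‖ / (4 * n) :=
            mem_closedBall_iff_norm.mp (hEm hAE)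
          have h3 : ‖∑ i ∈ Finset.univ.erase k, m i • (A i - Pi.single i 1)‖ ≤
              ‖m‖ / (4 * n) := by
            calc _ ≤ ∑ i ∈ Finset.univ.erase k, ‖m‖ * (1 / (2 * n) / (2 * n)) := by
                  refine norm_sum_le_of_le _ fun i hi => ?_
                  rw [norm_smul]
                  exact mul_le_mul (norm_le_pi_norm m i) (hAk i (Finset.ne_of_mem_erase hi))
                    (norm_nonneg _) (norm_nonneg _)
              _ ≤ ∑ i : Fin n, ‖m‖ * (1 / (2 * n) / (2 * n)) :=
                  Finset.sum_le_sum_of_subset_of_nonneg (Finset.erase_subset _ _)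
                    fun _ _ _ => by positivity
              _ = ‖m‖ / (4 * n) := by
                  rw [Finset.sum_const, Finset.card_univ, Fintype.card_fin, nsmul_eq_mul]
                  field_simp
                  try ring
          have h4 : ‖m‖ * ‖A k - Pi.single k 1‖ ≤ ‖m‖ * (1 / (2 * n)) := by
            rw [← hj, ← Real.norm_eq_abs, ← norm_smul, h1, Real.norm_eq_abs, hj]
            calc _ ≤ ‖m‖ / (4 * n) + ‖m‖ / (4 * n) := (norm_sub_le _ _).trans (add_le_add h2 h3)
              _ = ‖m‖ * (1 / (2 * n)) := by field_simp; norm_num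
          exact le_of_mul_le_mul_left h4 hmpos
        · refine (hAk k hk).trans (div_le_self (by positivity) (by linarith))

/-- Second moment kernel bound. -/
lemma setLIntegral_comb_comb_le {n : ℕ} (φ : (Fin n → ℝ) → (Fin n → ℝ) → ℝ≥0∞)
    (hφ : Measurable (Function.uncurry φ)) (m m' : Fin n → ℝ) (i j : Fin n)
    (hΔ : m i * m' j - m j * m' i ≠ 0) :
    ∫⁻ A in matBox n, φ (comb A m) (comb A m') ≤
      (ENNReal.ofReal (|m i * m' j - m j * m' i| ^ n))⁻¹ * ∫⁻ x, ∫⁻ y, φ x y := by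
  have hij : i ≠ j := by rintro rfl; apply hΔ; ring
  set K := (ENNReal.ofReal (|m i * m' j - m j * m' i| ^ n))⁻¹ * ∫⁻ x, ∫⁻ y, φ x y with hK
  set ν : Fin n → Measure (Fin n → ℝ) := fun k => volume.restrict (colBox n k) with hν
  have hfin : ∀ k, ν k Set.univ ≤ 1 := fun k => by
    simpa [hν] using volume_colBox_le n k
  have : ∀ k, IsFiniteMeasure (ν k) := fun k => ⟨(hfin k).trans_lt one_lt_top⟩
  have hr : (volume : Measure (Fin n → Fin n → ℝ)).restrict (matBox n) = Measure.pi ν := by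
    rw [volume_pi, matBox, Measure.restrict_pi_pi]
  set G : (Fin n → Fin n → ℝ) → ℝ≥0∞ := fun A => φ (comb A m) (comb A m') with hG
  have hGm : Measurable G :=
    hφ.comp ((measurable_comb m).prodMk (measurable_comb m'))
  have h1 : ∫⁻ A, G A ∂(Measure.pi ν) = (∫⋯∫⁻_((Finset.univ.erase j).erase i),
      (fun x => ∫⁻ b, ∫⁻ a, G (Function.update (Function.update x i b) j a) ∂(ν j) ∂(ν i)) ∂ν)
        0 := by
    rw [lintegral_eq_lmarginal_univ (0 : Fin n → Fin n → ℝ), lmarginal_erase' G hGm (Finset.mem_univ j),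
      lmarginal_erase' _ _
        (Finset.mem_erase.mpr ⟨hij, Finset.mem_univ i⟩)]
    exact (hGm.comp measurable_update').lintegral_prod_right'
  have h2 : ∀ x : Fin n → Fin n → ℝ,
      ∫⁻ b, ∫⁻ a, G (Function.update (Function.update x i b) j a) ∂(ν j) ∂(ν i) ≤ K := by
    intro x
    calc _ ≤ ∫⁻ b, ∫⁻ a, G (Function.update (Function.update x i b) j a) := by
          refine lintegral_mono' Measure.restrict_le_self fun b => ?_
          exact lintegral_mono' Measure.restrict_le_self le_rfl
      _ = ∫⁻ b, ∫⁻ a, φ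
            (m j • a + (m i • b + comb (Function.update (Function.update x j 0) i 0) m))
            (m' j • a + (m' i • b + comb (Function.update (Function.update x j 0) i 0) m')) := by
          refine lintegral_congr fun b => lintegral_congr fun a => ?_
          simp only [hG]
          rw [comb_update _ m, comb_update _ m', Function.update_comm hij, comb_update _ m,
            comb_update _ m']
      _ = K := by
          rw [lintegral_lintegral_comp_pair φ hφ, hK, ← abs_neg]
          · congr 5; ring
          · intro h; apply hΔ; linear_combination -h
  rw [hr, h1]
  unfold lmarginal
  calc _ ≤ ∫⁻ _, K ∂(Measure.pi fun k : ((Finset.univ.erase j).erase i : Finset (Fin n)) => ν k) :=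
        lintegral_mono fun y => h2 _
    _ ≤ K := by
        rw [lintegral_const, Measure.pi_univ]
        exact mul_le_of_le_one_right' (Finset.prod_le_one' fun k _ => hfin _)

/-- An integer vector viewed as a real vector. -/
def realVec {n : ℕ} (m : Fin n → ℤ) : Fin n → ℝ := fun i => (m i : ℝ)

/-- The integer vectors of sup norm at most `R`. -/
def intBox (n : ℕ) (R : ℝ) : Finset (Fin n → ℤ) :=
  Fintype.piFinset fun _ => Finset.Icc (-⌊R⌋) ⌊R⌋

lemma abs_intCast_le_iff {k : ℤ} {R : ℝ} : |(k : ℝ)| ≤ R ↔ k ∈ Finset.Icc (-⌊R⌋) ⌊R⌋ := by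
  rw [Finset.mem_Icc, ← abs_le, Int.le_floor]
  push_cast
  rfl

lemma mem_intBox {n : ℕ} {R : ℝ} (hR : 0 ≤ R) {m : Fin n → ℤ} :
    m ∈ intBox n R ↔ ‖realVec m‖ ≤ R := by
  rw [intBox, Fintype.mem_piFinset, pi_norm_le_iff_of_nonneg hR]
  exact forall_congr' fun i => abs_intCast_le_iff.symm

lemma realVec_ne_zero {n : ℕ} {m : Fin n → ℤ} (hm : m ≠ 0) : realVec m ≠ 0 := by
  contrapose! hm
  ext i
  have := congrFun hm i
  simpa [realVec] using this

lemma one_le_norm_realVec {n : ℕ} {m : Fin n → ℤ} (hm : m ≠ 0) : 1 ≤ ‖realVec m‖ := by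
  obtain ⟨i, hi⟩ := Function.ne_iff.mp hm
  refine le_trans ?_ (norm_le_pi_norm (realVec m) i)
  rw [realVec, Real.norm_eq_abs]
  exact_mod_cast Int.one_le_abs hi

lemma le_card_near {n : ℕ} (x : Fin n → ℝ) {ρ R : ℝ} (hρ : 1 ≤ ρ) (hR : ‖x‖ + ρ ≤ R) :
    ρ ^ n ≤ (((intBox n R).filter fun m => ‖x - realVec m‖ ≤ ρ).card : ℝ) := by
  have hsub : (Fintype.piFinset fun i => Finset.Icc ⌈x i - ρ⌉ ⌊x i + ρ⌋) ⊆
      (intBox n R).filter fun m => ‖x - realVec m‖ ≤ ρ := by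
    intro m hm
    rw [Fintype.mem_piFinset] at hm
    have h1 : ‖x - realVec m‖ ≤ ρ := by
      rw [pi_norm_le_iff_of_nonneg (by linarith)]
      intro i
      have := Finset.mem_Icc.mp (hm i)
      rw [Int.ceil_le, Int.le_floor] at this
      rw [Pi.sub_apply, realVec, Real.norm_eq_abs, abs_le]
      constructor <;> linarith
    refine Finset.mem_filter.mpr ⟨?_, h1⟩
    rw [mem_intBox (by linarith [norm_nonneg x])]
    have h2 := norm_sub_norm_le (realVec m) x
    rw [norm_sub_rev] at h2
    linarith
  have hcard := Finset.card_le_card hsub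
  calc ρ ^ n = ∏ _i : Fin n, ρ := by simp
    _ ≤ ∏ i : Fin n, ((Finset.Icc ⌈x i - ρ⌉ ⌊x i + ρ⌋).card : ℝ) := by
        refine Finset.prod_le_prod (fun _ _ => by linarith) fun i _ => ?_
        rw [Int.card_Icc]
        have h1 := Int.ceil_lt_add_one (x i - ρ)
        have h2 := Int.lt_floor_add_one (x i + ρ)
        have h3 : ((⌊x i + ρ⌋ + 1 - ⌈x i - ρ⌉ : ℤ) : ℝ) ≤
            ((⌊x i + ρ⌋ + 1 - ⌈x i - ρ⌉).toNat : ℝ) := by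
          exact_mod_cast Int.self_le_toNat _
        push_cast at h3
        linarith
    _ ≤ _ := by
        rw [Fintype.card_piFinset] at hcard
        exact_mod_cast hcard

lemma sum_Icc_neg_eq (f : ℕ → ℝ) (K : ℕ) :
    ∑ k ∈ Finset.Icc (-(K : ℤ)) K, f k.natAbs = f 0 + 2 * ∑ i ∈ Finset.range K, f (i + 1) := by
  induction K with
  | zero => simp
  | succ K ih =>
    have h : Finset.Icc (-((K + 1 : ℕ) : ℤ)) ((K + 1 : ℕ) : ℤ) =
        insert (-((K + 1 : ℕ) : ℤ)) (insert ((K + 1 : ℕ) : ℤ) (Finset.Icc (-(K : ℤ)) K)) := by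
      ext k
      simp only [Finset.mem_insert, Finset.mem_Icc]
      omega
    rw [h, Finset.sum_insert, Finset.sum_insert, ih, Finset.sum_range_succ, Int.natAbs_neg,
      Int.natAbs_natCast]
    · ring
    · simp
    · simp only [Finset.mem_insert, Finset.mem_Icc]
      omega

lemma sum_Icc_inv_max_le {R : ℝ} (hR : 1 ≤ R) :
    ∑ k ∈ Finset.Icc (-⌊R⌋) ⌊R⌋, (max 1 |(k : ℝ)|)⁻¹ ≤ 3 + 2 * Real.log R := by
  have h0 : (⌊R⌋₊ : ℤ) = ⌊R⌋ := Int.natCast_floor_eq_floor (by linarith)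
  have h1 := sum_Icc_neg_eq (fun i => (max 1 (i : ℝ))⁻¹) ⌊R⌋₊
  have h2 := harmonic_floor_le_one_add_log R hR
  rw [← h0]
  calc _ = ∑ k ∈ Finset.Icc (-(⌊R⌋₊ : ℤ)) ⌊R⌋₊, (max 1 (k.natAbs : ℝ))⁻¹ := by
        refine Finset.sum_congr rfl fun k _ => ?_
        rw [Nat.cast_natAbs, Int.cast_abs]
    _ = 1 + 2 * (harmonic ⌊R⌋₊ : ℝ) := by
        rw [h1, harmonic]
        push_cast
        congr 1
        · simp
        · congr 1
          refine Finset.sum_congr rfl fun i _ => ?_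
          rw [max_eq_right]
          have : (0 : ℝ) ≤ i := Nat.cast_nonneg i
          linarith
    _ ≤ _ := by linarith

lemma sum_inv_norm_pow_le (n : ℕ) {R : ℝ} (hR : 1 ≤ R) :
    ∑ m ∈ (intBox n R).erase 0, (‖realVec m‖ ^ n)⁻¹ ≤ (3 + 2 * Real.log R) ^ n := by
  calc _ ≤ ∑ m ∈ (intBox n R).erase 0, ∏ i, (max 1 |(m i : ℝ)|)⁻¹ := by
        refine Finset.sum_le_sum fun m hm => ?_
        rw [Finset.prod_inv_distrib]
        refine inv_anti₀ (Finset.prod_pos fun i _ => by positivity) ?_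
        calc ∏ i, max 1 |(m i : ℝ)| ≤ ∏ _i : Fin n, ‖realVec m‖ :=
              Finset.prod_le_prod (fun _ _ => by positivity) fun i _ =>
                max_le (one_le_norm_realVec (Finset.ne_of_mem_erase hm))
                  (norm_le_pi_norm (realVec m) i)
          _ = ‖realVec m‖ ^ n := by simp
    _ ≤ ∑ m ∈ intBox n R, ∏ i, (max 1 |(m i : ℝ)|)⁻¹ :=
        Finset.sum_le_sum_of_subset_of_nonneg (Finset.erase_subset _ _)
          fun _ _ _ => Finset.prod_nonneg fun _ _ => by positivity
    _ = (∑ k ∈ Finset.Icc (-⌊R⌋) ⌊R⌋, (max 1 |(k : ℝ)|)⁻¹) ^ n := by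
        rw [intBox, Finset.sum_prod_piFinset _ fun _ k => (max 1 |((k : ℤ) : ℝ)|)⁻¹]
        simp
    _ ≤ _ := pow_le_pow_left₀ (Finset.sum_nonneg fun _ _ => by positivity)
        (sum_Icc_inv_max_le hR) n

/-- The sup norm of the vector of `2 × 2` minors of the pair `(v, w)`. -/
def minorNorm {n : ℕ} (v w : Fin n → ℝ) : ℝ :=
  ‖fun p : Fin n × Fin n => v p.1 * w p.2 - v p.2 * w p.1‖

lemma exists_common_of_minors {n : ℕ} {m m' : Fin n → ℤ} (hm : m ≠ 0)
    (h : ∀ i j, m i * m' j = m j * m' i) :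
    ∃ (k : Fin n → ℤ) (g g' : ℤ), m = g • k ∧ m' = g' • k := by
  obtain ⟨g, hg⟩ := (inferInstance : (Submodule.span ℤ (Set.range m)).IsPrincipal)
  have hmem : ∀ i, ∃ c, c * g = m i := fun i => by
    have : m i ∈ Submodule.span ℤ (Set.range m) := Submodule.subset_span ⟨i, rfl⟩
    rw [hg, Submodule.mem_span_singleton] at this
    simpa using this
  choose k hk using hmem
  have hg0 : g ≠ 0 := by
    rintro rfl
    exact hm (funext fun i => by simpa using (hk i).symm)
  have hgm : g ∈ Submodule.span ℤ (Set.range m) := by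
    rw [hg]; exact Submodule.mem_span_singleton_self g
  obtain ⟨b, hb⟩ := (Submodule.mem_span_range_iff_exists_fun ℤ).mp hgm
  refine ⟨k, g, ∑ j, b j * m' j, ?_, ?_⟩
  · ext i; simp [← hk i, mul_comm]
  · ext i
    have : g * m' i = g * ((∑ j, b j * m' j) * k i) := by
      calc g * m' i = ∑ j, b j * (m j * m' i) := by
            conv_lhs => rw [← hb]
            rw [Finset.sum_mul]
            exact Finset.sum_congr rfl fun j _ => by simp [mul_assoc]
        _ = ∑ j, b j * (m i * m' j) :=
            Finset.sum_congr rfl fun j _ => by rw [h i j]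
        _ = _ := by
            rw [← hk i, Finset.sum_mul, Finset.mul_sum]
            exact Finset.sum_congr rfl fun j _ => by ring
    simpa using mul_left_cancel₀ hg0 this

lemma minors_eq_of_minorNorm {n : ℕ} {m m' : Fin n → ℤ}
    (h : minorNorm (realVec m) (realVec m') = 0) (i j : Fin n) : m i * m' j = m j * m' i := by
  have := congrFun (norm_eq_zero.mp h) (i, j)
  simp only [realVec, Pi.zero_apply] at this
  have h2 := sub_eq_zero.mp this
  exact_mod_cast h2

lemma norm_realVec_smul {n : ℕ} (g : ℤ) (k : Fin n → ℤ) :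
    ‖realVec (g • k)‖ = |(g : ℝ)| * ‖realVec k‖ := by
  rw [← Real.norm_eq_abs, ← norm_smul]
  congr 1
  ext i
  simp [realVec]

lemma card_collinear_le {n : ℕ} (hn : 2 ≤ n) {R : ℝ} (hR : 1 ≤ R) :
    ((((intBox n R).erase 0 ×ˢ (intBox n R).erase 0).filter fun p =>
      minorNorm (realVec p.1) (realVec p.2) = 0).card : ℝ) ≤
      (3 * R) ^ n * (3 + 2 * Real.log R) ^ n := by
  have hR0 : 0 ≤ R := by linarith
  set J : (Fin n → ℤ) → Finset ℤ := fun k =>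
    Finset.Icc (-⌊R / ‖realVec k‖⌋) ⌊R / ‖realVec k‖⌋ with hJ
  have hsub : (((intBox n R).erase 0 ×ˢ (intBox n R).erase 0).filter fun p =>
      minorNorm (realVec p.1) (realVec p.2) = 0) ⊆
      ((intBox n R).erase 0).biUnion fun k =>
        (J k ×ˢ J k).image fun g => (g.1 • k, g.2 • k) := by
    rintro ⟨m, m'⟩ hp
    simp only [Finset.mem_filter, Finset.mem_product, Finset.mem_erase] at hp
    obtain ⟨⟨⟨hm0, hm⟩, hm0', hm'⟩, hD⟩ := hp
    obtain ⟨k, g, g', rfl, rfl⟩ := exists_common_of_minors hm0 (minors_eq_of_minorNorm hD)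
    have hk : k ≠ 0 := by rintro rfl; simp at hm0
    have hg : g ≠ 0 := by rintro rfl; simp at hm0
    rw [mem_intBox hR0, norm_realVec_smul] at hm hm'
    have hkpos : 0 < ‖realVec k‖ := by linarith [one_le_norm_realVec hk]
    have hg1 : (1 : ℝ) ≤ |(g : ℝ)| := by exact_mod_cast Int.one_le_abs hg
    simp only [Finset.mem_biUnion, Finset.mem_image, Finset.mem_product, Finset.mem_erase]
    refine ⟨k, ⟨hk, ?_⟩, (g, g'), ⟨?_, ?_⟩, rfl⟩
    · rw [mem_intBox hR0]
      nlinarith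
    · rw [hJ, ← abs_intCast_le_iff, le_div_iff₀ hkpos]; exact hm
    · rw [hJ, ← abs_intCast_le_iff, le_div_iff₀ hkpos]; exact hm'
  have h1 : ((((intBox n R).erase 0 ×ˢ (intBox n R).erase 0).filter fun p =>
      minorNorm (realVec p.1) (realVec p.2) = 0).card : ℝ) ≤
      ∑ k ∈ (intBox n R).erase 0, ((J k).card : ℝ) ^ 2 := by
    have : (((intBox n R).erase 0 ×ˢ (intBox n R).erase 0).filter fun p =>
      minorNorm (realVec p.1) (realVec p.2) = 0).card ≤
      ∑ k ∈ (intBox n R).erase 0, (J k).card ^ 2 := by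
      refine (Finset.card_le_card hsub).trans (Finset.card_biUnion_le.trans ?_)
      refine Finset.sum_le_sum fun k _ => Finset.card_image_le.trans ?_
      rw [Finset.card_product, sq]
    exact_mod_cast this
  refine h1.trans ?_
  calc _ ≤ ∑ k ∈ (intBox n R).erase 0, (3 * R) ^ n * (‖realVec k‖ ^ n)⁻¹ := by
        refine Finset.sum_le_sum fun k hk => ?_
        have hk1 := one_le_norm_realVec (Finset.ne_of_mem_erase hk)
        have hkR := (mem_intBox hR0).mp (Finset.mem_of_mem_erase hk)
        have hq : 1 ≤ R / ‖realVec k‖ := by rw [le_div_iff₀ (by linarith)]; linarith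
        have hc : ((J k).card : ℝ) ≤ 3 * R / ‖realVec k‖ := by
          have h0 : (0 : ℤ) ≤ ⌊R / ‖realVec k‖⌋ := Int.floor_nonneg.mpr (by linarith)
          have h2 : ((J k).card : ℤ) = 2 * ⌊R / ‖realVec k‖⌋ + 1 := by
            rw [hJ, Int.card_Icc, Int.toNat_of_nonneg (by linarith)]; ring
          have h3 : ((J k).card : ℝ) = 2 * (⌊R / ‖realVec k‖⌋ : ℝ) + 1 := by exact_mod_cast h2
          have h4 := Int.floor_le (R / ‖realVec k‖)
          rw [h3, mul_div_assoc]
          linarith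
        calc ((J k).card : ℝ) ^ 2 ≤ (3 * R / ‖realVec k‖) ^ 2 :=
              pow_le_pow_left₀ (Nat.cast_nonneg _) hc 2
          _ ≤ (3 * R / ‖realVec k‖) ^ n :=
              pow_le_pow_right₀ (by rw [mul_div_assoc]; linarith) hn
          _ = _ := by rw [div_pow]; rfl
    _ ≤ _ := by
        rw [← Finset.mul_sum]
        exact mul_le_mul_of_nonneg_left (sum_inv_norm_pow_le n hR) (by positivity)

/-- The distance from `y` to the multiple of `x` with the same `a`-th coordinate. -/
def gap {n : ℕ} (a : Fin n) (x y : Fin n → ℝ) : ℝ := ‖y - (y a / x a) • x‖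

/-- The matrices near the identity which send the integer vector `m` into `B`. -/
def hitSet {n : ℕ} (B : Set (Fin n → ℝ)) (m : Fin n → ℤ) : Set (Fin n → Fin n → ℝ) :=
  matBox n ∩ {A | comb A (realVec m) ∈ B}

lemma measurableSet_hitSet {n : ℕ} {B : Set (Fin n → ℝ)} (hB : MeasurableSet B)
    (m : Fin n → ℤ) : MeasurableSet (hitSet B m) :=
  (measurableSet_matBox n).inter (measurable_comb _ hB)

lemma abs_mem_matBox_le {n : ℕ} {A : Fin n → Fin n → ℝ} (hA : A ∈ matBox n) (i b : Fin n) :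
    |A i b| ≤ 2 := by
  have hn : (1 : ℝ) ≤ n := by exact_mod_cast Fin.pos i
  have h1 := (norm_le_pi_norm _ b).trans (norm_sub_single_le hA i)
  have h2 : (1 : ℝ) / (2 * n) ≤ 1 := by rw [div_le_one (by linarith)]; linarith
  have h3 : |(Pi.single i 1 : Fin n → ℝ) b| ≤ 1 := by
    rw [Pi.single_apply]; split <;> simp
  rw [Pi.sub_apply, Real.norm_eq_abs] at h1
  have h4 := abs_sub_abs_le_abs_sub (A i b) ((Pi.single i 1 : Fin n → ℝ) b)
  linarith

lemma abs_minor_comb_le {n : ℕ} {A : Fin n → Fin n → ℝ} (hA : A ∈ matBox n)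
    (v w : Fin n → ℝ) (a b : Fin n) :
    |comb A v a * comb A w b - comb A v b * comb A w a| ≤ 4 * n ^ 2 * minorNorm v w := by
  have h : comb A v a * comb A w b - comb A v b * comb A w a =
      ∑ i, ∑ j, A i a * A j b * (v i * w j - v j * w i) := by
    simp only [comb, Finset.sum_apply, Pi.smul_apply, smul_eq_mul, Finset.sum_mul_sum]
    rw [Finset.sum_comm (f := fun i j => v i * A i b * (w j * A j a)), ← Finset.sum_sub_distrib]
    refine Finset.sum_congr rfl fun i _ => ?_
    rw [← Finset.sum_sub_distrib]
    exact Finset.sum_congr rfl fun j _ => by ring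
  rw [h]
  calc |∑ i, ∑ j, A i a * A j b * (v i * w j - v j * w i)|
      ≤ ∑ _i : Fin n, ∑ _j : Fin n, 2 * 2 * minorNorm v w := by
        refine (Finset.abs_sum_le_sum_abs _ _).trans (Finset.sum_le_sum fun i _ => ?_)
        refine (Finset.abs_sum_le_sum_abs _ _).trans (Finset.sum_le_sum fun j _ => ?_)
        rw [abs_mul, abs_mul]
        refine mul_le_mul (mul_le_mul (abs_mem_matBox_le hA i a) (abs_mem_matBox_le hA j b)
          (abs_nonneg _) (by norm_num)) ?_ (abs_nonneg _) (by norm_num)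
        exact norm_le_pi_norm (fun p : Fin n × Fin n => v p.1 * w p.2 - v p.2 * w p.1) (i, j)
    _ = _ := by
        simp only [Finset.sum_const, Finset.card_univ, Fintype.card_fin, nsmul_eq_mul]
        ring

lemma mul_gap_le {n : ℕ} {A : Fin n → Fin n → ℝ} (hA : A ∈ matBox n)
    (v w : Fin n → ℝ) (a : Fin n) (ha : comb A v a ≠ 0) :
    |comb A v a| * gap a (comb A v) (comb A w) ≤ 4 * n ^ 2 * minorNorm v w := by
  rw [gap, ← Real.norm_eq_abs, ← norm_smul]
  refine (pi_norm_le_iff_of_nonneg (mul_nonneg (by positivity) (norm_nonneg _))).mpr fun b => ?_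
  have h : (comb A v a • (comb A w - (comb A w a / comb A v a) • comb A v)) b =
      comb A v a * comb A w b - comb A v b * comb A w a := by
    simp only [Pi.smul_apply, Pi.sub_apply, smul_eq_mul]
    field_simp
  rw [h]
  exact abs_minor_comb_le hA v w a b

/-- Pairs of points which may come from a given pair of integer vectors. -/
def pairSet {n : ℕ} (B : Set (Fin n → ℝ)) (a : Fin n) (κ S : ℝ)
    (p : (Fin n → ℤ) × (Fin n → ℤ)) : Set ((Fin n → ℝ) × (Fin n → ℝ)) :=
  {q | (q.1 ∈ B ∧ q.2 ∈ B) ∧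
    (∀ i, InStrip (2 * S) (2 * gap a q.1 q.2) (q.2 a / q.1 a) (p.1 i, p.2 i)) ∧
    κ * S * gap a q.1 q.2 ≤ 4 * n ^ 2 * minorNorm (realVec p.1) (realVec p.2)}

lemma measurable_gap {n : ℕ} (a : Fin n) :
    Measurable fun q : (Fin n → ℝ) × (Fin n → ℝ) => gap a q.1 q.2 := by
  unfold gap
  refine Measurable.norm ?_
  fun_prop

lemma measurableSet_pairSet {n : ℕ} {B : Set (Fin n → ℝ)} (hB : MeasurableSet B) (a : Fin n)
    (κ S : ℝ) (p : (Fin n → ℤ) × (Fin n → ℤ)) : MeasurableSet (pairSet B a κ S p) := by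
  have hg := measurable_gap a
  refine MeasurableSet.inter ?_ (MeasurableSet.inter ?_ ?_)
  · exact (measurable_fst hB).inter (measurable_snd hB)
  · refine measurableSet_setOfPred.mpr (Measurable.forall fun i => measurableSet_setOfPred.mp ?_)
    refine MeasurableSet.inter ?_ ?_
    · exact MeasurableSet.const _
    · refine measurableSet_le ?_ (hg.const_mul 2)
      refine Measurable.abs ?_
      fun_prop
  · exact measurableSet_le (hg.const_mul _) measurable_const

lemma mem_pairSet_of_hitSet {n : ℕ} {B : Set (Fin n → ℝ)} {a : Fin n} {κ S : ℝ} (hκ : 0 < κ)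
    (hS : 0 < S) (hBS : ∀ x ∈ B, ‖x‖ ≤ S ∧ κ * S ≤ |x a|) {p : (Fin n → ℤ) × (Fin n → ℤ)}
    {A : Fin n → Fin n → ℝ} (h1 : A ∈ hitSet B p.1) (h2 : A ∈ hitSet B p.2) :
    (comb A (realVec p.1), comb A (realVec p.2)) ∈ pairSet B a κ S p := by
  have hA := h1.1
  have hx := hBS _ h1.2
  have hpos : 0 < |comb A (realVec p.1) a| := lt_of_lt_of_le (by positivity) hx.2
  refine ⟨⟨h1.2, h2.2⟩, fun i => ⟨?_, ?_⟩, ?_⟩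
  · have h3 := half_norm_le_norm_comb hA (realVec p.1)
    have h4 := norm_le_pi_norm (realVec p.1) i
    rw [Real.norm_eq_abs, realVec] at h4
    simp only
    linarith [hx.1]
  · set lam := comb A (realVec p.2) a / comb A (realVec p.1) a
    have h3 := half_norm_le_norm_comb hA (realVec p.2 - lam • realVec p.1)
    rw [comb_sub_smul] at h3
    have h4 := norm_le_pi_norm (realVec p.2 - lam • realVec p.1) i
    simp only [Real.norm_eq_abs, realVec, Pi.sub_apply, Pi.smul_apply, smul_eq_mul] at h4
    simp only [gap]
    linarith!
  · refine le_trans ?_ (mul_gap_le hA (realVec p.1) (realVec p.2) a (abs_pos.mp hpos))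
    exact mul_le_mul_of_nonneg_right hx.2 (norm_nonneg _)

lemma sum_inv_minorNorm_le {n : ℕ} {B : Set (Fin n → ℝ)} {a : Fin n} {κ S : ℝ} (hκ : 0 < κ)
    (hS : 0 < S) (x y : Fin n → ℝ) (T : Finset ((Fin n → ℤ) × (Fin n → ℤ)))
    (hT : ∀ p ∈ T, minorNorm (realVec p.1) (realVec p.2) ≠ 0 ∧ (x, y) ∈ pairSet B a κ S p) :
    ∑ p ∈ T, (minorNorm (realVec p.1) (realVec p.2) ^ n)⁻¹ ≤ (288 * n ^ 2 / κ) ^ n := by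
  rcases T.eq_empty_or_nonempty with rfl | ⟨p₀, hp₀⟩
  · simp only [Finset.sum_empty]; positivity
  have hn : (0 : ℝ) < n := by exact_mod_cast Fin.pos a
  set e := gap a x y with he
  have he0 : 0 ≤ e := norm_nonneg _
  obtain ⟨i, j, hij⟩ : ∃ i j, p₀.1 i * p₀.2 j - p₀.1 j * p₀.2 i ≠ 0 := by
    by_contra! h
    apply (hT p₀ hp₀).1
    rw [minorNorm, norm_eq_zero]
    ext q
    have := h q.1 q.2
    simp only [realVec, Pi.zero_apply]
    exact_mod_cast this
  have hstrip : ∀ p ∈ T, ∀ i, InStrip (2 * S) (2 * e) (y a / x a) (p.1 i, p.2 i) :=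
    fun p hp => (hT p hp).2.2.1
  have hbound := fun (P : Finset (ℤ × ℤ)) hP => card_le_of_inStrip P hP (hstrip p₀ hp₀ i)
    (hstrip p₀ hp₀ j) (by simp only; intro h; apply hij; linarith)
  have hepos : 0 < e := by
    have := hbound {(p₀.1 i, p₀.2 i)} (by simpa using hstrip p₀ hp₀ i)
    rcases he0.lt_or_eq with h | h
    · exact h
    · rw [← h] at this; norm_num at this
  set P : Finset (ℤ × ℤ) := (T ×ˢ Finset.univ).image fun q => (q.1.1 q.2, q.1.2 q.2) with hPdef
  have hPc : (P.card : ℝ) ≤ 72 * S * e := by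
    refine (hbound P fun q hq => ?_).trans (by linarith)
    obtain ⟨r, hr, rfl⟩ := Finset.mem_image.mp hq
    exact hstrip _ (Finset.mem_product.mp hr).1 _
  have hTc : (T.card : ℝ) ≤ (72 * S * e) ^ n := by
    have : T.card ≤ (Fintype.piFinset fun _ : Fin n => P).card := by
      refine Finset.card_le_card_of_injOn (fun p i => (p.1 i, p.2 i)) (fun p hp => ?_) ?_
      · simp only [Finset.mem_coe, Fintype.mem_piFinset]
        exact fun i => Finset.mem_image.mpr
          ⟨(p, i), Finset.mem_product.mpr ⟨hp, Finset.mem_univ i⟩, rfl⟩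
      · intro p _ q _ hpq
        refine Prod.ext (funext fun i => ?_) (funext fun i => ?_)
        · exact congrArg Prod.fst (congrFun hpq i)
        · exact congrArg Prod.snd (congrFun hpq i)
    rw [Fintype.card_piFinset, Finset.prod_const, Finset.card_univ, Fintype.card_fin] at this
    calc (T.card : ℝ) ≤ (P.card : ℝ) ^ n := by exact_mod_cast this
      _ ≤ _ := pow_le_pow_left₀ (Nat.cast_nonneg _) hPc n
  calc ∑ p ∈ T, (minorNorm (realVec p.1) (realVec p.2) ^ n)⁻¹
      ≤ ∑ _p ∈ T, ((κ * S * e / (4 * n ^ 2)) ^ n)⁻¹ := by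
        refine Finset.sum_le_sum fun p hp => ?_
        refine inv_anti₀ (by positivity) (pow_le_pow_left₀ (by positivity) ?_ n)
        rw [div_le_iff₀ (by positivity), mul_comm (minorNorm _ _)]
        exact (hT p hp).2.2.2
    _ ≤ (72 * S * e) ^ n * ((κ * S * e / (4 * n ^ 2)) ^ n)⁻¹ := by
        rw [Finset.sum_const, nsmul_eq_mul]
        exact mul_le_mul_of_nonneg_right hTc (by positivity)
    _ = (288 * n ^ 2 / κ) ^ n := by
        rw [← div_eq_mul_inv, ← div_pow]
        congr 1
        field_simp
        norm_num

lemma le_norm_of_hitSet_nonempty {n : ℕ} {B : Set (Fin n → ℝ)} {a : Fin n} {κ S : ℝ}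
    (hBS : ∀ x ∈ B, ‖x‖ ≤ S ∧ κ * S ≤ |x a|) {m : Fin n → ℤ} (hm : (hitSet B m).Nonempty) :
    κ * S / 2 ≤ ‖realVec m‖ ∧ ‖realVec m‖ ≤ 2 * S := by
  obtain ⟨A, hA, hAB⟩ := hm
  have h1 := norm_comb_le hA (realVec m)
  have h2 := half_norm_le_norm_comb hA (realVec m)
  have h3 := hBS _ hAB
  have h4 := norm_le_pi_norm (comb A (realVec m)) a
  rw [Real.norm_eq_abs] at h4
  have h5 := norm_nonneg (realVec m)
  constructor <;> linarith [h3.1, h3.2]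

lemma volume_comb_mem_le_norm {n : ℕ} {B : Set (Fin n → ℝ)} (hB : MeasurableSet B)
    {v : Fin n → ℝ} (hv : v ≠ 0) :
    volume (matBox n ∩ {A | comb A v ∈ B}) ≤ (ENNReal.ofReal (‖v‖ ^ n))⁻¹ * volume B := by
  obtain ⟨i₀, -⟩ := Function.ne_iff.mp hv
  have : Nonempty (Fin n) := ⟨i₀⟩
  obtain ⟨j, hj⟩ : ∃ j, |v j| = ‖v‖ := by
    obtain ⟨j, hj⟩ := Finite.exists_max fun j => |v j|
    exact ⟨j, le_antisymm (norm_le_pi_norm v j)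
      ((pi_norm_le_iff_of_nonneg (abs_nonneg _)).mpr hj)⟩
  rw [← hj]
  exact volume_comb_mem_le _ j (by rw [← abs_pos, hj]; exact norm_pos_iff.mpr hv) B hB

lemma volume_hitSet_le {n : ℕ} {B : Set (Fin n → ℝ)} (hB : MeasurableSet B) {m : Fin n → ℤ}
    (hm : m ≠ 0) :
    volume (hitSet B m) ≤ (ENNReal.ofReal (‖realVec m‖ ^ n))⁻¹ * volume B :=
  volume_comb_mem_le_norm hB (realVec_ne_zero hm)

lemma first_moment {n : ℕ} {B : Set (Fin n → ℝ)} (hB : MeasurableSet B) (a : Fin n) {κ S : ℝ}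
    (hκ : 0 < κ) (hκ1 : κ ≤ 1) (hS : 8 * n / κ ≤ S)
    (hBS : ∀ x ∈ B, ‖x‖ ≤ S ∧ κ * S ≤ |x a|) :
    ENNReal.ofReal (((1 / (2 * (n : ℝ) ^ 2)) ^ n) ^ (n - 1) * (κ / (16 * n)) ^ n) * volume B ≤
      ∑ m ∈ (intBox n (2 * S)).erase 0, volume (hitSet B m) := by
  have hn1 : 1 ≤ n := Fin.pos a
  have hn : (1 : ℝ) ≤ n := by exact_mod_cast hn1
  have hSpos : 0 < S := lt_of_lt_of_le (by positivity) hS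
  set ρ : ℝ := κ * S / (8 * n) with hρ
  have hρ1 : 1 ≤ ρ := by
    rw [div_le_iff₀ hκ] at hS
    rw [hρ, le_div_iff₀ (by positivity)]
    linarith
  have hρS : ρ ≤ κ * S / 8 := by
    rw [hρ]
    exact div_le_div_of_nonneg_left (by positivity) (by norm_num) (by linarith)
  have hκS : κ * S ≤ S := by nlinarith
  set c : ℝ := ((1 / (2 * (n : ℝ) ^ 2)) ^ n) ^ (n - 1) with hc
  have hc0 : 0 ≤ c := by positivity
  have hBn : ∀ x ∈ B, κ * S ≤ ‖x‖ := fun x hx =>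
    (hBS x hx).2.trans (norm_le_pi_norm x a)
  have step : ∀ m ∈ (intBox n (2 * S)).erase 0,
      ENNReal.ofReal c * ((ENNReal.ofReal ((2 * S) ^ n))⁻¹ *
        volume (B ∩ Metric.closedBall (realVec m) ρ)) ≤ volume (hitSet B m) := by
    intro m hm
    rcases (B ∩ Metric.closedBall (realVec m) ρ).eq_empty_or_nonempty with h | ⟨x, hxB, hx⟩
    · simp [h]
    have hmR := (mem_intBox (by linarith)).mp (Finset.mem_of_mem_erase hm)
    have hmκ : κ * S / 2 ≤ ‖realVec m‖ := by
      have h1 := hBn x hxB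
      have h2 := norm_sub_norm_le x (realVec m)
      rw [mem_closedBall_iff_norm] at hx
      nlinarith
    refine le_trans ?_ ((le_volume_comb_mem hn1 (realVec m)
      (realVec_ne_zero (Finset.ne_of_mem_erase hm)) (B ∩ Metric.closedBall (realVec m) ρ)
      (hB.inter Metric.isClosed_closedBall.measurableSet) ?_).trans (measure_mono ?_))
    · gcongr
    · refine Set.inter_subset_right.trans (Metric.closedBall_subset_closedBall ?_)
      rw [hρ, div_le_div_iff₀ (by positivity) (by positivity)]
      nlinarith
    · exact Set.inter_subset_inter_right _ fun A hA => hA.1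
  refine le_trans ?_ (Finset.sum_le_sum step)
  rw [← Finset.mul_sum, ← Finset.mul_sum, ENNReal.ofReal_mul hc0, mul_assoc]
  refine mul_le_mul_right ?_ _
  classical
  have hsum : ENNReal.ofReal (ρ ^ n) * volume B ≤
      ∑ m ∈ (intBox n (2 * S)).erase 0, volume (B ∩ Metric.closedBall (realVec m) ρ) := by
    have e1 : ∀ m : Fin n → ℤ, volume (B ∩ Metric.closedBall (realVec m) ρ) =
        ∫⁻ x in B, (Metric.closedBall (realVec m) ρ).indicator 1 x := fun m => by
      rw [lintegral_indicator_one Metric.isClosed_closedBall.measurableSet,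
        Measure.restrict_apply Metric.isClosed_closedBall.measurableSet, Set.inter_comm]
    simp only [e1]
    rw [← lintegral_finsetSum _ fun m _ =>
      measurable_one.indicator Metric.isClosed_closedBall.measurableSet,
      ← setLIntegral_const]
    refine setLIntegral_mono' hB fun x hx => ?_
    have h1 := le_card_near x hρ1 (R := 2 * S) (by linarith [(hBS x hx).1])
    have h2 : ((intBox n (2 * S)).filter fun m => ‖x - realVec m‖ ≤ ρ) ⊆
        ((intBox n (2 * S)).erase 0).filter fun m => x ∈ Metric.closedBall (realVec m) ρ := by
      intro m hm
      rw [Finset.mem_filter] at hm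
      rw [Finset.mem_filter, Finset.mem_erase, mem_closedBall_iff_norm]
      refine ⟨⟨?_, hm.1⟩, hm.2⟩
      rintro rfl
      have h3 : realVec (0 : Fin n → ℤ) = 0 := by ext; simp [realVec]
      rw [h3, sub_zero] at hm
      have := hBn x hx
      nlinarith [hm.2]
    calc ENNReal.ofReal (ρ ^ n)
        ≤ ENNReal.ofReal ((((intBox n (2 * S)).erase 0).filter
            fun m => x ∈ Metric.closedBall (realVec m) ρ).card : ℝ) :=
          ENNReal.ofReal_le_ofReal (h1.trans (by exact_mod_cast Finset.card_le_card h2))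
      _ = ∑ m ∈ (intBox n (2 * S)).erase 0,
            (Metric.closedBall (realVec m) ρ).indicator 1 x := by
          rw [ENNReal.ofReal_natCast, Finset.card_filter]
          push_cast
          exact Finset.sum_congr rfl fun m _ => by rw [Set.indicator_apply]; rfl
  refine le_trans ?_ (mul_le_mul_right hsum _)
  rw [← mul_assoc]
  gcongr
  rw [← ENNReal.ofReal_inv_of_pos (by positivity), ← ENNReal.ofReal_mul (by positivity)]
  refine ENNReal.ofReal_le_ofReal (le_of_eq ?_)
  rw [← inv_pow, ← mul_pow, hρ]
  congr 1
  field_simp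
  norm_num

lemma second_moment_collinear {n : ℕ} (hn : 2 ≤ n) {B : Set (Fin n → ℝ)} (hB : MeasurableSet B)
    (a : Fin n) {κ S : ℝ} (hκ : 0 < κ) (hS : 1 ≤ S)
    (hBS : ∀ x ∈ B, ‖x‖ ≤ S ∧ κ * S ≤ |x a|) :
    ∑ p ∈ ((intBox n (2 * S)).erase 0 ×ˢ (intBox n (2 * S)).erase 0).filter (fun p =>
      minorNorm (realVec p.1) (realVec p.2) = 0), volume (hitSet B p.1 ∩ hitSet B p.2) ≤
      ENNReal.ofReal ((12 / κ) ^ n * (3 + 2 * Real.log (2 * S)) ^ n) * volume B := by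
  have hlog : 0 ≤ Real.log (2 * S) := Real.log_nonneg (by linarith)
  calc _ ≤ ∑ p ∈ ((intBox n (2 * S)).erase 0 ×ˢ (intBox n (2 * S)).erase 0).filter (fun p =>
      minorNorm (realVec p.1) (realVec p.2) = 0),
        (ENNReal.ofReal ((κ * S / 2) ^ n))⁻¹ * volume B := by
        refine Finset.sum_le_sum fun p hp => ?_
        refine (measure_mono Set.inter_subset_left).trans ?_
        rcases (hitSet B p.1).eq_empty_or_nonempty with h | h
        · simp [h]
        have hp0 : p.1 ≠ 0 := Finset.ne_of_mem_erase
          (Finset.mem_product.mp (Finset.mem_filter.mp hp).1).1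
        refine (volume_hitSet_le hB hp0).trans ?_
        have := (le_norm_of_hitSet_nonempty hBS h).1
        gcongr
    _ ≤ _ := by
        rw [Finset.sum_const, nsmul_eq_mul, ← mul_assoc]
        gcongr
        rw [← ENNReal.ofReal_natCast, ← ENNReal.ofReal_inv_of_pos (by positivity),
          ← ENNReal.ofReal_mul (by positivity)]
        refine ENNReal.ofReal_le_ofReal ?_
        calc _ ≤ (3 * (2 * S)) ^ n * (3 + 2 * Real.log (2 * S)) ^ n * ((κ * S / 2) ^ n)⁻¹ :=
              mul_le_mul_of_nonneg_right (card_collinear_le hn (by linarith)) (by positivity)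
          _ = _ := by
              rw [mul_right_comm, ← inv_pow, ← mul_pow]
              congr 2
              field_simp
              norm_num

lemma second_moment_independent {n : ℕ} {B : Set (Fin n → ℝ)} (hB : MeasurableSet B)
    (a : Fin n) {κ S : ℝ} (hκ : 0 < κ) (hS : 1 ≤ S)
    (hBS : ∀ x ∈ B, ‖x‖ ≤ S ∧ κ * S ≤ |x a|) (T : Finset ((Fin n → ℤ) × (Fin n → ℤ)))
    (hT : ∀ p ∈ T, minorNorm (realVec p.1) (realVec p.2) ≠ 0) :
    ∑ p ∈ T, volume (hitSet B p.1 ∩ hitSet B p.2) ≤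
      ENNReal.ofReal ((288 * n ^ 2 / κ) ^ n) * volume B ^ 2 := by
  have hS0 : 0 < S := by linarith
  have hm := fun p => measurableSet_pairSet hB a κ S p
  have hm' := fun p => (measurable_one (β := (Fin n → ℝ) × (Fin n → ℝ)) (α := ℝ≥0∞)).indicator
    (hm p)
  have step : ∀ p ∈ T, volume (hitSet B p.1 ∩ hitSet B p.2) ≤
      ∫⁻ x, ∫⁻ y, ENNReal.ofReal ((minorNorm (realVec p.1) (realVec p.2) ^ n)⁻¹) *
        (pairSet B a κ S p).indicator 1 (x, y) := by
    intro p hp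
    have hpos : 0 < minorNorm (realVec p.1) (realVec p.2) :=
      lt_of_le_of_ne (norm_nonneg _) (hT p hp).symm
    have : Nonempty (Fin n × Fin n) := ⟨(a, a)⟩
    obtain ⟨⟨i, j⟩, hij⟩ := Finite.exists_max fun q : Fin n × Fin n =>
      |realVec p.1 q.1 * realVec p.2 q.2 - realVec p.1 q.2 * realVec p.2 q.1|
    have hij' : |realVec p.1 i * realVec p.2 j - realVec p.1 j * realVec p.2 i| =
        minorNorm (realVec p.1) (realVec p.2) :=
      le_antisymm (norm_le_pi_norm (fun q : Fin n × Fin n =>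
        realVec p.1 q.1 * realVec p.2 q.2 - realVec p.1 q.2 * realVec p.2 q.1) (i, j))
        ((pi_norm_le_iff_of_nonneg (abs_nonneg _)).mpr hij)
    calc volume (hitSet B p.1 ∩ hitSet B p.2)
        ≤ volume (matBox n ∩ {A | (comb A (realVec p.1), comb A (realVec p.2)) ∈
            pairSet B a κ S p}) :=
          measure_mono fun A hA => ⟨hA.1.1, mem_pairSet_of_hitSet hκ hS0 hBS hA.1 hA.2⟩
      _ = ∫⁻ A in matBox n, (pairSet B a κ S p).indicator 1
            (comb A (realVec p.1), comb A (realVec p.2)) := by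
          rw [Set.inter_comm, ← Measure.restrict_apply, ← lintegral_indicator_one]
          · rfl
          all_goals
            exact ((measurable_comb _).prodMk (measurable_comb _)) (hm p)
      _ ≤ _ := by
          refine (setLIntegral_comb_comb_le
            (fun x y => (pairSet B a κ S p).indicator 1 (x, y)) (hm' p) _ _ i j ?_).trans ?_
          · rw [← abs_pos, hij']; exact hpos
          · rw [hij', ← ENNReal.ofReal_inv_of_pos (by positivity), ← lintegral_const_mul]
            · refine le_of_eq (lintegral_congr fun x => ?_)
              rw [lintegral_const_mul]
              exact (hm' p).comp measurable_prodMk_left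
            · exact (hm' p).lintegral_prod_right'
  refine (Finset.sum_le_sum step).trans ?_
  have hmm : ∀ p, Measurable fun q : (Fin n → ℝ) × (Fin n → ℝ) =>
      ENNReal.ofReal ((minorNorm (realVec p.1) (realVec p.2) ^ n)⁻¹) *
        (pairSet B a κ S p).indicator 1 (q.1, q.2) := fun p => (hm' p).const_mul _
  rw [← lintegral_finsetSum _ fun p _ => (hmm p).lintegral_prod_right']
  have key : ∀ x y, ∑ p ∈ T, ENNReal.ofReal ((minorNorm (realVec p.1) (realVec p.2) ^ n)⁻¹) *
        (pairSet B a κ S p).indicator 1 (x, y) ≤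
      ENNReal.ofReal ((288 * n ^ 2 / κ) ^ n) * (B.indicator 1 x * B.indicator 1 y) := by
    intro x y
    by_cases hxy : x ∈ B ∧ y ∈ B
    · classical
      simp only [Set.indicator_apply, hxy, if_true, Pi.one_apply, mul_one, mul_ite, mul_zero]
      rw [← Finset.sum_filter, ← ENNReal.ofReal_sum_of_nonneg]
      · refine ENNReal.ofReal_le_ofReal (sum_inv_minorNorm_le (B := B) (a := a) hκ hS0 x y _
          fun p hp => ?_)
        rw [Finset.mem_filter] at hp
        exact ⟨hT p hp.1, hp.2⟩
      · intro p _
        exact inv_nonneg.mpr (pow_nonneg (norm_nonneg _) n)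
    · have : ∀ p, (x, y) ∉ pairSet B a κ S p := fun p h => hxy h.1
      simp [this]
  calc _ ≤ ∫⁻ x, ∫⁻ y, ENNReal.ofReal ((288 * n ^ 2 / κ) ^ n) *
        (B.indicator 1 x * B.indicator 1 y) := by
        refine lintegral_mono fun x => ?_
        have hy : ∀ p, Measurable fun y =>
            ENNReal.ofReal ((minorNorm (realVec p.1) (realVec p.2) ^ n)⁻¹) *
              (pairSet B a κ S p).indicator 1 (x, y) := fun p =>
          (hmm p).comp measurable_prodMk_left
        rw [← lintegral_finsetSum _ fun p _ => hy p]
        exact lintegral_mono fun y => key x y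
    _ = _ := by
        have hi := (measurable_one (β := Fin n → ℝ) (α := ℝ≥0∞)).indicator hB
        simp_rw [lintegral_const_mul _ (hi.const_mul _), lintegral_const_mul _ hi]
        rw [lintegral_const_mul _ (hi.mul_const _), lintegral_mul_const _ hi,
          lintegral_indicator_one hB, pow_two (volume B)]

/-- The second moment method for a finite family of sets. -/
lemma sum_measure_le_of_second_moment {Ω ι : Type*} [MeasurableSpace Ω] (ν : Measure Ω)
    (M : Finset ι) (H : ι → Set Ω) (hH : ∀ m, MeasurableSet (H m)) {θ : ℝ} (hθ : 0 < θ) :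
    ∑ m ∈ M, ν (H m) ≤ ENNReal.ofReal θ * ∑ p ∈ M ×ˢ M, ν (H p.1 ∩ H p.2) +
      ENNReal.ofReal (1 / (4 * θ)) * ν (⋃ m ∈ M, H m) := by
  classical
  have hi := fun m => (measurable_one (β := Ω) (α := ℝ≥0∞)).indicator (hH m)
  have hi2 := fun p : ι × ι =>
    (measurable_one (β := Ω) (α := ℝ≥0∞)).indicator ((hH p.1).inter (hH p.2))
  have hU : MeasurableSet (⋃ m ∈ M, H m) := Finset.measurableSet_biUnion _ fun m _ => hH m
  have key : ∀ ω, ∑ m ∈ M, (H m).indicator (1 : Ω → ℝ≥0∞) ω ≤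
      ENNReal.ofReal θ * ∑ p ∈ M ×ˢ M, (H p.1 ∩ H p.2).indicator 1 ω +
        ENNReal.ofReal (1 / (4 * θ)) * (⋃ m ∈ M, H m).indicator 1 ω := by
    intro ω
    by_cases hω : ω ∈ ⋃ m ∈ M, H m
    · set k := (M.filter fun m => ω ∈ H m).card with hk
      have e1 : ∑ m ∈ M, (H m).indicator (1 : Ω → ℝ≥0∞) ω = ENNReal.ofReal k := by
        rw [ENNReal.ofReal_natCast, hk, Finset.card_filter]
        push_cast
        exact Finset.sum_congr rfl fun m _ => by rw [Set.indicator_apply]; rfl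
      have e2 : ∑ p ∈ M ×ˢ M, (H p.1 ∩ H p.2).indicator (1 : Ω → ℝ≥0∞) ω =
          ENNReal.ofReal k * ENNReal.ofReal k := by
        rw [← e1, Finset.sum_mul_sum, Finset.sum_product]
        refine Finset.sum_congr rfl fun m _ => Finset.sum_congr rfl fun m' _ => ?_
        rw [Set.inter_indicator_one, Pi.mul_apply]
      rw [e1, e2, Set.indicator_of_mem hω, Pi.one_apply, mul_one, ← ENNReal.ofReal_mul
        (Nat.cast_nonneg _), ← ENNReal.ofReal_mul hθ.le, ← ENNReal.ofReal_add (by positivity)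
        (by positivity)]
      refine ENNReal.ofReal_le_ofReal ?_
      have h : θ * ((k : ℝ) * k) + 1 / (4 * θ) - k = (2 * θ * k - 1) ^ 2 / (4 * θ) := by
        field_simp
        ring
      have h2 : 0 ≤ (2 * θ * (k : ℝ) - 1) ^ 2 / (4 * θ) := by positivity
      linarith
    · have : ∀ m ∈ M, (H m).indicator (1 : Ω → ℝ≥0∞) ω = 0 := fun m hm =>
        Set.indicator_of_notMem (fun h => hω (Set.mem_biUnion hm h)) _
      rw [Finset.sum_eq_zero this]
      exact zero_le
  calc ∑ m ∈ M, ν (H m) = ∫⁻ ω, ∑ m ∈ M, (H m).indicator 1 ω ∂ν := by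
        rw [lintegral_finsetSum _ fun m _ => hi m]
        exact Finset.sum_congr rfl fun m _ => (lintegral_indicator_one (hH m)).symm
    _ ≤ _ := lintegral_mono key
    _ = _ := by
        rw [lintegral_add_right _ ((measurable_one.indicator hU).const_mul _),
          lintegral_const_mul _ (Finset.measurable_fun_sum _ fun p _ => hi2 p),
          lintegral_const_mul _ (measurable_one.indicator hU), lintegral_indicator_one hU,
          lintegral_finsetSum _ fun p _ => hi2 p]
        congr 2
        exact Finset.sum_congr rfl fun p _ => lintegral_indicator_one ((hH p.1).inter (hH p.2))

theorem exists_le_volume_hit {n : ℕ} (hn : 2 ≤ n) {κ : ℝ} (hκ : 0 < κ) (hκ1 : κ ≤ 1) :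
    ∃ c > (0 : ℝ≥0∞), ∀ (a : Fin n) (S : ℝ) (B : Set (Fin n → ℝ)), MeasurableSet B →
      8 * n / κ ≤ S → (∀ x ∈ B, ‖x‖ ≤ S ∧ κ * S ≤ |x a|) →
      ENNReal.ofReal ((3 + 2 * Real.log (2 * S)) ^ n) ≤ volume B →
      c ≤ volume (matBox n ∩ {A | ∃ m : Fin n → ℤ, m ≠ 0 ∧ comb A (realVec m) ∈ B}) := by
  have hn' : (2 : ℝ) ≤ n := by exact_mod_cast hn
  set c₁ : ℝ := ((1 / (2 * (n : ℝ) ^ 2)) ^ n) ^ (n - 1) * (κ / (16 * n)) ^ n with hc₁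
  set C₂ : ℝ := (12 / κ) ^ n + (288 * n ^ 2 / κ) ^ n with hC₂
  have hc₁0 : 0 < c₁ := by positivity
  have hC₂0 : 0 < C₂ := by positivity
  refine ⟨ENNReal.ofReal (c₁ ^ 2 / C₂), ENNReal.ofReal_pos.mpr (by positivity),
    fun a S B hB hS hBS hV => ?_⟩
  have hS1 : 1 ≤ S := by
    refine le_trans ?_ hS
    rw [le_div_iff₀ hκ]
    linarith
  have hlog : 0 ≤ Real.log (2 * S) := Real.log_nonneg (by linarith)
  have hfin : volume B ≠ ∞ := by
    refine ((measure_mono fun x hx => ?_).trans_lt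
      (measure_closedBall_lt_top (x := (0 : Fin n → ℝ)) (r := S))).ne
    rw [mem_closedBall_zero_iff]
    exact (hBS x hx).1
  obtain ⟨V, hV0, hVB⟩ : ∃ V : ℝ, 0 < V ∧ volume B = ENNReal.ofReal V := by
    refine ⟨(volume B).toReal, ENNReal.toReal_pos ?_ hfin, (ENNReal.ofReal_toReal hfin).symm⟩
    refine (lt_of_lt_of_le (ENNReal.ofReal_pos.mpr ?_) hV).ne'
    positivity
  have hlogV : (3 + 2 * Real.log (2 * S)) ^ n ≤ V := by
    rw [hVB] at hV
    exact (ENNReal.ofReal_le_ofReal_iff hV0.le).mp hV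
  set M := (intBox n (2 * S)).erase 0 with hM
  have f1 := first_moment hB a hκ hκ1 hS hBS
  have f2 : ∑ p ∈ M ×ˢ M, volume (hitSet B p.1 ∩ hitSet B p.2) ≤
      ENNReal.ofReal (C₂ * V ^ 2) := by
    rw [← Finset.sum_filter_add_sum_filter_not _
      fun p => minorNorm (realVec p.1) (realVec p.2) = 0]
    have g1 := second_moment_collinear hn hB a hκ hS1 hBS
    have g2 := second_moment_independent hB a hκ hS1 hBS ((M ×ˢ M).filter fun p =>
      ¬ minorNorm (realVec p.1) (realVec p.2) = 0) fun p hp => (Finset.mem_filter.mp hp).2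
    refine (add_le_add g1 g2).trans ?_
    rw [hVB, ← ENNReal.ofReal_pow hV0.le, ← ENNReal.ofReal_mul (by positivity),
      ← ENNReal.ofReal_mul (by positivity), ← ENNReal.ofReal_add (by positivity) (by positivity)]
    refine ENNReal.ofReal_le_ofReal ?_
    rw [hC₂, add_mul, pow_two V, ← mul_assoc, ← mul_assoc]
    gcongr
  have f3 := sum_measure_le_of_second_moment volume M (hitSet B) (measurableSet_hitSet hB)
    (θ := c₁ / (2 * C₂ * V)) (by positivity)
  have f4 := f1.trans (f3.trans (add_le_add_left (mul_le_mul_right f2 _) _))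
  have hsub : (⋃ m ∈ M, hitSet B m) ⊆
      matBox n ∩ {A | ∃ m : Fin n → ℤ, m ≠ 0 ∧ comb A (realVec m) ∈ B} := by
    intro A hA
    obtain ⟨m, hm, hA⟩ := Set.mem_iUnion₂.mp hA
    exact ⟨hA.1, m, Finset.ne_of_mem_erase hm, hA.2⟩
  refine le_trans ?_ (measure_mono hsub)
  set P := volume (⋃ m ∈ M, hitSet B m)
  by_cases hP : P = ∞
  · rw [hP]; exact le_top
  rw [← ENNReal.ofReal_toReal hP] at f4 ⊢
  set q := P.toReal
  have hq : 0 ≤ q := ENNReal.toReal_nonneg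
  rw [hVB, ← ENNReal.ofReal_mul (by positivity), ← ENNReal.ofReal_mul (by positivity),
    ← ENNReal.ofReal_mul (by positivity), ← ENNReal.ofReal_add (by positivity) (by positivity),
    ENNReal.ofReal_le_ofReal_iff (by positivity)] at f4
  refine ENNReal.ofReal_le_ofReal ?_
  have e1 : c₁ / (2 * C₂ * V) * (C₂ * V ^ 2) = c₁ * V / 2 := by field_simp
  have e2 : 1 / (4 * (c₁ / (2 * C₂ * V))) * q = V * (C₂ * q) / (2 * c₁) := by
    field_simp
    norm_num
  rw [e1, e2] at f4
  have h5 : c₁ * V / 2 ≤ V * (C₂ * q) / (2 * c₁) := by linarith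
  rw [div_le_div_iff₀ (by norm_num) (by positivity)] at h5
  rw [div_le_iff₀ hC₂0]
  have h6 : V * c₁ ^ 2 ≤ V * (q * C₂) := by nlinarith
  exact le_of_mul_le_mul_left h6 hV0

/-- The return set: `A` belongs to it if infinitely often the lattice spanned by the columns of
`A` has a nonzero vector brought by `P ^ k` to norm `O(k ^ s)`. -/
def IsApprox {n : ℕ} (P : Matrix (Fin n) (Fin n) ℝ) (s : ℝ) (A : Fin n → Fin n → ℝ) : Prop :=
  ∃ C : ℕ, ∃ᶠ k : ℕ in atTop, ∃ m : Fin n → ℤ, m ≠ 0 ∧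
    ‖(P ^ k) *ᵥ comb A (realVec m)‖ < C * (k : ℝ) ^ s

lemma one_add_pow_of_pow_eq_zero {R : Type*} [Ring R] {N : R} {d : ℕ} (hN : N ^ (d + 1) = 0)
    {k : ℕ} (hk : d ≤ k) :
    (1 + N) ^ k = ∑ i ∈ Finset.range (d + 1), (k.choose i) • N ^ i := by
  rw [add_comm, (Commute.one_right N).add_pow]
  have h : Finset.range (d + 1) ⊆ Finset.range (k + 1) :=
    Finset.range_subset_range.mpr (by omega)
  refine (Finset.sum_subset h ?_).symm.trans ?_
  · intro i _ hi
    rw [pow_eq_zero_of_le (by simpa using hi) hN]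
    simp
  · exact Finset.sum_congr rfl fun i _ => by simp [nsmul_eq_mul, Nat.cast_comm]

lemma tendsto_choose_div_pow {i d : ℕ} (hid : i ≤ d) :
    Tendsto (fun k : ℕ => (k.choose i : ℝ) / (k : ℝ) ^ d) atTop
      (nhds (if i = d then 1 / (d.factorial : ℝ) else 0)) := by
  have h0 : Tendsto (fun k : ℕ => (k.choose i : ℝ) / (k : ℝ) ^ i) atTop
      (nhds (1 / (i.factorial : ℝ))) := by
    have h1 := Asymptotics.IsEquivalent.div (isEquivalent_choose i)
      (Asymptotics.IsEquivalent.refl (u := fun k : ℕ => (k : ℝ) ^ i))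
    refine h1.symm.tendsto_nhds ?_
    refine tendsto_const_nhds.congr' ?_
    filter_upwards [eventually_gt_atTop 0] with k hk
    have : (k : ℝ) ≠ 0 := by positivity
    simp only [Pi.div_apply]
    field_simp
  split_ifs with h
  · rw [← h]; exact h0
  · have hlt : 0 < d - i := by omega
    have h1 : Tendsto (fun k : ℕ => ((k : ℝ) ^ (d - i))⁻¹) atTop (nhds 0) :=
      ((tendsto_pow_atTop hlt.ne').comp tendsto_natCast_atTop_atTop).inv_tendsto_atTop
    have h2 := h0.mul h1
    rw [mul_zero] at h2
    refine h2.congr fun k => ?_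
    rw [div_mul_eq_mul_div, ← div_eq_mul_inv, div_div, ← pow_add]
    congr 2
    omega

lemma tendsto_pow_entry {n d : ℕ} {N : Matrix (Fin n) (Fin n) ℝ} (hN : N ^ (d + 1) = 0)
    (a b : Fin n) :
    Tendsto (fun k : ℕ => ((1 + N) ^ k) a b / (k : ℝ) ^ d) atTop
      (nhds ((N ^ d) a b / d.factorial)) := by
  have h : Tendsto (fun k : ℕ => ∑ i ∈ Finset.range (d + 1),
      (k.choose i : ℝ) / (k : ℝ) ^ d * (N ^ i) a b) atTop
      (nhds (∑ i ∈ Finset.range (d + 1),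
        (if i = d then 1 / (d.factorial : ℝ) else 0) * (N ^ i) a b)) :=
    tendsto_finsetSum _ fun i hi => (tendsto_choose_div_pow
      (Nat.lt_succ_iff.mp (Finset.mem_range.mp hi))).mul_const _
  have e : ∑ i ∈ Finset.range (d + 1),
        (if i = d then 1 / (d.factorial : ℝ) else 0) * (N ^ i) a b =
        (N ^ d) a b / d.factorial := by
    simp [ite_mul, Finset.sum_ite_eq']
    ring
  rw [e] at h
  refine h.congr' ?_
  filter_upwards [eventually_ge_atTop d] with k hk
  rw [one_add_pow_of_pow_eq_zero hN hk, Matrix.sum_apply, Finset.sum_div]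
  refine Finset.sum_congr rfl fun i _ => ?_
  rw [Matrix.smul_apply, nsmul_eq_mul]
  ring

lemma abs_mulVec_sub_le {n : ℕ} (M L : Matrix (Fin n) (Fin n) ℝ) {ε : ℝ} (a : Fin n)
    (h : ∀ b, |M a b - L a b| ≤ ε) (v : Fin n → ℝ) :
    |(M *ᵥ v) a - (L *ᵥ v) a| ≤ n * ε * ‖v‖ := by
  simp only [Matrix.mulVec, dotProduct]
  rw [← Finset.sum_sub_distrib]
  calc |∑ b, (M a b * v b - L a b * v b)| ≤ ∑ _b : Fin n, ε * ‖v‖ := by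
        refine (Finset.abs_sum_le_sum_abs _ _).trans (Finset.sum_le_sum fun b _ => ?_)
        rw [← sub_mul, abs_mul]
        exact mul_le_mul (h b) (norm_le_pi_norm v b) (abs_nonneg _)
          ((abs_nonneg _).trans (h b))
    _ = _ := by
        rw [Finset.sum_const, Finset.card_univ, Fintype.card_fin, nsmul_eq_mul]; ring

/-- Growth of the powers of a unipotent matrix on a bounded set where the leading coefficient of
the `a`-th coordinate is bounded below. -/
lemma eventually_pow_growth {n d : ℕ} {N : Matrix (Fin n) (Fin n) ℝ} (hN : N ^ (d + 1) = 0)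
    (a : Fin n) {K : ℝ} (hK : 0 < K) : ∃ c > (0 : ℝ), ∃ C > (0 : ℝ), ∀ᶠ k : ℕ in atTop,
      ∀ w : Fin n → ℝ, ‖w‖ ≤ K → 1 / 2 ≤ ((N ^ d) *ᵥ w) a →
        c * (k : ℝ) ^ d ≤ |(((1 + N) ^ k) *ᵥ w) a| ∧ ‖((1 + N) ^ k) *ᵥ w‖ ≤ C * (k : ℝ) ^ d := by
  have hn : (0 : ℝ) < n := by exact_mod_cast Fin.pos a
  have hd : (0 : ℝ) < d.factorial := by exact_mod_cast d.factorial_pos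
  set ε : ℝ := 1 / (4 * d.factorial * n * K) with hε
  have hε0 : 0 < ε := by positivity
  obtain ⟨D, hD0, hD⟩ : ∃ D : ℝ, 0 ≤ D ∧ ∀ i j, |(N ^ d) i j / d.factorial| ≤ D := by
    refine ⟨∑ i, ∑ j, |(N ^ d) i j / d.factorial|, by positivity, fun i j => ?_⟩
    refine le_trans ?_ (Finset.single_le_sum (f := fun i => ∑ j, |(N ^ d) i j / d.factorial|)
      (fun i _ => by positivity) (Finset.mem_univ i))
    exact Finset.single_le_sum (f := fun j => |(N ^ d) i j / d.factorial|)
      (fun i _ => by positivity) (Finset.mem_univ j)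
  refine ⟨1 / (4 * d.factorial), by positivity, n * (D + ε) * K, by positivity, ?_⟩
  have hev : ∀ᶠ k : ℕ in atTop, ∀ i j,
      |((1 + N) ^ k) i j / (k : ℝ) ^ d - (N ^ d) i j / d.factorial| < ε := by
    simp only [eventually_all]
    intro i j
    have := (tendsto_pow_entry hN i j).eventually (Metric.ball_mem_nhds _ hε0)
    simpa [Real.dist_eq] using this
  filter_upwards [hev, eventually_gt_atTop 0] with k hk hk0 w hw hψ
  have hkd : (0 : ℝ) < (k : ℝ) ^ d := by positivity
  have e : ∀ i, (((1 + N) ^ k) *ᵥ w) i =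
      (k : ℝ) ^ d * ((((k : ℝ) ^ d)⁻¹ • (1 + N) ^ k) *ᵥ w) i := by
    intro i
    rw [Matrix.smul_mulVec, Pi.smul_apply, smul_eq_mul, mul_inv_cancel_left₀ hkd.ne']
  have happ : ∀ i j, |(((k : ℝ) ^ d)⁻¹ • (1 + N) ^ k) i j -
      ((d.factorial : ℝ)⁻¹ • N ^ d) i j| ≤ ε := fun i j => by
    have := (hk i j).le
    rwa [div_eq_inv_mul, div_eq_inv_mul] at this
  constructor
  · have h1 := abs_mulVec_sub_le _ _ a (happ a) w
    rw [e a, abs_mul, abs_of_pos hkd, mul_comm]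
    refine mul_le_mul_of_nonneg_left ?_ hkd.le
    have h2 : n * ε * ‖w‖ ≤ 1 / (4 * d.factorial) := by
      calc n * ε * ‖w‖ ≤ n * ε * K := by gcongr
        _ = _ := by rw [hε]; field_simp
    have h3 : (1 / 2) / (d.factorial : ℝ) ≤ (((d.factorial : ℝ)⁻¹ • N ^ d) *ᵥ w) a := by
      rw [Matrix.smul_mulVec, Pi.smul_apply, smul_eq_mul, div_eq_inv_mul]
      exact mul_le_mul_of_nonneg_left hψ (by positivity)
    have h4 : (1 / 2) / (d.factorial : ℝ) = 1 / (4 * d.factorial) + 1 / (4 * d.factorial) := by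
      field_simp; norm_num
    have h5 := (abs_le.mp h1).1
    refine le_trans ?_ (le_abs_self _)
    linarith
  · refine (pi_norm_le_iff_of_nonneg (by positivity)).mpr fun i => ?_
    have hb : ∀ j, |(((k : ℝ) ^ d)⁻¹ • (1 + N) ^ k) i j - (0 : Matrix (Fin n) (Fin n) ℝ) i j| ≤
        D + ε := by
      intro j
      have h1 := happ i j
      have h2 := hD i j
      rw [div_eq_inv_mul] at h2
      rw [Matrix.zero_apply, sub_zero]
      have h3 := abs_sub_abs_le_abs_sub ((((k : ℝ) ^ d)⁻¹ • (1 + N) ^ k) i j)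
        (((d.factorial : ℝ)⁻¹ • N ^ d) i j)
      rw [Matrix.smul_apply (d.factorial : ℝ)⁻¹, smul_eq_mul] at h3 h1
      linarith
    have h1 := abs_mulVec_sub_le _ _ i hb w
    rw [Matrix.zero_mulVec, Pi.zero_apply, sub_zero] at h1
    rw [Real.norm_eq_abs, e i, abs_mul, abs_of_pos hkd, mul_comm]
    refine mul_le_mul_of_nonneg_right (h1.trans ?_) hkd.le
    gcongr

lemma le_measure_setOf_frequently {α : Type*} [MeasurableSpace α] {μ : Measure α} {X : Set α}
    (hX : μ X ≠ ∞) {s : ℕ → Set α} (hs : ∀ k, MeasurableSet (s k)) (hsX : ∀ k, s k ⊆ X) {c : ℝ≥0∞}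
    (hc : ∀ᶠ k in atTop, c ≤ μ (s k)) : c ≤ μ {x | ∃ᶠ k in atTop, x ∈ s k} := by
  have hD : {x | ∃ᶠ k in atTop, x ∈ s k} = ⋂ k, ⋃ i ≥ k, s i := by
    ext x
    simp [frequently_atTop]
  have ht := tendsto_measure_iInter_atTop (μ := μ) (s := fun k => ⋃ i ≥ k, s i)
    (fun k => (MeasurableSet.iUnion fun i => MeasurableSet.iUnion fun _ => hs i).nullMeasurableSet)
    (fun k l hkl => Set.biUnion_subset_biUnion_left fun i hi => le_trans hkl hi)
    ⟨0, ne_top_of_le_ne_top hX (measure_mono (Set.iUnion₂_subset fun i _ => hsX i))⟩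
  rw [hD]
  refine ge_of_tendsto ht ?_
  filter_upwards [hc] with k hk
  exact hk.trans (measure_mono (Set.subset_biUnion_of_mem (u := s) (le_refl k)))

lemma eventually_add_log_pow_le (a b : ℝ) {ε c : ℝ} (hε : 0 < ε) (hc : 0 < c) (n : ℕ) :
    ∀ᶠ x : ℝ in atTop, (a + b * Real.log x) ^ n ≤ c * x ^ ε := by
  rcases Nat.eq_zero_or_pos n with rfl | hn
  · have := ((tendsto_rpow_atTop hε).const_mul_atTop hc).eventually_ge_atTop 1
    simpa using this
  have hn' : (0 : ℝ) < n := by exact_mod_cast hn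
  have h1 : (fun x : ℝ => a + b * Real.log x) =o[atTop] fun x : ℝ => x ^ (ε / n) := by
    refine Asymptotics.IsLittleO.add ?_
      ((isLittleO_log_rpow_atTop (by positivity)).const_mul_left b)
    refine Asymptotics.isLittleO_const_left.mpr (Or.inr ?_)
    exact tendsto_norm_atTop_atTop.comp (tendsto_rpow_atTop (by positivity))
  have h2 := (h1.pow hn).def hc
  filter_upwards [h2, eventually_gt_atTop 0] with x hx hx0
  rw [← Real.rpow_natCast (x ^ (ε / n)), ← Real.rpow_mul hx0.le, div_mul_cancel₀ _ hn'.ne',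
    Real.norm_of_nonneg (Real.rpow_nonneg hx0.le ε)] at hx
  exact (le_abs_self _).trans hx

lemma pow_mul_one_add_pow {R : Type*} [Ring R] {N : R} {d : ℕ} (hN : N ^ (d + 2) = 0) (j : ℕ) :
    N ^ d * (1 + N) ^ j = N ^ d + j • N ^ (d + 1) := by
  induction j with
  | zero => simp
  | succ j ih =>
    rw [pow_succ, ← mul_assoc, ih, add_mul, mul_add, mul_one, ← pow_succ, smul_mul_assoc, mul_add,
      ← pow_succ, hN, mul_one, add_zero, add_smul, one_smul]
    abel

lemma volume_preimage_mulVec {n : ℕ} {M : Matrix (Fin n) (Fin n) ℝ} (hM : M.det = 1)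
    (s : Set (Fin n → ℝ)) : volume ((fun v => M *ᵥ v) ⁻¹' s) = volume s := by
  have h := Measure.addHaar_preimage_linearMap (volume : Measure (Fin n → ℝ))
    (f := Matrix.toLin' M) (by rw [LinearMap.det_toLin', hM]; exact one_ne_zero) s
  rw [LinearMap.det_toLin', hM] at h
  rw [inv_one, abs_one, ENNReal.ofReal_one, one_mul] at h
  exact h

lemma exists_pow_ne_zero_pow_succ_eq_zero {R : Type*} [Ring R] {N : R} (h : IsNilpotent N)
    (h0 : N ≠ 0) : ∃ d, N ^ (d + 1) ≠ 0 ∧ N ^ (d + 2) = 0 := by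
  classical
  have h1 : ∃ k, N ^ k = 0 := h
  have : Nontrivial R := ⟨N, 0, h0⟩
  have hk := Nat.find_spec h1
  have hmin := fun m => Nat.find_min (m := m) h1
  generalize Nat.find h1 = k at hk hmin
  match k, hk, hmin with
  | 0, hk, _ => simp at hk
  | 1, hk, _ => exact absurd (by simpa using hk) h0
  | d + 2, hk, hmin => exact ⟨d, hmin (d + 1) (by omega), hk⟩

/-- The vectors which some power `P ^ k` with `T ≤ k < 2T` brings into a small ball around
`r w₀`. -/
def hitRegion {n : ℕ} (P : Matrix (Fin n) (Fin n) ℝ) (w₀ : Fin n → ℝ) (δ r : ℝ) (T : ℕ) :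
    Set (Fin n → ℝ) :=
  ⋃ k ∈ Finset.Ico T (2 * T), (fun v => (P ^ k) *ᵥ v) ⁻¹' Metric.closedBall (r • w₀) (r * δ)

lemma measurableSet_preimage_mulVec {n : ℕ} (M : Matrix (Fin n) (Fin n) ℝ) {s : Set (Fin n → ℝ)}
    (hs : MeasurableSet s) : MeasurableSet ((fun v => M *ᵥ v) ⁻¹' s) :=
  (M.toLin'.continuous_of_finiteDimensional.measurable) hs

lemma measurableSet_hitRegion {n : ℕ} (P : Matrix (Fin n) (Fin n) ℝ) (w₀ : Fin n → ℝ) (δ r : ℝ)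
    (T : ℕ) : MeasurableSet (hitRegion P w₀ δ r T) :=
  Finset.measurableSet_biUnion _ fun _ _ =>
    measurableSet_preimage_mulVec _ Metric.isClosed_closedBall.measurableSet

lemma exists_smul_of_mem_closedBall {n : ℕ} {w₀ y : Fin n → ℝ} {δ r : ℝ} (hr : 0 < r)
    (hy : y ∈ Metric.closedBall (r • w₀) (r * δ)) : ∃ w ∈ Metric.closedBall w₀ δ, y = r • w := by
  refine ⟨r⁻¹ • y, ?_, by rw [smul_inv_smul₀ hr.ne']⟩
  rw [mem_closedBall_iff_norm] at hy ⊢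
  have : r⁻¹ • y - w₀ = r⁻¹ • (y - r • w₀) := by rw [smul_sub, inv_smul_smul₀ hr.ne']
  rw [this, norm_smul, Real.norm_of_nonneg (by positivity), inv_mul_le_iff₀ hr]
  exact hy

lemma volume_hitRegion {n d : ℕ} {P N : Matrix (Fin n) (Fin n) ℝ} (hPN : P * (1 + N) = 1)
    (hdet : P.det = 1) (hN : N ^ (d + 2) = 0) {a : Fin n} {w₀ : Fin n → ℝ} {δ : ℝ} (hδ : 0 ≤ δ)
    (hψ : ∀ w ∈ Metric.closedBall w₀ δ, 1 / 2 ≤ ((N ^ (d + 1)) *ᵥ w) a)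
    (hl : ∀ w ∈ Metric.closedBall w₀ δ, |((N ^ d) *ᵥ w) a - ((N ^ d) *ᵥ w₀) a| < 1 / 4)
    {r : ℝ} (hr : 0 < r) (T : ℕ) :
    volume (hitRegion P w₀ δ r T) = ENNReal.ofReal (T * (2 * (r * δ)) ^ n) := by
  have hdisj : ∀ k j : ℕ, 0 < j → Disjoint
      ((fun v => (P ^ k) *ᵥ v) ⁻¹' Metric.closedBall (r • w₀) (r * δ))
      ((fun v => (P ^ (k + j)) *ᵥ v) ⁻¹' Metric.closedBall (r • w₀) (r * δ)) := by
    intro k j hj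
    refine Set.disjoint_left.mpr fun x hx hx' => ?_
    obtain ⟨w, hw, e⟩ := exists_smul_of_mem_closedBall hr hx
    obtain ⟨w', hw', e'⟩ := exists_smul_of_mem_closedBall hr hx'
    have hQ : (1 + N) ^ j * P ^ j = 1 := by
      have hc : (1 + N) * P = 1 := mul_eq_one_comm.mp hPN
      have : Commute (1 + N) P := by rw [Commute, SemiconjBy, hc, hPN]
      rw [← this.mul_pow, hc, one_pow]
    have e1 : w = ((1 + N) ^ j) *ᵥ w' := by
      have : r • w = r • (((1 + N) ^ j) *ᵥ w') := by
        rw [← Matrix.mulVec_smul, ← e, ← e']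
        simp only
        rw [add_comm k j, pow_add, Matrix.mulVec_mulVec, ← mul_assoc, hQ, one_mul]
      exact smul_right_injective _ hr.ne' this
    have e2 : ((N ^ d) *ᵥ w) a = ((N ^ d) *ᵥ w') a + j * ((N ^ (d + 1)) *ᵥ w') a := by
      rw [e1, Matrix.mulVec_mulVec, pow_mul_one_add_pow hN, Matrix.add_mulVec, Pi.add_apply,
        Matrix.smul_mulVec, Pi.smul_apply, nsmul_eq_mul]
    have h1 := abs_lt.mp (hl w hw)
    have h2 := abs_lt.mp (hl w' hw')
    have h3 : (1 : ℝ) / 2 ≤ j * ((N ^ (d + 1)) *ᵥ w') a := by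
      have hj' : (1 : ℝ) ≤ j := by exact_mod_cast hj
      nlinarith [hψ w' hw']
    linarith
  have hpw : Set.PairwiseDisjoint (↑(Finset.Ico T (2 * T)))
      fun k => (fun v => (P ^ k) *ᵥ v) ⁻¹' Metric.closedBall (r • w₀) (r * δ) := by
    intro k _ k' _ hkk
    rcases lt_or_gt_of_ne hkk with h | h
    · obtain ⟨j, rfl⟩ := Nat.exists_eq_add_of_lt h
      exact hdisj k (j + 1) j.succ_pos
    · obtain ⟨j, rfl⟩ := Nat.exists_eq_add_of_lt h
      exact (hdisj k' (j + 1) j.succ_pos).symm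
  rw [hitRegion, measure_biUnion_finset hpw fun k _ =>
    measurableSet_preimage_mulVec _ Metric.isClosed_closedBall.measurableSet]
  rw [Finset.sum_congr rfl fun k _ => (volume_preimage_mulVec
      (by rw [Matrix.det_pow, hdet, one_pow])
    _).trans (Real.volume_pi_closedBall _ (by positivity)), Finset.sum_const, Nat.card_Ico,
    nsmul_eq_mul, Fintype.card_fin, ENNReal.ofReal_mul (by positivity), ENNReal.ofReal_natCast]
  congr 2
  omega

/-- For `s > -1/n`, the return set has positive measure. -/
theorem volume_isApprox_pos {n : ℕ} (hn : 2 ≤ n) {P N : Matrix (Fin n) (Fin n) ℝ}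
    (hPN : P * (1 + N) = 1) (hdet : P.det = 1) (hnil : IsNilpotent N) (hN0 : N ≠ 0) {s : ℝ}
    (hs : -1 / (n : ℝ) < s) (hs0 : s ≤ 0) : 0 < volume (matBox n ∩ {A | IsApprox P s A}) := by
  have hn' : (2 : ℝ) ≤ n := by exact_mod_cast hn
  obtain ⟨d, hd0, hd⟩ := exists_pow_ne_zero_pow_succ_eq_zero hnil hN0
  obtain ⟨a, b, hab⟩ : ∃ a b, (N ^ (d + 1)) a b ≠ 0 := by
    by_contra! h
    exact hd0 (Matrix.ext h)
  set w₀ : Fin n → ℝ := Pi.single b ((N ^ (d + 1)) a b)⁻¹ with hw₀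
  have hψ0 : ((N ^ (d + 1)) *ᵥ w₀) a = 1 := by
    rw [hw₀, Matrix.mulVec_single]
    simp [hab]
  have hcont : ∀ M : Matrix (Fin n) (Fin n) ℝ, Continuous fun w : Fin n → ℝ => (M *ᵥ w) a :=
    fun M => (continuous_apply a).comp M.toLin'.continuous_of_finiteDimensional
  obtain ⟨δ, hδ, hball⟩ : ∃ δ > 0, ∀ w ∈ Metric.closedBall w₀ δ,
      1 / 2 ≤ ((N ^ (d + 1)) *ᵥ w) a ∧ |((N ^ d) *ᵥ w) a - ((N ^ d) *ᵥ w₀) a| < 1 / 4 := by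
    refine Metric.nhds_basis_closedBall.eventually_iff.mp ?_
    refine Eventually.and ?_ ?_
    · exact ((hcont (N ^ (d + 1))).continuousAt.eventually_const_lt (by
        simp only [hψ0]; norm_num)).mono
        fun w hw => le_of_lt hw
    · have := ((hcont (N ^ d)).continuousAt (x := w₀)).eventually
        (Metric.ball_mem_nhds _ (show (0 : ℝ) < 1 / 4 by norm_num))
      simpa [Real.dist_eq] using this
  set K : ℝ := ‖w₀‖ + δ with hK
  have hK0 : 0 < K := by positivity
  have hwK : ∀ w ∈ Metric.closedBall w₀ δ, ‖w‖ ≤ K := fun w hw => by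
    rw [mem_closedBall_iff_norm] at hw
    have := norm_le_norm_add_norm_sub' w w₀
    linarith
  obtain ⟨c, hc, C, hC, hgrow⟩ := eventually_pow_growth hd a hK0
  set κ : ℝ := min 1 (c / (C * 2 ^ (d + 1))) with hκ
  have hκ0 : 0 < κ := by positivity
  obtain ⟨c₀, hc₀, hSM⟩ := exists_le_volume_hit hn hκ0 (min_le_left _ _)
  have hds : 0 < (d : ℝ) + 1 + s := by
    have : -1 / (n : ℝ) ≥ -1 / 2 := by
      rw [neg_div, neg_div]
      exact neg_le_neg (one_div_le_one_div_of_le (by norm_num) hn')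
    have : (0 : ℝ) ≤ d := by positivity
    linarith
  have hns : 0 < 1 + n * s := by
    rw [div_lt_iff₀ (by linarith)] at hs
    linarith
  have hS : Tendsto (fun T : ℝ => C * 2 ^ (d + 1) * T ^ ((d : ℝ) + 1 + s)) atTop atTop :=
    (tendsto_rpow_atTop hds).const_mul_atTop (by positivity)
  have hlog := eventually_add_log_pow_le (3 + 2 * Real.log (2 * (C * 2 ^ (d + 1))))
    (2 * ((d : ℝ) + 1 + s)) hns (show 0 < (2 * δ) ^ n by positivity) n
  have hkey : ∀ᶠ T : ℕ in atTop, c₀ ≤ volume (matBox n ∩ {A | ∃ m : Fin n → ℤ, m ≠ 0 ∧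
      comb A (realVec m) ∈ hitRegion P w₀ δ ((T : ℝ) ^ s) T}) := by
    filter_upwards [tendsto_natCast_atTop_atTop.eventually hlog,
      tendsto_natCast_atTop_atTop.eventually (hS.eventually_ge_atTop (8 * n / κ)),
      eventually_gt_atTop 0, eventually_forall_ge_atTop.mpr hgrow] with T hT1 hT2 hT0 hT3
    have hT : (0 : ℝ) < T := by exact_mod_cast hT0
    have hr : 0 < (T : ℝ) ^ s := Real.rpow_pos_of_pos hT s
    have hSe : C * 2 ^ (d + 1) * (T : ℝ) ^ ((d : ℝ) + 1 + s) =
        (T : ℝ) ^ s * (C * (2 * T) ^ (d + 1)) := by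
      rw [Real.rpow_add hT, show ((d : ℝ) + 1) = ((d + 1 : ℕ) : ℝ) by push_cast; ring,
        Real.rpow_natCast]
      ring
    refine hSM a _ _ (measurableSet_hitRegion _ _ _ _ _) hT2 ?_ ?_
    · intro x hx
      obtain ⟨k, hk, hx⟩ := Set.mem_iUnion₂.mp hx
      rw [Finset.mem_Ico] at hk
      obtain ⟨w, hw, e⟩ := exists_smul_of_mem_closedBall hr hx
      have hQ : (1 + N) ^ k * P ^ k = 1 := by
        have hc : (1 + N) * P = 1 := mul_eq_one_comm.mp hPN
        have : Commute (1 + N) P := by rw [Commute, SemiconjBy, hc, hPN]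
        rw [← this.mul_pow, hc, one_pow]
      have ex : x = (T : ℝ) ^ s • (((1 + N) ^ k) *ᵥ w) := by
        rw [← Matrix.mulVec_smul, ← e]
        simp only
        rw [Matrix.mulVec_mulVec, hQ, Matrix.one_mulVec]
      obtain ⟨h1, h2⟩ := hT3 k hk.1 w (hwK w hw) (hball w hw).1
      have hk1 : (T : ℝ) ≤ k := by exact_mod_cast hk.1
      have hk2 : (k : ℝ) ≤ 2 * T := by exact_mod_cast hk.2.le
      rw [hSe]
      constructor
      · rw [ex, norm_smul, Real.norm_of_nonneg hr.le]
        refine mul_le_mul_of_nonneg_left (h2.trans ?_) hr.le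
        gcongr
      · rw [ex, Pi.smul_apply, smul_eq_mul, abs_mul, abs_of_pos hr, mul_left_comm]
        refine mul_le_mul_of_nonneg_left (le_trans ?_ h1) hr.le
        calc κ * (C * (2 * T) ^ (d + 1)) ≤ c / (C * 2 ^ (d + 1)) * (C * (2 * T) ^ (d + 1)) := by
              gcongr
              exact min_le_right _ _
          _ = c * T ^ (d + 1) := by rw [mul_pow]; field_simp
          _ ≤ _ := by gcongr
    · rw [volume_hitRegion hPN hdet hd hδ.le (fun w hw => (hball w hw).1)
        (fun w hw => (hball w hw).2) hr]
      refine ENNReal.ofReal_le_ofReal ?_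
      have e1 : 3 + 2 * Real.log (2 * (C * 2 ^ (d + 1) * (T : ℝ) ^ ((d : ℝ) + 1 + s))) =
          3 + 2 * Real.log (2 * (C * 2 ^ (d + 1))) + 2 * ((d : ℝ) + 1 + s) * Real.log T := by
        rw [← mul_assoc 2, Real.log_mul (by positivity) (by positivity), Real.log_rpow hT]
        ring
      have e2 : (T : ℝ) * (2 * ((T : ℝ) ^ s * δ)) ^ n = (2 * δ) ^ n * (T : ℝ) ^ (1 + n * s) := by
        rw [Real.rpow_add hT, Real.rpow_one, mul_comm (n : ℝ) s, Real.rpow_mul hT.le,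
          Real.rpow_natCast, show 2 * ((T : ℝ) ^ s * δ) = 2 * δ * (T : ℝ) ^ s by ring, mul_pow]
        ring
      rw [e1, e2]
      exact hT1
  have hbox : volume (matBox n) ≠ ∞ := by
    rw [matBox, volume_pi_pi]
    exact (ENNReal.prod_lt_top fun j _ => (volume_colBox_le n j).trans_lt one_lt_top).ne
  refine lt_of_lt_of_le hc₀ ((le_measure_setOf_frequently hbox (fun T => ?_)
    (fun T => Set.inter_subset_left) hkey).trans (measure_mono ?_))
  · refine (measurableSet_matBox n).inter ?_
    have : {A : Fin n → Fin n → ℝ | ∃ m : Fin n → ℤ, m ≠ 0 ∧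
        comb A (realVec m) ∈ hitRegion P w₀ δ ((T : ℝ) ^ s) T} =
        ⋃ (m : Fin n → ℤ) (_ : m ≠ 0), (fun A => comb A (realVec m)) ⁻¹'
          hitRegion P w₀ δ ((T : ℝ) ^ s) T := by
      ext A; simp
    rw [this]
    exact MeasurableSet.iUnion fun m => MeasurableSet.iUnion fun _ =>
      measurable_comb _ (measurableSet_hitRegion _ _ _ _ _)
  · intro A hA
    refine ⟨(hA.exists).choose_spec.1, ⌈K * 2 ^ (-s)⌉₊ + 1, frequently_atTop.mpr fun k₀ => ?_⟩
    obtain ⟨T, hT, -, m, hm, hmem⟩ := (frequently_atTop.mp hA) (k₀ + 1)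
    have hT0 : (0 : ℝ) < T := by exact_mod_cast (show 0 < T by omega)
    have hr : 0 < (T : ℝ) ^ s := Real.rpow_pos_of_pos hT0 s
    obtain ⟨k, hk, hx⟩ := Set.mem_iUnion₂.mp hmem
    rw [Finset.mem_Ico] at hk
    refine ⟨k, by omega, m, hm, ?_⟩
    obtain ⟨w, hw, e⟩ := exists_smul_of_mem_closedBall hr hx
    have hk0 : (0 : ℝ) < k := by exact_mod_cast (show 0 < k by omega)
    have hk2 : (k : ℝ) ≤ 2 * T := by exact_mod_cast hk.2.le
    simp only at e
    rw [e, norm_smul, Real.norm_of_nonneg hr.le]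
    have h1 : (T : ℝ) ^ s ≤ 2 ^ (-s) * (k : ℝ) ^ s := by
      calc (T : ℝ) ^ s ≤ (k / 2) ^ s :=
            Real.rpow_le_rpow_of_nonpos (by positivity) (by linarith) hs0
        _ = _ := by
            rw [Real.div_rpow hk0.le (by norm_num), Real.rpow_neg (by norm_num)]
            field_simp
    have hks : 0 < (k : ℝ) ^ s := Real.rpow_pos_of_pos hk0 s
    calc (T : ℝ) ^ s * ‖w‖ ≤ 2 ^ (-s) * (k : ℝ) ^ s * K := by
          gcongr
          exact hwK w hw
      _ = K * 2 ^ (-s) * (k : ℝ) ^ s := by ring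
      _ < _ := by
          refine mul_lt_mul_of_pos_right ?_ hks
          push_cast
          exact (Nat.le_ceil _).trans_lt (lt_add_one _)

/-- The product of two matrices given by their columns. -/
def colMul {n : ℕ} (A g : Fin n → Fin n → ℝ) : Fin n → Fin n → ℝ := fun j => comb A (g j)

lemma comb_eq_linearCombination {n : ℕ} (g : Fin n → Fin n → ℝ) :
    comb g = Fintype.linearCombination ℝ g := rfl

lemma comb_smul {n : ℕ} (g : Fin n → Fin n → ℝ) (c : ℝ) (v : Fin n → ℝ) :
    comb g (c • v) = c • comb g v := by
  rw [comb_eq_linearCombination, map_smul]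

lemma comb_colMul {n : ℕ} (A g : Fin n → Fin n → ℝ) (v : Fin n → ℝ) :
    comb (colMul A g) v = comb A (comb g v) := by
  rw [comb_eq_linearCombination A]
  simp only [comb, colMul, map_sum, map_smul, Fintype.linearCombination_apply]

lemma comb_ne_zero {n : ℕ} {g : Fin n → Fin n → ℝ} (hg : Function.Injective (comb g))
    {v : Fin n → ℝ} (hv : v ≠ 0) : comb g v ≠ 0 := by
  rw [comb_eq_linearCombination] at hg ⊢
  exact (map_ne_zero_iff _ hg).mpr hv

lemma exists_norm_le_mul_norm_comb {n : ℕ} {g : Fin n → Fin n → ℝ}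
    (hg : Function.Injective (comb g)) : ∃ K > (0 : ℝ), ∀ v, ‖v‖ ≤ K * ‖comb g v‖ := by
  obtain ⟨K, hK, h⟩ := (Fintype.linearCombination ℝ g).exists_antilipschitzWith
    (LinearMap.ker_eq_bot.mpr hg)
  refine ⟨K, by exact_mod_cast hK, fun v => ?_⟩
  have := h.le_mul_dist v 0
  simpa [dist_eq_norm, comb_eq_linearCombination] using this

lemma exists_norm_mulVec_pow_le {n : ℕ} {N : Matrix (Fin n) (Fin n) ℝ} (hN : IsNilpotent N) :
    ∃ d : ℕ, ∃ C > (0 : ℝ), ∀ᶠ k : ℕ in atTop, ∀ w : Fin n → ℝ,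
      ‖((1 + N) ^ k) *ᵥ w‖ ≤ C * (k : ℝ) ^ d * ‖w‖ := by
  obtain ⟨d, hd⟩ := hN
  have hd1 : N ^ (d + 1) = 0 := by rw [pow_succ, hd, zero_mul]
  have hev : ∀ᶠ k : ℕ in atTop, ∀ i j, |((1 + N) ^ k) i j / (k : ℝ) ^ d| ≤ 1 := by
    simp only [eventually_all]
    intro i j
    have h := tendsto_pow_entry hd1 i j
    rw [hd, Matrix.zero_apply, zero_div] at h
    filter_upwards [h.eventually (Metric.ball_mem_nhds _ one_pos)] with k hk
    rw [dist_zero_right, Real.norm_eq_abs] at hk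
    exact hk.le
  refine ⟨d, n + 1, by positivity, ?_⟩
  filter_upwards [hev, eventually_gt_atTop 0] with k hk hk0 w
  have hk0' : (0 : ℝ) < k := by exact_mod_cast hk0
  refine (pi_norm_le_iff_of_nonneg (by positivity)).mpr fun i => ?_
  have h := abs_mulVec_sub_le ((1 + N) ^ k) 0 (ε := (k : ℝ) ^ d) i (fun b => by
    have := hk i b
    rw [abs_div, abs_of_pos (show (0 : ℝ) < (k : ℝ) ^ d by positivity),
      div_le_one (by positivity)] at this
    simpa using this) w
  rw [Matrix.zero_mulVec, Pi.zero_apply, sub_zero] at h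
  refine h.trans ?_
  gcongr
  linarith

lemma volume_norm_mulVec_lt {n : ℕ} {P : Matrix (Fin n) (Fin n) ℝ} (hP : P.det = 1) {r : ℝ}
    (hr : 0 < r) : volume {v : Fin n → ℝ | ‖P *ᵥ v‖ < r} = ENNReal.ofReal ((2 * r) ^ n) := by
  have h := volume_preimage_mulVec hP (Metric.ball 0 r)
  rw [Real.volume_pi_ball _ hr, Fintype.card_fin] at h
  rw [← h]
  congr 1
  ext v
  simp

lemma volume_exists_norm_lt_le {n : ℕ} {P : Matrix (Fin n) (Fin n) ℝ} (hP : P.det = 1)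
    {g : Fin n → Fin n → ℝ} (hg : Function.Injective (comb g)) {K : ℝ} (hK : 0 < K)
    (hKg : ∀ v, ‖v‖ ≤ K * ‖comb g v‖) {r R : ℝ} (hr : 0 < r) (hR : 1 ≤ R)
    (hQ : ∀ A ∈ matBox n, ∀ v, ‖P *ᵥ comb A (comb g v)‖ < r → ‖v‖ ≤ R) :
    volume (matBox n ∩ {A | ∃ m : Fin n → ℤ, m ≠ 0 ∧
      ‖P *ᵥ comb A (comb g (realVec m))‖ < r}) ≤
      ENNReal.ofReal ((2 * r * K) ^ n * (3 + 2 * Real.log R) ^ n) := by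
  have hmeas : MeasurableSet {v : Fin n → ℝ | ‖P *ᵥ v‖ < r} :=
    measurableSet_lt (by
      exact (continuous_norm.comp P.toLin'.continuous_of_finiteDimensional).measurable)
      measurable_const
  calc _ ≤ volume (⋃ m ∈ (intBox n R).erase 0,
        matBox n ∩ {A | comb A (comb g (realVec m)) ∈ {v : Fin n → ℝ | ‖P *ᵥ v‖ < r}}) := by
        refine measure_mono ?_
        rintro A ⟨hA, m, hm, h⟩
        refine Set.mem_iUnion₂.mpr ⟨m, Finset.mem_erase.mpr ⟨hm, ?_⟩, hA, h⟩
        exact (mem_intBox (by linarith)).mpr (hQ A hA _ h)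
    _ ≤ ∑ m ∈ (intBox n R).erase 0, ENNReal.ofReal ((2 * r * K) ^ n * (‖realVec m‖ ^ n)⁻¹) := by
        refine (measure_biUnion_finset_le _ _).trans (Finset.sum_le_sum fun m hm => ?_)
        have hm0 := realVec_ne_zero (Finset.ne_of_mem_erase hm)
        have hgm := comb_ne_zero hg hm0
        have h1 : 0 < ‖comb g (realVec m)‖ := norm_pos_iff.mpr hgm
        have h2 : 0 < ‖realVec m‖ := norm_pos_iff.mpr hm0
        refine (volume_comb_mem_le_norm hmeas hgm).trans ?_
        rw [volume_norm_mulVec_lt hP hr, ← ENNReal.ofReal_inv_of_pos (by positivity),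
          ← ENNReal.ofReal_mul (by positivity)]
        refine ENNReal.ofReal_le_ofReal ?_
        have h3 : (‖comb g (realVec m)‖)⁻¹ ≤ K * (‖realVec m‖)⁻¹ := by
          rw [← div_eq_mul_inv, inv_le_comm₀ h1 (by positivity), inv_div, div_le_iff₀ hK, mul_comm]
          exact hKg _
        rw [← inv_pow, ← inv_pow, ← mul_pow, ← mul_pow]
        refine pow_le_pow_left₀ (by positivity) ?_ n
        calc _ ≤ K * (‖realVec m‖)⁻¹ * (2 * r) := by gcongr
          _ = _ := by ring
    _ ≤ _ := by
        rw [← ENNReal.ofReal_sum_of_nonneg fun m _ => by positivity, ← Finset.mul_sum]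
        exact ENNReal.ofReal_le_ofReal
          (mul_le_mul_of_nonneg_left (sum_inv_norm_pow_le n hR) (by positivity))

/-- For `s < -1/n`, the return set is null. -/
theorem ae_not_isApprox {n : ℕ} (hn : 0 < n) {P N : Matrix (Fin n) (Fin n) ℝ}
    (hPN : P * (1 + N) = 1) (hdet : P.det = 1) (hnil : IsNilpotent N) {s : ℝ}
    (hs : s < -1 / (n : ℝ)) {g : Fin n → Fin n → ℝ} (hg : Function.Injective (comb g)) :
    ∀ᵐ A ∂(volume.restrict (matBox n)), ¬ IsApprox P s (colMul A g) := by
  have hn' : (0 : ℝ) < n := by exact_mod_cast hn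
  obtain ⟨K, hK, hKg⟩ := exists_norm_le_mul_norm_comb hg
  obtain ⟨d, D, hD, hgrow⟩ := exists_norm_mulVec_pow_le hnil
  have hs0 : s < 0 := hs.trans (by rw [neg_div]; exact neg_lt_zero.mpr (by positivity))
  have hns : n * s < -1 := by
    rw [lt_div_iff₀ hn'] at hs
    linarith
  set ε : ℝ := (-1 - n * s) / 2 with hε
  have hε0 : 0 < ε := by linarith
  simp only [IsApprox, not_exists, ae_all_iff]
  intro C
  have hC : (0 : ℝ) < C + 1 := by positivity
  set L : ℝ := max 1 (2 * K * D * (C + 1)) with hL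
  have hL1 : 1 ≤ L := le_max_left _ _
  have hlog := tendsto_natCast_atTop_atTop.eventually
    (eventually_add_log_pow_le (3 + 2 * Real.log L) (2 * d) hε0 one_pos n)
  obtain ⟨k₀, hk₀⟩ := eventually_atTop.mp (hgrow.and (hlog.and (eventually_gt_atTop 0)))
  have hbound : ∀ k : ℕ, (volume.restrict (matBox n)) {A | k₀ ≤ k ∧ ∃ m : Fin n → ℤ, m ≠ 0 ∧
      ‖(P ^ k) *ᵥ comb (colMul A g) (realVec m)‖ < (C + 1) * (k : ℝ) ^ s} ≤
      ENNReal.ofReal ((2 * K * (C + 1)) ^ n * (k : ℝ) ^ (n * s + ε)) := by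
    intro k
    by_cases hk : k₀ ≤ k
    swap
    · simp [hk]
    obtain ⟨h1, h2, h3⟩ := hk₀ k hk
    have hk1 : (1 : ℝ) ≤ k := by exact_mod_cast h3
    have hk0 : (0 : ℝ) < k := by linarith
    have hR : 1 ≤ L * (k : ℝ) ^ d := one_le_mul_of_one_le_of_one_le hL1 (one_le_pow₀ hk1)
    have hQ : ∀ A ∈ matBox n, ∀ v, ‖(P ^ k) *ᵥ comb A (comb g v)‖ < (C + 1) * (k : ℝ) ^ s →
        ‖v‖ ≤ L * (k : ℝ) ^ d := by
      intro A hA v hv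
      have hQP : (1 + N) ^ k * P ^ k = 1 := by
        have hc : (1 + N) * P = 1 := mul_eq_one_comm.mp hPN
        have : Commute (1 + N) P := by rw [Commute, SemiconjBy, hc, hPN]
        rw [← this.mul_pow, hc, one_pow]
      have h4 := h1 ((P ^ k) *ᵥ comb A (comb g v))
      rw [Matrix.mulVec_mulVec, hQP, Matrix.one_mulVec] at h4
      have h5 := half_norm_le_norm_comb hA (comb g v)
      have h6 : ‖(P ^ k) *ᵥ comb A (comb g v)‖ ≤ C + 1 := by
        refine hv.le.trans (mul_le_of_le_one_right hC.le ?_)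
        exact Real.rpow_le_one_of_one_le_of_nonpos hk1 hs0.le
      calc ‖v‖ ≤ K * ‖comb g v‖ := hKg v
        _ ≤ K * (2 * (D * (k : ℝ) ^ d * (C + 1))) := by
            gcongr
            have : D * (k : ℝ) ^ d * ‖(P ^ k) *ᵥ comb A (comb g v)‖ ≤
              D * (k : ℝ) ^ d * (C + 1) := by gcongr
            linarith
        _ = 2 * K * D * (C + 1) * (k : ℝ) ^ d := by ring
        _ ≤ _ := by
            gcongr
            exact le_max_right _ _
    have h := volume_exists_norm_lt_le (P := P ^ k) (by rw [Matrix.det_pow, hdet, one_pow]) hg hK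
      hKg (mul_pos hC (Real.rpow_pos_of_pos hk0 s)) hR hQ
    simp only [hk, true_and, comb_colMul]
    rw [Measure.restrict_apply' (measurableSet_matBox n), Set.inter_comm]
    refine h.trans (ENNReal.ofReal_le_ofReal ?_)
    have e1 : 3 + 2 * Real.log (L * (k : ℝ) ^ d) = 3 + 2 * Real.log L + 2 * d * Real.log k := by
      rw [Real.log_mul (by positivity) (by positivity), Real.log_pow]
      ring
    have e2 : (2 * ((C + 1) * (k : ℝ) ^ s) * K) ^ n =
        (2 * K * (C + 1)) ^ n * (k : ℝ) ^ (n * s) := by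
      rw [mul_comm (n : ℝ) s, Real.rpow_mul hk0.le, Real.rpow_natCast, ← mul_pow]
      ring
    rw [e1, e2, Real.rpow_add hk0, mul_assoc]
    rw [one_mul] at h2
    gcongr
  have hsum : Summable fun k : ℕ => (2 * K * (C + 1)) ^ n * (k : ℝ) ^ (n * s + ε) :=
    (Real.summable_nat_rpow.mpr (by linarith)).mul_left _
  have hbc := measure_setOfPred_frequently_eq_zero
    (ne_top_of_le_ne_top hsum.tsum_ofReal_ne_top (ENNReal.tsum_le_tsum hbound))
  refine (measure_eq_zero_iff_ae_notMem.mp hbc).mono fun A hA hfr => hA ?_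
  refine (hfr.and_eventually (eventually_ge_atTop (max k₀ 1))).mono ?_
  rintro k ⟨⟨m, hm, hlt⟩, hk⟩
  refine ⟨le_of_max_le_left hk, m, hm, hlt.trans_le ?_⟩
  have : 0 ≤ (k : ℝ) ^ s := by positivity
  nlinarith

instance isAddHaarMeasure_volume_cols (n : ℕ) :
    (volume : Measure (Fin n → Fin n → ℝ)).IsAddHaarMeasure :=
  Measure.pi.isAddHaarMeasure fun _ : Fin n => (volume : Measure (Fin n → ℝ))

instance regular_volume_cols (n : ℕ) : (volume : Measure (Fin n → Fin n → ℝ)).Regular :=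
  Measure.Regular.of_sigmaCompactSpace_of_isLocallyFiniteMeasure _

/-- The columns of the identity matrix. -/
def idCols (n : ℕ) : Fin n → Fin n → ℝ := fun j => Pi.single j 1

lemma comb_idCols {n : ℕ} (v : Fin n → ℝ) : comb (idCols n) v = v := by
  simp [comb, idCols, ← Pi.single_smul, Finset.univ_sum_single]

lemma comb_single {n : ℕ} (A : Fin n → Fin n → ℝ) (j : Fin n) : comb A (Pi.single j 1) = A j := by
  simp [comb, Pi.single_apply]

lemma colMul_idCols {n : ℕ} (A : Fin n → Fin n → ℝ) : colMul A (idCols n) = A :=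
  funext fun j => comb_single A j

lemma colMul_assoc {n : ℕ} (A B C : Fin n → Fin n → ℝ) :
    colMul (colMul A B) C = colMul A (colMul B C) :=
  funext fun j => comb_colMul A B (C j)

lemma continuous_colMul (n : ℕ) :
    Continuous fun p : (Fin n → Fin n → ℝ) × (Fin n → Fin n → ℝ) => colMul p.1 p.2 := by
  unfold colMul comb
  fun_prop

/-- Multiplication of column matrices, as a bilinear map with swapped arguments. -/
def colMulLin (n : ℕ) :
    (Fin n → Fin n → ℝ) →ₗ[ℝ] (Fin n → Fin n → ℝ) →ₗ[ℝ] (Fin n → Fin n → ℝ) :=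
  LinearMap.mk₂ ℝ (fun g A => colMul A g)
    (fun g g' A => by
      ext j i
      simp [colMul, comb, add_mul, Finset.sum_add_distrib])
    (fun c g A => by
      ext j i
      simp [colMul, comb, mul_assoc, Finset.mul_sum])
    (fun g A A' => by
      ext j i
      simp [colMul, comb, Finset.sum_add_distrib])
    (fun c g A => by
      ext j i
      simp [colMul, comb, mul_left_comm, Finset.mul_sum])

lemma exists_colMul_eq_idCols {n : ℕ} {h : Fin n → Fin n → ℝ} (hh : Function.Injective (comb h)) :
    ∃ h', colMul h h' = idCols n ∧ colMul h' h = idCols n := by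
  have hh' : Function.Injective (Fintype.linearCombination ℝ h) := hh
  set f := LinearEquiv.ofInjectiveEndo _ hh' with hf
  have hfa : ∀ v, f v = comb h v := fun v => by
    rw [hf, LinearEquiv.coe_ofInjectiveEndo, comb_eq_linearCombination]
  have h1 : ∀ v, comb (fun j => f.symm (Pi.single j 1)) v = f.symm v := by
    intro v
    conv_rhs => rw [← comb_idCols v]
    simp [comb, idCols]
  refine ⟨fun j => f.symm (Pi.single j 1), funext fun j => ?_, funext fun j => ?_⟩
  · change comb h _ = _
    rw [← hfa, f.apply_symm_apply]
    rfl
  · change comb _ (h j) = _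
    rw [h1, ← comb_single h j, ← hfa, f.symm_apply_apply]
    rfl

lemma det_colMul_right_ne_zero {n : ℕ} {g : Fin n → Fin n → ℝ}
    (hg : Function.Injective (comb g)) : LinearMap.det (colMulLin n g) ≠ 0 := by
  obtain ⟨g', hgg', -⟩ := exists_colMul_eq_idCols hg
  rw [Ne, LinearMap.det_eq_zero_iff_ker_ne_bot, not_not, LinearMap.ker_eq_bot]
  intro A B hAB
  have h : colMul A g = colMul B g := hAB
  rw [← colMul_idCols A, ← colMul_idCols B, ← hgg', ← colMul_assoc, h, colMul_assoc]

lemma det_colMul_left_ne_zero {n : ℕ} {A : Fin n → Fin n → ℝ}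
    (hA : Function.Injective (comb A)) : LinearMap.det ((colMulLin n).flip A) ≠ 0 := by
  rw [Ne, LinearMap.det_eq_zero_iff_ker_ne_bot, not_not, LinearMap.ker_eq_bot]
  intro g h hgh
  have : colMul A g = colMul A h := hgh
  exact funext fun j => hA (congrFun this j)

/-- A multiplicative Steinhaus theorem for Lebesgue measure on matrices. -/
lemma eventually_exists_mem_colMul_mem {n : ℕ} {D : Set (Fin n → Fin n → ℝ)}
    (hD : MeasurableSet D) (hD0 : 0 < volume D) :
    ∀ᶠ δ in nhds (idCols n), ∃ x ∈ D, colMul x δ ∈ D := by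
  obtain ⟨K, hKD, hK, hK0⟩ := hD.exists_lt_isCompact hD0
  obtain ⟨U, hKU, hU, hUK⟩ := K.exists_isOpen_lt_add (μ := volume) hK.measure_lt_top.ne
    (ENNReal.div_ne_zero.mpr ⟨hK0.ne', ENNReal.ofNat_ne_top⟩ : volume K / 2 ≠ 0)
  have h1 : ∀ᶠ δ in nhds (idCols n), ∀ x ∈ K, colMul x δ ∈ U := by
    refine hK.eventually_forall_of_forall_eventually fun x hx => ?_
    have hc : Continuous fun z : (Fin n → Fin n → ℝ) × (Fin n → Fin n → ℝ) => colMul z.2 z.1 :=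
      (continuous_colMul n).comp continuous_swap
    refine hc.continuousAt.eventually_mem (hU.mem_nhds ?_)
    simp only [colMul_idCols]
    exact hKU hx
  have h2 : ∀ᶠ δ in nhds (idCols n), 1 / 2 < |LinearMap.det (colMulLin n δ)| := by
    have hc : Continuous fun δ => |LinearMap.det (colMulLin n δ)| := by
      have h3 : Continuous fun δ => LinearMap.toContinuousLinearMap (colMulLin n δ) :=
        ((LinearMap.toContinuousLinearMap :
          ((Fin n → Fin n → ℝ) →ₗ[ℝ] (Fin n → Fin n → ℝ)) ≃ₗ[ℝ] _).toLinearMap ∘ₗ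
            colMulLin n).continuous_of_finiteDimensional
      exact continuous_abs.comp (ContinuousLinearMap.continuous_det.comp h3)
    refine hc.continuousAt.eventually_const_lt ?_
    have : colMulLin n (idCols n) = LinearMap.id := LinearMap.ext fun A => colMul_idCols A
    simp only [this, LinearMap.det_id]
    norm_num
  filter_upwards [h1, h2] with δ hδ1 hδ2
  by_contra! hno
  have hdisj : Disjoint (colMulLin n δ '' K) K := by
    rw [Set.disjoint_left]
    rintro _ ⟨x, hx, rfl⟩ hx'
    exact hno x (hKD hx) (hKD hx')
  have hsub : colMulLin n δ '' K ∪ K ⊆ U := by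
    refine Set.union_subset ?_ hKU
    rintro _ ⟨x, hx, rfl⟩
    exact hδ1 x hx
  have h4 := measure_mono (μ := volume) hsub
  rw [measure_union hdisj hK.measurableSet, Measure.addHaar_image_linearMap] at h4
  refine absurd (h4.trans_lt hUK) (not_lt.mpr ?_)
  rw [add_comm]
  gcongr
  rw [ENNReal.div_eq_inv_mul]
  gcongr
  rw [← ENNReal.ofReal_ofNat, ← ENNReal.ofReal_inv_of_pos (by norm_num)]
  exact ENNReal.ofReal_le_ofReal (by rw [← one_div]; exact hδ2.le)

/-- A zero-one law for sets of matrices invariant under multiplication by rational matrices. -/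
lemma volume_eq_zero_of_rat_invariant {n : ℕ} {Z W : Set (Fin n → Fin n → ℝ)}
    (hZ : MeasurableSet Z) (hW : MeasurableSet W) (hZinj : ∀ A ∈ Z, Function.Injective (comb A))
    (hWinj : ∀ A ∈ W, Function.Injective (comb A)) (hZ0 : 0 < volume Z)
    (hinv : ∀ A, ∀ q : Fin n → Fin n → ℚ, colMul A (fun i j => (q i j : ℝ)) ∈ Z → A ∉ W) :
    volume W = 0 := by
  by_cases hcase : ∀ h, volume {x | x ∈ W ∧ colMul x h ∈ Z} = 0
  · have hmeas : MeasurableSet {p : (Fin n → Fin n → ℝ) × (Fin n → Fin n → ℝ) |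
        ¬ (p.1 ∈ W ∧ colMul p.1 p.2 ∈ Z)} :=
      ((measurable_fst hW).inter ((continuous_colMul n).measurable hZ)).compl
    have h1 := (Measure.ae_ae_comm (μ := volume) (ν := volume) hmeas).mpr
      (ae_of_all _ fun h => measure_eq_zero_iff_ae_notMem.mp (hcase h))
    refine measure_eq_zero_iff_ae_notMem.mpr (h1.mono fun x hx hxW => ?_)
    have h2 : volume {h | colMul x h ∈ Z} = 0 := by
      refine measure_eq_zero_iff_ae_notMem.mpr (hx.mono fun h hh hZ => hh ⟨hxW, hZ⟩)
    have h3 := Measure.addHaar_preimage_linearMap (volume : Measure (Fin n → Fin n → ℝ))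
      (det_colMul_left_ne_zero (hWinj x hxW)) Z
    have h4 : ⇑((colMulLin n).flip x) ⁻¹' Z = {h | colMul x h ∈ Z} := rfl
    rw [h4, h2] at h3
    have hdet := det_colMul_left_ne_zero (hWinj x hxW)
    rcases mul_eq_zero.mp h3.symm with h | h
    · rw [ENNReal.ofReal_eq_zero] at h
      have : 0 < |(LinearMap.det ((colMulLin n).flip x))⁻¹| := abs_pos.mpr (inv_ne_zero hdet)
      linarith
    · exact hZ0.ne' h
  · push Not at hcase
    exfalso
    obtain ⟨h, hh⟩ := hcase
    set D := {x | x ∈ W ∧ colMul x h ∈ Z} with hDdef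
    have hD : MeasurableSet D := by
      have hc : Continuous fun x : Fin n → Fin n → ℝ => colMul x h :=
        (continuous_colMul n).comp (by fun_prop : Continuous fun x => (x, h))
      exact hW.inter (hc.measurable hZ)
    have hD0 : 0 < volume D := pos_iff_ne_zero.mpr hh
    have hhinj : Function.Injective (comb h) := by
      obtain ⟨x, hx⟩ := nonempty_of_measure_ne_zero hh
      have := hZinj _ hx.2
      have e : comb (colMul x h) = comb x ∘ comb h := funext fun v => comb_colMul x h v
      rw [e] at this
      exact this.of_comp
    obtain ⟨h', hhh', hh'h⟩ := exists_colMul_eq_idCols hhinj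
    have hc : Continuous fun γ : Fin n → Fin n → ℝ => colMul γ h' :=
      (continuous_colMul n).comp (by fun_prop : Continuous fun x => (x, h'))
    have hev : ∀ᶠ γ in nhds h, ∃ x ∈ D, colMul x (colMul γ h') ∈ D := by
      have := hc.continuousAt (x := h)
      rw [ContinuousAt, hhh'] at this
      exact this.eventually (eventually_exists_mem_colMul_mem hD hD0)
    obtain ⟨O, hO, hOo, hhO⟩ := eventually_nhds_iff.mp hev
    have hdense : DenseRange fun (q : Fin n → Fin n → ℚ) i j => ((q i j : ℚ) : ℝ) :=
      DenseRange.piMap fun i => DenseRange.piMap fun j => Rat.denseRange_cast (𝕜 := ℝ)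
    obtain ⟨q, hq⟩ := hdense.exists_mem_open hOo ⟨h, hhO⟩
    obtain ⟨x, hx, hxq⟩ := hO _ hq
    refine hinv x q ?_ hx.1
    have h5 := hxq.2
    rwa [colMul_assoc, colMul_assoc, hh'h, colMul_idCols] at h5

lemma injective_comb_of_mem_matBox {n : ℕ} {A : Fin n → Fin n → ℝ} (hA : A ∈ matBox n) :
    Function.Injective (comb A) := by
  rw [comb_eq_linearCombination]
  refine (injective_iff_map_eq_zero _).mpr fun v hv => ?_
  have h := half_norm_le_norm_comb hA v
  rw [comb_eq_linearCombination, hv, norm_zero] at h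
  exact norm_le_zero_iff.mp (by linarith)

lemma injective_comb_iff {n : ℕ} {A : Fin n → Fin n → ℝ} :
    Function.Injective (comb A) ↔ (Matrix.of A).det ≠ 0 := by
  have e : comb A = fun v => v ᵥ* (Matrix.of A) := by
    ext v i
    simp [comb, Matrix.vecMul, dotProduct]
  rw [e, ← isUnit_iff_ne_zero, ← Matrix.isUnit_iff_isUnit_det, ← Matrix.vecMul_injective_iff_isUnit]

lemma measurableSet_injective_comb (n : ℕ) :
    MeasurableSet {A : Fin n → Fin n → ℝ | Function.Injective (comb A)} := by
  have hc : Continuous fun A : Fin n → Fin n → ℝ => (Matrix.of A).det :=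
    Continuous.matrix_det continuous_id
  simp only [injective_comb_iff]
  exact (isOpen_ne.preimage hc).measurableSet

lemma measurableSet_exists_frequently {α : Type*} [MeasurableSpace α] {F : ℕ → ℕ → Set α}
    (hF : ∀ C k, MeasurableSet (F C k)) : MeasurableSet {x | ∃ C, ∃ᶠ k in atTop, x ∈ F C k} := by
  have e : {x | ∃ C, ∃ᶠ k in atTop, x ∈ F C k} = ⋃ C, ⋂ k, ⋃ i ≥ k, F C i := by
    ext x
    simp [frequently_atTop]
  rw [e]
  exact MeasurableSet.iUnion fun C => MeasurableSet.iInter fun k => MeasurableSet.iUnion fun i =>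
    MeasurableSet.iUnion fun _ => hF C i

lemma measurableSet_isApprox {n : ℕ} (P : Matrix (Fin n) (Fin n) ℝ) (s : ℝ) :
    MeasurableSet {A | IsApprox P s A} := by
  refine measurableSet_exists_frequently (F := fun C k => {A | ∃ m : Fin n → ℤ, m ≠ 0 ∧
    ‖(P ^ k) *ᵥ comb A (realVec m)‖ < C * (k : ℝ) ^ s}) fun C k => ?_
  have e : {A | ∃ m : Fin n → ℤ, m ≠ 0 ∧ ‖(P ^ k) *ᵥ comb A (realVec m)‖ < C * (k : ℝ) ^ s} =
      ⋃ (m : Fin n → ℤ) (_ : m ≠ 0), {A | ‖(P ^ k) *ᵥ comb A (realVec m)‖ < C * (k : ℝ) ^ s} := by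
    ext A; simp
  rw [e]
  refine MeasurableSet.iUnion fun m => MeasurableSet.iUnion fun _ => ?_
  have hc : Continuous fun v : Fin n → ℝ => ‖(P ^ k) *ᵥ v‖ :=
    continuous_norm.comp (P ^ k).toLin'.continuous_of_finiteDimensional
  exact measurableSet_lt (hc.measurable.comp (measurable_comb _)) measurable_const

lemma IsApprox.of_colMul_rat {n : ℕ} {P : Matrix (Fin n) (Fin n) ℝ} {s : ℝ}
    {A : Fin n → Fin n → ℝ} {q : Fin n → Fin n → ℚ}
    (hq : Function.Injective (comb fun i j => (q i j : ℝ)))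
    (h : IsApprox P s (colMul A fun i j => (q i j : ℝ))) : IsApprox P s A := by
  obtain ⟨C, hC⟩ := h
  obtain ⟨D, hD0, hD⟩ : ∃ D : ℕ, 0 < D ∧ ∀ i j, ∃ z : ℤ, (z : ℝ) = D * (q i j : ℝ) := by
    refine ⟨∏ i, ∏ j, (q i j).den, Finset.prod_pos fun i _ => Finset.prod_pos fun j _ =>
      (q i j).den_pos, fun i j => ?_⟩
    obtain ⟨e, he⟩ : (q i j).den ∣ ∏ i, ∏ j, (q i j).den :=
      (Finset.dvd_prod_of_mem (fun j => (q i j).den) (Finset.mem_univ j)).trans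
        (Finset.dvd_prod_of_mem (fun i => ∏ j, (q i j).den) (Finset.mem_univ i))
    refine ⟨e * (q i j).num, ?_⟩
    rw [he]
    have : ((q i j).num : ℝ) = (q i j).den * (q i j : ℝ) := by
      have := Rat.den_mul_eq_num (q i j)
      exact_mod_cast this.symm
    push_cast
    rw [this]
    ring
  choose z hz using hD
  have hD0' : (0 : ℝ) < D := by exact_mod_cast hD0
  refine ⟨D * C, hC.mono ?_⟩
  rintro k ⟨m, hm, hlt⟩
  have e : realVec (fun j => ∑ i, m i * z i j) =
      (D : ℝ) • comb (fun i j => (q i j : ℝ)) (realVec m) := by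
    ext j
    simp only [realVec, comb, Pi.smul_apply, smul_eq_mul, Finset.sum_apply, Finset.mul_sum]
    push_cast
    exact Finset.sum_congr rfl fun i _ => by rw [hz]; ring
  refine ⟨fun j => ∑ i, m i * z i j, ?_, ?_⟩
  · intro h0
    have h1 : realVec (fun j => ∑ i, m i * z i j) = 0 := by
      rw [h0]
      ext j
      simp [realVec]
    rw [e] at h1
    exact smul_ne_zero hD0'.ne' (comb_ne_zero hq (realVec_ne_zero hm)) h1
  · rw [e, comb_smul, Matrix.mulVec_smul, norm_smul, Real.norm_of_nonneg hD0'.le, ← comb_colMul]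
    push_cast
    rw [mul_assoc]
    exact mul_lt_mul_of_pos_left hlt hD0'

/-- For `s > -1/n`, the return set has full measure. -/
theorem ae_isApprox {n : ℕ} (hn : 2 ≤ n) {P N : Matrix (Fin n) (Fin n) ℝ}
    (hPN : P * (1 + N) = 1) (hdet : P.det = 1) (hnil : IsNilpotent N) (hN0 : N ≠ 0) {s : ℝ}
    (hs : -1 / (n : ℝ) < s) (hs0 : s ≤ 0) {g : Fin n → Fin n → ℝ}
    (hg : Function.Injective (comb g)) :
    ∀ᵐ A ∂(volume.restrict (matBox n)), IsApprox P s (colMul A g) := by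
  set W : Set (Fin n → Fin n → ℝ) :=
    {A | Function.Injective (comb A)} ∩ {A | IsApprox P s A}ᶜ with hW
  have hinjmul : ∀ A h : Fin n → Fin n → ℝ, comb (colMul A h) = comb A ∘ comb h :=
    fun A h => funext fun v => comb_colMul A h v
  have hW0 : volume W = 0 := by
    refine volume_eq_zero_of_rat_invariant
      ((measurableSet_matBox n).inter (measurableSet_isApprox P s))
      ((measurableSet_injective_comb n).inter (measurableSet_isApprox P s).compl)
      (fun A hA => injective_comb_of_mem_matBox hA.1) (fun A hA => hA.1)
      (volume_isApprox_pos hn hPN hdet hnil hN0 hs hs0) ?_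
    rintro A q ⟨hbox, happ⟩ ⟨-, hA⟩
    have := injective_comb_of_mem_matBox hbox
    rw [hinjmul] at this
    exact hA (happ.of_colMul_rat this.of_comp)
  rw [ae_restrict_iff' (measurableSet_matBox n)]
  have h0 := Measure.addHaar_preimage_linearMap (volume : Measure (Fin n → Fin n → ℝ))
    (det_colMul_right_ne_zero hg) W
  rw [hW0, mul_zero] at h0
  refine (measure_eq_zero_iff_ae_notMem.mp h0).mono fun A hA hbox => ?_
  by_contra hno
  refine hA ⟨?_, hno⟩
  change Function.Injective (comb (colMul A g))
  rw [hinjmul]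
  exact (injective_comb_of_mem_matBox hbox).comp hg

/-- The lattice `A Λ` has, for infinitely many `k`, a nonzero vector brought by `P ^ k` to norm
`O(k ^ s)`. -/
def IsApproxPair {n : ℕ} (P : Matrix (Fin n) (Fin n) ℝ) (s : ℝ) (A : Fin n → Fin n → ℝ)
    (Λ : LatticeSpace n) : Prop :=
  ∃ C : ℕ, ∃ᶠ k : ℕ in atTop, ∃ g : SLR n, (QuotientGroup.mk g : LatticeSpace n) = Λ ∧
    ∃ m : Fin n → ℤ, m ≠ 0 ∧ ‖(P ^ k) *ᵥ comb A (vecOf n g m)‖ < C * (k : ℝ) ^ s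

lemma exists_vecOf_eq {n : ℕ} {g g' : SLR n}
    (h : (QuotientGroup.mk g : LatticeSpace n) = QuotientGroup.mk g') {m : Fin n → ℤ}
    (hm : m ≠ 0) : ∃ m' : Fin n → ℤ, m' ≠ 0 ∧ vecOf n g m = vecOf n g' m' := by
  obtain ⟨γ, hγ⟩ := QuotientGroup.eq.mp h.symm
  have hg : g = g' * Matrix.SpecialLinearGroup.map (Int.castRingHom ℝ) γ := by
    rw [hγ, mul_inv_cancel_left]
  have e : vecOf n g m = vecOf n g' ((γ : Matrix (Fin n) (Fin n) ℤ) *ᵥ m) := by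
    rw [hg, vecOf, vecOf, Matrix.SpecialLinearGroup.coe_mul, ← Matrix.mulVec_mulVec]
    congr 1
    ext i
    simp [Matrix.mulVec, dotProduct]
  refine ⟨(γ : Matrix (Fin n) (Fin n) ℤ) *ᵥ m, fun h0 => hm ?_, e⟩
  have := congrArg (fun v => ((γ⁻¹ : Matrix.SpecialLinearGroup (Fin n) ℤ) :
    Matrix (Fin n) (Fin n) ℤ) *ᵥ v) h0
  simpa only [Matrix.mulVec_mulVec, ← Matrix.SpecialLinearGroup.coe_mul, inv_mul_cancel,
    Matrix.SpecialLinearGroup.coe_one, Matrix.one_mulVec, Matrix.mulVec_zero] using this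

/-- The columns of a matrix of determinant one. -/
def colsOf {n : ℕ} (g : SLR n) : Fin n → Fin n → ℝ :=
  fun j i => (g : Matrix (Fin n) (Fin n) ℝ) i j

lemma comb_eq_mulVec {n : ℕ} (A : Fin n → Fin n → ℝ) (v : Fin n → ℝ) :
    comb A v = (Matrix.of A)ᵀ *ᵥ v := by
  ext i
  simp [comb, Matrix.mulVec, dotProduct, mul_comm]

lemma comb_colsOf {n : ℕ} (g : SLR n) (v : Fin n → ℝ) :
    comb (colsOf g) v = (g : Matrix (Fin n) (Fin n) ℝ) *ᵥ v := comb_eq_mulVec _ _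

lemma comb_colMul_colsOf {n : ℕ} (A : Fin n → Fin n → ℝ) (g : SLR n) (m : Fin n → ℤ) :
    comb (colMul A (colsOf g)) (realVec m) = comb A (vecOf n g m) :=
  (comb_colMul A _ _).trans (congrArg (comb A) (comb_colsOf g _))

lemma isApproxPair_mk {n : ℕ} {P : Matrix (Fin n) (Fin n) ℝ} {s : ℝ} {A : Fin n → Fin n → ℝ}
    {g : SLR n} : IsApproxPair P s A (QuotientGroup.mk g) ↔
      IsApprox P s (colMul A (colsOf g)) := by
  refine exists_congr fun C => frequently_congr (Eventually.of_forall fun k => ?_)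
  simp only [comb_colMul_colsOf]
  constructor
  · rintro ⟨g', hg', m, hm, h⟩
    obtain ⟨m', hm', e⟩ := exists_vecOf_eq hg' hm
    rw [e] at h
    exact ⟨m', hm', h⟩
  · rintro ⟨m, hm, h⟩
    exact ⟨g, rfl, m, hm, h⟩

lemma injective_comb_colsOf {n : ℕ} (g : SLR n) : Function.Injective (comb (colsOf g)) := by
  intro v w h
  rw [comb_colsOf, comb_colsOf] at h
  have := congrArg (fun v => ((g⁻¹ : SLR n) : Matrix (Fin n) (Fin n) ℝ) *ᵥ v) h
  simpa only [Matrix.mulVec_mulVec, ← Matrix.SpecialLinearGroup.coe_mul, inv_mul_cancel,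
    Matrix.SpecialLinearGroup.coe_one, Matrix.one_mulVec] using this

instance borelSpace_latticeSpace (n : ℕ) : BorelSpace (LatticeSpace n) := ⟨rfl⟩

instance continuousMul_SLR (n : ℕ) : ContinuousMul (SLR n) := by
  refine ⟨continuous_induced_rng.mpr ?_⟩
  have h : Continuous fun g : SLR n => (g : Matrix (Fin n) (Fin n) ℝ) := continuous_induced_dom
  exact (h.comp continuous_fst).matrix_mul (h.comp continuous_snd)

lemma measurableSet_isApproxPair {n : ℕ} (P : Matrix (Fin n) (Fin n) ℝ) (s : ℝ) :
    MeasurableSet {p : (Fin n → Fin n → ℝ) × LatticeSpace n | IsApproxPair P s p.1 p.2} := by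
  refine measurableSet_exists_frequently (F := fun C k =>
    {p : (Fin n → Fin n → ℝ) × LatticeSpace n |
    ∃ g : SLR n, (QuotientGroup.mk g : LatticeSpace n) = p.2 ∧ ∃ m : Fin n → ℤ, m ≠ 0 ∧
      ‖(P ^ k) *ᵥ comb p.1 (vecOf n g m)‖ < C * (k : ℝ) ^ s}) fun C k => ?_
  have hopen : IsOpen {p : (Fin n → Fin n → ℝ) × SLR n | ∃ m : Fin n → ℤ, m ≠ 0 ∧
      ‖(P ^ k) *ᵥ comb p.1 (vecOf n p.2 m)‖ < C * (k : ℝ) ^ s} := by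
    have e : {p : (Fin n → Fin n → ℝ) × SLR n | ∃ m : Fin n → ℤ, m ≠ 0 ∧
        ‖(P ^ k) *ᵥ comb p.1 (vecOf n p.2 m)‖ < C * (k : ℝ) ^ s} =
        ⋃ (m : Fin n → ℤ) (_ : m ≠ 0), {p : (Fin n → Fin n → ℝ) × SLR n |
          ‖(P ^ k) *ᵥ comb p.1 (vecOf n p.2 m)‖ < C * (k : ℝ) ^ s} := by
      ext p; simp
    rw [e]
    refine isOpen_iUnion fun m => isOpen_iUnion fun _ => isOpen_lt ?_ continuous_const
    have h : Continuous fun g : SLR n => (g : Matrix (Fin n) (Fin n) ℝ) := continuous_induced_dom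
    have h1 : Continuous fun p : (Fin n → Fin n → ℝ) × SLR n => vecOf n p.2 m :=
      (h.comp continuous_snd).matrix_mulVec continuous_const
    have h2 : Continuous fun p : (Fin n → Fin n → ℝ) × SLR n => comb p.1 (vecOf n p.2 m) := by
      unfold comb
      refine continuous_finsetSum _ fun j _ => ?_
      exact ((continuous_apply j).comp h1).smul ((continuous_apply j).comp continuous_fst)
    exact continuous_norm.comp ((P ^ k).toLin'.continuous_of_finiteDimensional.comp h2)
  have himg := (IsOpenMap.id.prodMap
    (QuotientGroup.isOpenMap_coe (N := latticeGamma n))) _ hopen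
  convert himg.measurableSet using 1
  ext ⟨A, Λ⟩
  constructor
  · rintro ⟨g, rfl, h⟩
    exact ⟨(A, g), h, rfl⟩
  · rintro ⟨⟨A', g⟩, h, e⟩
    obtain ⟨rfl, rfl⟩ := Prod.mk.inj e
    exact ⟨g, rfl, h⟩

lemma volume_matBox_ne_zero {n : ℕ} (hn : 0 < n) : volume (matBox n) ≠ 0 := by
  have hn' : (0 : ℝ) < n := by exact_mod_cast hn
  rw [matBox, volume_pi_pi]
  refine Finset.prod_ne_zero_iff.mpr fun j _ => ?_
  rw [colBox, Real.volume_pi_closedBall _ (by positivity)]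
  exact (ENNReal.ofReal_pos.mpr (by positivity)).ne'

lemma det_pos_of_mem_matBox {n : ℕ} {A : Fin n → Fin n → ℝ} (hA : A ∈ matBox n) :
    0 < (Matrix.of A).det := by
  have hid : idCols n ∈ matBox n := fun j _ => Metric.mem_closedBall_self (by positivity)
  have hconv : Convex ℝ (matBox n) := convex_pi fun j _ => convex_closedBall _ _
  have hc : Continuous fun A : Fin n → Fin n → ℝ => (Matrix.of A).det :=
    Continuous.matrix_det continuous_id
  have hpre := hconv.isPreconnected.image _ hc.continuousOn
  have hid1 : (Matrix.of (idCols n)).det = 1 := by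
    have : Matrix.of (idCols n) = 1 := by
      ext i j
      simp [idCols, Matrix.one_apply, Pi.single_apply, eq_comm]
    rw [this, Matrix.det_one]
  by_contra! hle
  have h0 := hpre.Icc_subset (Set.mem_image_of_mem _ hA) (Set.mem_image_of_mem _ hid)
    ⟨hle, by rw [hid1]; exact zero_le_one⟩
  obtain ⟨B, hB, hB0⟩ := h0
  exact injective_comb_iff.mp (injective_comb_of_mem_matBox hB) hB0

lemma exists_smul_comb_vecOf {n : ℕ} (hn : 0 < n) {A : Fin n → Fin n → ℝ}
    (hA : 0 < (Matrix.of A).det) : ∃ c > (0 : ℝ), ∃ h : SLR n, ∀ (g : SLR n) (m : Fin n → ℤ),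
      vecOf n (h * g) m = c • comb A (vecOf n g m) := by
  have hn' : (n : ℝ) ≠ 0 := by positivity
  set c : ℝ := (Matrix.of A).det ^ (-(1 / (n : ℝ))) with hc
  have hc0 : 0 < c := Real.rpow_pos_of_pos hA _
  have hdet : (c • (Matrix.of A)ᵀ).det = 1 := by
    rw [Matrix.det_smul, Matrix.det_transpose, Fintype.card_fin, hc, ← Real.rpow_natCast,
      ← Real.rpow_mul hA.le, neg_mul, one_div, inv_mul_cancel₀ hn', Real.rpow_neg_one,
      inv_mul_cancel₀ hA.ne']
  refine ⟨c, hc0, ⟨c • (Matrix.of A)ᵀ, hdet⟩, fun g m => ?_⟩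
  rw [comb_eq_mulVec, ← Matrix.smul_mulVec, vecOf, vecOf, Matrix.mulVec_mulVec]
  rfl

lemma isApproxPair_smul_iff {n : ℕ} {P : Matrix (Fin n) (Fin n) ℝ} {s : ℝ}
    {A : Fin n → Fin n → ℝ} {c : ℝ} (hc : 0 < c) {h : SLR n}
    (hh : ∀ (g : SLR n) (m : Fin n → ℤ), vecOf n (h * g) m = c • comb A (vecOf n g m))
    (Λ : LatticeSpace n) : IsApproxPair P s (idCols n) (h • Λ) ↔ IsApproxPair P s A Λ := by
  have hnorm : ∀ (k : ℕ) (g : SLR n) (m : Fin n → ℤ),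
      ‖(P ^ k) *ᵥ comb (idCols n) (vecOf n (h * g) m)‖ =
      c * ‖(P ^ k) *ᵥ comb A (vecOf n g m)‖ := by
    intro k g m
    rw [comb_idCols, hh, Matrix.mulVec_smul, norm_smul, Real.norm_of_nonneg hc.le]
  constructor
  · rintro ⟨C, hC⟩
    refine ⟨⌈c⁻¹ * C⌉₊, hC.mono ?_⟩
    rintro k ⟨g, hg, m, hm, hlt⟩
    refine ⟨h⁻¹ * g, ?_, m, hm, ?_⟩
    · change h⁻¹ • (QuotientGroup.mk g : LatticeSpace n) = Λ
      rw [hg, inv_smul_smul]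
    · rw [← mul_inv_cancel_left h g, hnorm, ← lt_inv_mul_iff₀ hc, ← mul_assoc] at hlt
      refine hlt.trans_le ?_
      gcongr
      exact Nat.le_ceil _
  · rintro ⟨C, hC⟩
    refine ⟨⌈c * C⌉₊, hC.mono ?_⟩
    rintro k ⟨g, hg, m, hm, hlt⟩
    refine ⟨h * g, ?_, m, hm, ?_⟩
    · rw [← hg]
      rfl
    · rw [hnorm]
      refine (mul_lt_mul_of_pos_left hlt hc).trans_le ?_
      rw [← mul_assoc]
      gcongr
      exact Nat.le_ceil _

/-- Transfer of an almost sure property from matrices to the space of lattices. -/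
lemma ae_isApproxPair_of_ae_isApprox {n : ℕ} (hn : 0 < n) {μ : Measure (LatticeSpace n)}
    [IsProbabilityMeasure μ]
    (hinv : ∀ (g : SLR n) (s : Set (LatticeSpace n)), μ ((fun x => g • x) ⁻¹' s) = μ s)
    {P : Matrix (Fin n) (Fin n) ℝ} {s : ℝ} {q : Prop → Prop} (hq : q = id ∨ q = Not)
    (h : ∀ g : Fin n → Fin n → ℝ, Function.Injective (comb g) →
      ∀ᵐ A ∂(volume.restrict (matBox n)), q (IsApprox P s (colMul A g))) :
    ∀ᵐ Λ ∂μ, q (IsApproxPair P s (idCols n) Λ) := by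
  have hmeas : MeasurableSet {p : (Fin n → Fin n → ℝ) × LatticeSpace n |
      q (IsApproxPair P s p.1 p.2)} := by
    rcases hq with rfl | rfl
    · exact measurableSet_isApproxPair P s
    · exact (measurableSet_isApproxPair P s).compl
  have h1 : ∀ᵐ Λ ∂μ, ∀ᵐ A ∂(volume.restrict (matBox n)), q (IsApproxPair P s A Λ) := by
    refine ae_of_all _ fun Λ => ?_
    obtain ⟨g, rfl⟩ := QuotientGroup.mk_surjective Λ
    simp only [isApproxPair_mk]
    exact h _ (injective_comb_colsOf g)
  have h2 := (Measure.ae_ae_comm (μ := volume.restrict (matBox n)) (ν := μ) hmeas).mpr h1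
  rw [ae_restrict_iff' (measurableSet_matBox n)] at h2
  obtain ⟨A, hA, hAq⟩ : ∃ A ∈ matBox n, ∀ᵐ Λ ∂μ, q (IsApproxPair P s A Λ) := by
    by_contra hno
    exact volume_matBox_ne_zero hn (measure_eq_zero_iff_ae_notMem.mpr
      (h2.mono fun A hA hbox => hno ⟨A, hbox, hA hbox⟩))
  obtain ⟨c, hc, g, hg⟩ := exists_smul_comb_vecOf hn (det_pos_of_mem_matBox hA)
  rw [ae_iff] at hAq ⊢
  rw [← hinv g]
  simp only [Set.preimage_ofPred_eq, isApproxPair_smul_iff hc hg]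
  exact hAq

lemma norm_le_eNorm {n : ℕ} (v : Fin n → ℝ) : ‖v‖ ≤ eNorm v :=
  (pi_norm_le_iff_of_nonneg (norm_nonneg _)).mpr fun i =>
    PiLp.norm_apply_le ((WithLp.equiv 2 (Fin n → ℝ)).symm v) i

lemma eNorm_le {n : ℕ} (v : Fin n → ℝ) : eNorm v ≤ n * ‖v‖ := by
  have h := PiLp.lipschitzWith_toLp 2 (fun _ : Fin n => ℝ)
  have h1 := h.norm_sub_le v 0
  have h2 : eNorm v = ‖WithLp.toLp 2 v - WithLp.toLp 2 (0 : Fin n → ℝ)‖ := by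
    rw [WithLp.toLp_zero, sub_zero]
    rfl
  rw [h2]
  refine h1.trans ?_
  rw [sub_zero]
  gcongr
  rw [Fintype.card_fin]
  rcases Nat.eq_zero_or_pos n with rfl | hn
  · simp
  have hn1 : (1 : NNReal) ≤ n := by exact_mod_cast hn
  have : ((n : NNReal) ^ (1 / (2 : ℝ≥0∞)).toReal) ≤ (n : NNReal) ^ (1 : ℝ) :=
    NNReal.rpow_le_rpow_of_exponent_le hn1 (by simp; norm_num)
  rw [NNReal.rpow_one] at this
  exact_mod_cast this

lemma vecOf_mul {n : ℕ} (h g : SLR n) (m : Fin n → ℤ) :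
    vecOf n (h * g) m = (h : Matrix (Fin n) (Fin n) ℝ) *ᵥ vecOf n g m := by
  rw [vecOf, vecOf, Matrix.mulVec_mulVec, ← Matrix.SpecialLinearGroup.coe_mul]

/-- The nonzero vectors of a lattice are bounded away from zero. -/
lemma exists_le_norm_vecOf {n : ℕ} (Λ : LatticeSpace n) : ∃ δ > (0 : ℝ), ∀ g : SLR n,
    (QuotientGroup.mk g : LatticeSpace n) = Λ → ∀ m : Fin n → ℤ, m ≠ 0 → δ ≤ ‖vecOf n g m‖ := by
  obtain ⟨g₀, rfl⟩ := QuotientGroup.mk_surjective Λ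
  obtain ⟨K, hK, hKg⟩ := exists_norm_le_mul_norm_comb (injective_comb_colsOf g₀)
  refine ⟨K⁻¹, inv_pos.mpr hK, fun g hg m hm => ?_⟩
  obtain ⟨m', hm', e⟩ := exists_vecOf_eq hg hm
  have h := (one_le_norm_realVec hm').trans (hKg (realVec m'))
  rw [comb_colsOf] at h
  rw [e, inv_le_iff_one_le_mul₀' hK]
  exact h

lemma alpha1_le {n : ℕ} (hn : 0 < n) {Λ : LatticeSpace n} {δ : ℝ} (hδ : 0 < δ)
    (h : ∀ g : SLR n, (QuotientGroup.mk g : LatticeSpace n) = Λ → ∀ m : Fin n → ℤ, m ≠ 0 →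
      δ ≤ ‖vecOf n g m‖) : alpha1 n Λ ≤ 1 / δ := by
  obtain ⟨g, rfl⟩ := QuotientGroup.mk_surjective Λ
  refine csSup_le ?_ ?_
  · refine ⟨_, g, rfl, Pi.single ⟨0, hn⟩ 1, ?_, rfl⟩
    simp
  · rintro _ ⟨g', hg', m, hm, rfl⟩
    exact one_div_le_one_div_of_le hδ ((h g' hg' m hm).trans (norm_le_eNorm _))

lemma le_alpha1 {n : ℕ} {g : SLR n} {m : Fin n → ℤ} (hm : m ≠ 0) :
    1 / (n * ‖vecOf n g m‖) ≤ alpha1 n (QuotientGroup.mk g) := by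
  obtain ⟨δ, hδ, h⟩ := exists_le_norm_vecOf (QuotientGroup.mk g : LatticeSpace n)
  have hpos : ∀ g' : SLR n, (QuotientGroup.mk g' : LatticeSpace n) = QuotientGroup.mk g →
      ∀ m : Fin n → ℤ, m ≠ 0 → δ ≤ eNorm (vecOf n g' m) :=
    fun g' hg' m hm => (h g' hg' m hm).trans (norm_le_eNorm _)
  refine (one_div_le_one_div_of_le (hδ.trans_le (hpos g rfl m hm)) (eNorm_le _)).trans
    (le_csSup ⟨1 / δ, ?_⟩ ⟨g, rfl, m, hm, rfl⟩)
  rintro _ ⟨g', hg', m', hm', rfl⟩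
  exact one_div_le_one_div_of_le hδ (hpos g' hg' m' hm')

lemma alpha1_pos {n : ℕ} (hn : 0 < n) (Λ : LatticeSpace n) : 0 < alpha1 n Λ := by
  obtain ⟨g, rfl⟩ := QuotientGroup.mk_surjective Λ
  have hm : (Pi.single ⟨0, hn⟩ 1 : Fin n → ℤ) ≠ 0 := by simp
  obtain ⟨δ, hδ, h⟩ := exists_le_norm_vecOf (QuotientGroup.mk g : LatticeSpace n)
  have := hδ.trans_le (h g rfl _ hm)
  have hn' : (0 : ℝ) < n := by exact_mod_cast hn
  exact lt_of_lt_of_le (by positivity) (le_alpha1 hm)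

lemma exists_norm_mulVec_le {n : ℕ} {M : ℝ → Matrix (Fin n) (Fin n) ℝ} (hM : Continuous M)
    (a b : ℝ) : ∃ D > (0 : ℝ), ∀ s ∈ Set.Icc a b, ∀ v, ‖M s *ᵥ v‖ ≤ D * ‖v‖ := by
  have hc : Continuous fun s => ∑ i, ∑ j, |M s i j| :=
    continuous_finsetSum _ fun i _ => continuous_finsetSum _ fun j _ =>
      (hM.matrix_elem i j).abs
  obtain ⟨D, hD⟩ := (isCompact_Icc (a := a) (b := b)).bddAbove_image hc.continuousOn
  refine ⟨max D 1, by positivity, fun s hs v => ?_⟩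
  have hDs : ∑ i, ∑ j, |M s i j| ≤ max D 1 := (hD ⟨s, hs, rfl⟩).trans (le_max_left _ _)
  refine (pi_norm_le_iff_of_nonneg (by positivity)).mpr fun i => ?_
  calc ‖(M s *ᵥ v) i‖ = ‖∑ j, M s i j * v j‖ := rfl
    _ ≤ ∑ j, ‖M s i j * v j‖ := norm_sum_le _ _
    _ ≤ ∑ j, |M s i j| * ‖v‖ := by
        refine Finset.sum_le_sum fun j _ => ?_
        rw [norm_mul, Real.norm_eq_abs]
        gcongr
        exact norm_le_pi_norm v j
    _ = (∑ j, |M s i j|) * ‖v‖ := by rw [Finset.sum_mul]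
    _ ≤ max D 1 * ‖v‖ := by
        gcongr
        refine le_trans ?_ hDs
        exact Finset.single_le_sum (f := fun i => ∑ j, |M s i j|)
          (fun i _ => Finset.sum_nonneg fun j _ => abs_nonneg _) (Finset.mem_univ i)

lemma limsup_eq_of_eventually_of_frequently {f : ℝ → ℝ} {L : ℝ}
    (h1 : ∀ ε > 0, ∀ᶠ t in atTop, f t ≤ L + ε) (h2 : ∀ ε > 0, ∃ᶠ t in atTop, L - ε ≤ f t) :
    limsup f atTop = L := by
  refine le_antisymm (le_of_forall_pos_le_add fun ε hε => ?_)
    (le_of_forall_pos_sub_le fun ε hε => ?_)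
  · exact limsup_le_of_le (IsCoboundedUnder.of_frequently_ge (h2 1 one_pos)) (h1 ε hε)
  · exact le_limsup_of_frequently_le (h2 ε hε) ⟨L + 1, h1 1 one_pos⟩

/-- A one-parameter group sampled along an arithmetic progression. -/
lemma oneParam_natCast_mul {n : ℕ} {u : ℝ → SLR n} (hu : ∀ s t : ℝ, u (s + t) = u s * u t)
    (h0 : u 0 = 1) (t : ℝ) (k : ℕ) : u (k * t) = u t ^ k := by
  induction k with
  | zero => simp [h0]
  | succ k ih => rw [Nat.cast_succ, add_one_mul, hu, ih, pow_succ]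

lemma oneParam_zero {n : ℕ} {u : ℝ → SLR n} (hu : ∀ s t : ℝ, u (s + t) = u s * u t) :
    u 0 = 1 := by
  have h := hu 0 0
  rw [add_zero] at h
  exact left_eq_mul.mp h

lemma eventually_log_alpha1_le {n : ℕ} (hn : 0 < n) {u : ℝ → SLR n}
    (hu : ∀ s t : ℝ, u (s + t) = u s * u t)
    (hu_cont : Continuous fun t => (u t : Matrix (Fin n) (Fin n) ℝ)) {t₀ : ℝ} (ht₀ : 0 < t₀)
    {s : ℝ} (hs : s ≤ 0) {Λ : LatticeSpace n}
    (h : ¬ IsApproxPair (u t₀ : Matrix (Fin n) (Fin n) ℝ) s (idCols n) Λ) {ε : ℝ} (hε : 0 < ε) :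
    ∀ᶠ t in atTop, Real.log (alpha1 n (u t • Λ)) / Real.log t ≤ -s + ε := by
  obtain ⟨D, hD, hDu⟩ := exists_norm_mulVec_le hu_cont (-t₀) 0
  have hev : ∀ᶠ k : ℕ in atTop, ∀ g : SLR n, (QuotientGroup.mk g : LatticeSpace n) = Λ →
      ∀ m : Fin n → ℤ, m ≠ 0 →
        (k : ℝ) ^ s ≤ ‖((u t₀ : Matrix (Fin n) (Fin n) ℝ) ^ k) *ᵥ vecOf n g m‖ := by
    have := not_exists.mp h 1
    rw [not_frequently] at this
    filter_upwards [this] with k hk g hg m hm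
    by_contra! hlt
    exact hk ⟨g, hg, m, hm, by rwa [comb_idCols, Nat.cast_one, one_mul]⟩
  have hfloor : Tendsto (fun t : ℝ => ⌊t / t₀⌋₊) atTop atTop :=
    tendsto_nat_floor_atTop.comp (tendsto_id.atTop_div_const ht₀)
  have hlim : Tendsto (fun t => (Real.log D + s * Real.log t₀) / Real.log t) atTop (nhds 0) :=
    tendsto_const_nhds.div_atTop tendsto_log_atTop
  filter_upwards [hfloor.eventually hev, hlim.eventually_le_const hε, eventually_gt_atTop 1,
    hfloor.eventually (eventually_ge_atTop 1)] with t ht hlt ht1 hk1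
  set k := ⌊t / t₀⌋₊ with hk
  have ht0 : 0 < t := one_pos.trans ht1
  have hlog : 0 < Real.log t := Real.log_pos ht1
  have hk0 : (0 : ℝ) < k := by exact_mod_cast hk1
  have hkle : (k : ℝ) ≤ t / t₀ := Nat.floor_le (by positivity)
  have hlek : t / t₀ < k + 1 := Nat.lt_floor_add_one _
  have hmem : k * t₀ - t ∈ Set.Icc (-t₀) 0 := by
    rw [le_div_iff₀ ht₀] at hkle
    rw [div_lt_iff₀ ht₀] at hlek
    constructor <;> linarith
  have halpha : alpha1 n (u t • Λ) ≤ 1 / ((k : ℝ) ^ s / D) := by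
    refine alpha1_le hn (by positivity) fun g hg m hm => ?_
    have hg' : (QuotientGroup.mk ((u t)⁻¹ * g) : LatticeSpace n) = Λ := by
      change (u t)⁻¹ • (QuotientGroup.mk g : LatticeSpace n) = Λ
      rw [hg, inv_smul_smul]
    have h1 := ht _ hg' m hm
    have h2 : u t₀ ^ k * (u t)⁻¹ = u (k * t₀ - t) := by
      rw [← oneParam_natCast_mul hu (oneParam_zero hu), mul_inv_eq_iff_eq_mul, ← hu, sub_add_cancel]
    rw [← Matrix.SpecialLinearGroup.coe_pow, ← vecOf_mul, ← mul_assoc, h2, vecOf_mul] at h1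
    rw [div_le_iff₀' hD]
    exact h1.trans (hDu _ hmem _)
  rw [div_le_iff₀ hlog]
  have h3 := Real.log_le_log (alpha1_pos hn _) halpha
  rw [one_div_div, Real.log_div hD.ne' (by positivity), Real.log_rpow hk0] at h3
  have h4 : Real.log k ≤ Real.log t - Real.log t₀ := by
    rw [← Real.log_div ht0.ne' ht₀.ne']
    exact Real.log_le_log hk0 hkle
  rw [div_le_iff₀ hlog] at hlt
  nlinarith [mul_le_mul_of_nonneg_left h4 (neg_nonneg.mpr hs)]

lemma frequently_le_log_alpha1 {n : ℕ} (hn : 0 < n) {u : ℝ → SLR n}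
    (hu : ∀ s t : ℝ, u (s + t) = u s * u t) {t₀ : ℝ} (ht₀ : 0 < t₀) {s : ℝ} {Λ : LatticeSpace n}
    (h : IsApproxPair (u t₀ : Matrix (Fin n) (Fin n) ℝ) s (idCols n) Λ) {ε : ℝ} (hε : 0 < ε) :
    ∃ᶠ t in atTop, -s - ε ≤ Real.log (alpha1 n (u t • Λ)) / Real.log t := by
  obtain ⟨C, hC⟩ := h
  have hn' : (0 : ℝ) < n := by exact_mod_cast hn
  have htend : Tendsto (fun k : ℕ => (k : ℝ) * t₀) atTop atTop :=
    tendsto_natCast_atTop_atTop.atTop_mul_const ht₀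
  have hlim : Tendsto (fun t => (Real.log (n * C) - s * Real.log t₀) / Real.log t) atTop
      (nhds 0) := tendsto_const_nhds.div_atTop tendsto_log_atTop
  refine htend.frequently ((hC.and_eventually ((htend.eventually
    ((hlim.eventually_le_const hε).and (eventually_gt_atTop 1))).and
      (eventually_ge_atTop 1))).mono ?_)
  rintro k ⟨⟨g, rfl, m, hm, hlt⟩, ⟨hle, ht1⟩, hk1⟩
  have hk0 : (0 : ℝ) < k := by exact_mod_cast hk1
  have hlog : 0 < Real.log (k * t₀) := Real.log_pos ht1
  rw [comb_idCols, ← Matrix.SpecialLinearGroup.coe_pow, ← vecOf_mul,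
    ← oneParam_natCast_mul hu (oneParam_zero hu)] at hlt
  have hCpos : (0 : ℝ) < C :=
    pos_of_mul_pos_left ((norm_nonneg _).trans_lt hlt) (Real.rpow_nonneg hk0.le s)
  obtain ⟨δ, hδ, hδv⟩ := exists_le_norm_vecOf
    (QuotientGroup.mk (u (k * t₀) * g) : LatticeSpace n)
  have hv := hδ.trans_le (hδv _ rfl m hm)
  have h1 : 1 / (n * (C * (k : ℝ) ^ s)) ≤
      alpha1 n (u (k * t₀) • (QuotientGroup.mk g : LatticeSpace n)) :=
    (one_div_le_one_div_of_le (by positivity) (by gcongr)).trans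
      (le_alpha1 (g := u (k * t₀) * g) hm)
  have h2 := Real.log_le_log (by positivity) h1
  rw [one_div, Real.log_inv, ← mul_assoc, Real.log_mul (by positivity) (by positivity),
    Real.log_rpow hk0] at h2
  have h3 : Real.log (k * t₀) = Real.log k + Real.log t₀ := Real.log_mul hk0.ne' ht₀.ne'
  rw [div_le_iff₀ hlog] at hle
  rw [le_div_iff₀ hlog]
  have h4 : s * Real.log (k * t₀) = s * Real.log k + s * Real.log t₀ := by rw [h3, mul_add]
  linarith

lemma limsup_log_alpha1 {n : ℕ} (hn : 0 < n) {u : ℝ → SLR n}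
    (hu : ∀ s t : ℝ, u (s + t) = u s * u t)
    (hu_cont : Continuous fun t => (u t : Matrix (Fin n) (Fin n) ℝ)) {t₀ : ℝ} (ht₀ : 0 < t₀)
    {Λ : LatticeSpace n}
    (h1 : ∀ j : ℕ, ¬ IsApproxPair (u t₀ : Matrix (Fin n) (Fin n) ℝ)
      (-1 / (n : ℝ) - 1 / ((j + n : ℕ) : ℝ)) (idCols n) Λ)
    (h2 : ∀ j : ℕ, IsApproxPair (u t₀ : Matrix (Fin n) (Fin n) ℝ)
      (-1 / (n : ℝ) + 1 / ((j + n : ℕ) : ℝ)) (idCols n) Λ) :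
    limsup (fun t : ℝ => Real.log (alpha1 n (u t • Λ)) / Real.log t) atTop = 1 / (n : ℝ) := by
  have hn' : (0 : ℝ) < n := by exact_mod_cast hn
  have hsmall : ∀ ε > (0 : ℝ), ∃ j : ℕ, 1 / ((j + n : ℕ) : ℝ) ≤ ε := by
    intro ε hε
    obtain ⟨j, hj⟩ := exists_nat_one_div_lt hε
    refine ⟨j, le_trans ?_ hj.le⟩
    have : j + 1 ≤ j + n := by omega
    exact one_div_le_one_div_of_le (by positivity) (by exact_mod_cast this)
  refine limsup_eq_of_eventually_of_frequently (fun ε hε => ?_) fun ε hε => ?_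
  · obtain ⟨j, hj⟩ := hsmall (ε / 2) (half_pos hε)
    have hs : -1 / (n : ℝ) - 1 / ((j + n : ℕ) : ℝ) ≤ 0 := by
      rw [neg_div]
      have : 0 ≤ 1 / (n : ℝ) := by positivity
      have : 0 ≤ 1 / ((j + n : ℕ) : ℝ) := by positivity
      linarith
    filter_upwards [eventually_log_alpha1_le hn hu hu_cont ht₀ hs (h1 j) (half_pos hε)] with t ht
    refine ht.trans ?_
    rw [neg_div]
    linarith
  · obtain ⟨j, hj⟩ := hsmall (ε / 2) (half_pos hε)
    refine (frequently_le_log_alpha1 hn hu ht₀ (h2 j) (half_pos hε)).mono fun t ht => ?_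
    refine le_trans ?_ ht
    rw [neg_div]
    linarith

/-- **Logarithm law for unipotent flows.** For a nontrivial one-parameter unipotent subgroup
`{u_t}` of `SL(n,ℝ)`, for almost every unimodular lattice `Λ`,
`limsup_{t→∞} log α₁(u_t Λ)/log t = 1/n`. -/
theorem unipotent_logarithm_law (n : ℕ) (hn : 2 ≤ n)
    (μ : Measure (LatticeSpace n)) [IsProbabilityMeasure μ]
    (hinv : ∀ (g : SLR n) (s : Set (LatticeSpace n)), μ ((fun x => g • x) ⁻¹' s) = μ s)
    (u : ℝ → SLR n) (hu_hom : ∀ s t : ℝ, u (s + t) = u s * u t)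
    (hu_cont : Continuous fun t => (u t : Matrix (Fin n) (Fin n) ℝ))
    (hu_unip : ∀ t, IsNilpotent ((u t : Matrix (Fin n) (Fin n) ℝ) - 1))
    (hu_ne : ∃ t, u t ≠ 1) :
    ∀ᵐ Λ ∂μ, Filter.limsup
        (fun t : ℝ => Real.log (alpha1 n (u t • Λ)) / Real.log t) atTop = 1 / (n : ℝ) := by
  have hn0 : 0 < n := by omega
  have h0 : u 0 = 1 := oneParam_zero hu_hom
  have hneg : ∀ t, u (-t) * u t = 1 := fun t => by rw [← hu_hom, neg_add_cancel, h0]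
  obtain ⟨t₀, ht₀, hne⟩ : ∃ t₀ > (0 : ℝ), u t₀ ≠ 1 := by
    obtain ⟨t, ht⟩ := hu_ne
    rcases lt_trichotomy t 0 with hlt | rfl | hgt
    · refine ⟨-t, neg_pos.mpr hlt, fun h => ht ?_⟩
      simpa [h] using hneg t
    · exact absurd h0 ht
    · exact ⟨t, hgt, ht⟩
  set N : Matrix (Fin n) (Fin n) ℝ := (u (-t₀) : Matrix (Fin n) (Fin n) ℝ) - 1 with hN
  have hPN : (u t₀ : Matrix (Fin n) (Fin n) ℝ) * (1 + N) = 1 := by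
    rw [hN, add_sub_cancel, ← Matrix.SpecialLinearGroup.coe_mul, ← hu_hom, add_neg_cancel, h0,
      Matrix.SpecialLinearGroup.coe_one]
  have hN0 : N ≠ 0 := by
    intro hzero
    rw [hzero, add_zero, mul_one] at hPN
    exact hne (Subtype.ext hPN)
  have hdet := (u t₀).det_coe
  have hj : ∀ j : ℕ, (0 : ℝ) < 1 / ((j + n : ℕ) : ℝ) := fun j => by positivity
  have h1 : ∀ᵐ Λ ∂μ, ∀ j : ℕ, ¬ IsApproxPair (u t₀ : Matrix (Fin n) (Fin n) ℝ)
      (-1 / (n : ℝ) - 1 / ((j + n : ℕ) : ℝ)) (idCols n) Λ :=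
    ae_all_iff.mpr fun j => ae_isApproxPair_of_ae_isApprox hn0 hinv (Or.inr rfl) fun g hg =>
      ae_not_isApprox hn0 hPN hdet (hu_unip _) (sub_lt_self _ (hj j)) hg
  have h2 : ∀ᵐ Λ ∂μ, ∀ j : ℕ, IsApproxPair (u t₀ : Matrix (Fin n) (Fin n) ℝ)
      (-1 / (n : ℝ) + 1 / ((j + n : ℕ) : ℝ)) (idCols n) Λ := by
    refine ae_all_iff.mpr fun j => ae_isApproxPair_of_ae_isApprox (q := id) hn0 hinv (Or.inl rfl)
      fun g hg => ae_isApprox hn hPN hdet (hu_unip _) hN0 (lt_add_of_pos_right _ (hj j)) ?_ hg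
    have hnj : 1 / ((j + n : ℕ) : ℝ) ≤ 1 / (n : ℝ) :=
      one_div_le_one_div_of_le (by positivity) (by exact_mod_cast Nat.le_add_left n j)
    rw [neg_div]
    linarith
  filter_upwards [h1, h2] with Λ hΛ1 hΛ2
  exact limsup_log_alpha1 hn0 hu_hom hu_cont ht₀ hΛ1 hΛ2
end
end

section
/- Let s be an irrational real number with approximation exponent μ(s) = sup{ν : |s - p/q| < q^{-ν} has infinitely many rational solutions p/q}. Let Λ_s = [[1,0],[s,1]]·ℤ² and h_t = [[1,t],[0,1]]. Then limsup_{|t|→∞} log α₁(h_t Λ_s)/log|t| = 1 - 1/μ(s). -/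
open MeasureTheory Filter Matrix Real ENNReal

noncomputable section

/-- The horocycle matrix `h_t = [[1,t],[0,1]]`. -/
def hMat (t : ℝ) : SLR 2 := ⟨!![1, t; 0, 1], by simp [Matrix.det_fin_two_of]⟩

/-- The matrix `[[1,0],[s,1]]`, so that `gMat s · ℤ² = Λ_s = {(m, sm+n)}`. -/
def gMat (s : ℝ) : SLR 2 := ⟨!![1, 0; s, 1], by simp [Matrix.det_fin_two_of]⟩

/-- The point `Λ_s` of the space of lattices. -/
def LambdaS (s : ℝ) : LatticeSpace 2 := QuotientGroup.mk (gMat s)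

/-- The approximation exponent `μ(s)`, valued in `[0,∞]`:
the sup of all `ν` such that `|s - p/q| < q^{-ν}` has infinitely many rational solutions. -/
def approxExp (s : ℝ) : ℝ≥0∞ :=
  ⨆ (ν : ℝ) (_ : {pq : ℤ × ℕ+ |
    |s - (pq.1 : ℝ) / ((pq.2 : ℕ) : ℝ)| < ((pq.2 : ℕ) : ℝ) ^ (-ν)}.Infinite),
    ENNReal.ofReal ν

theorem exists_vecOf_eq_of_mk_eq {n : ℕ} {g g' : SLR n}
    (h : (QuotientGroup.mk g' : LatticeSpace n) = QuotientGroup.mk g)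
    {m : Fin n → ℤ} (hm : m ≠ 0) :
    ∃ m' : Fin n → ℤ, m' ≠ 0 ∧ vecOf n g' m = vecOf n g m' := by
  obtain ⟨γ, hγ⟩ := QuotientGroup.eq.1 h.symm
  have hg : g' = g * Matrix.SpecialLinearGroup.map (Int.castRingHom ℝ) γ := by
    rw [hγ]; group
  refine ⟨(γ : Matrix (Fin n) (Fin n) ℤ).mulVec m, fun h0 => hm ?_, ?_⟩
  · exact Matrix.eq_zero_of_mulVec_eq_zero (by simp) h0
  · have hcast : (fun i => (((γ : Matrix (Fin n) (Fin n) ℤ).mulVec m) i : ℝ)) =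
        ((γ : Matrix (Fin n) (Fin n) ℤ).map (Int.castRingHom ℝ)).mulVec
          (fun i => (m i : ℝ)) := by
      ext i
      simp [Matrix.mulVec, dotProduct]
    rw [vecOf, vecOf, hcast, Matrix.mulVec_mulVec, hg]
    rfl

theorem alpha1_mk_le {n : ℕ} {g : SLR n} {C : ℝ} (hC : 0 ≤ C)
    (h : ∀ m : Fin n → ℤ, m ≠ 0 → 1 / eNorm (vecOf n g m) ≤ C) :
    alpha1 n (QuotientGroup.mk g) ≤ C := by
  refine Real.sSup_le ?_ hC
  rintro r ⟨g', hg', m, hm, rfl⟩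
  obtain ⟨m', hm', e⟩ := exists_vecOf_eq_of_mk_eq hg' hm
  rw [e]
  exact h m' hm'

theorem le_alpha1_mk {n : ℕ} {g : SLR n} {C : ℝ}
    (h : ∀ m : Fin n → ℤ, m ≠ 0 → 1 / eNorm (vecOf n g m) ≤ C)
    {m : Fin n → ℤ} (hm : m ≠ 0) :
    1 / eNorm (vecOf n g m) ≤ alpha1 n (QuotientGroup.mk g) := by
  refine le_csSup ⟨C, ?_⟩ ⟨g, rfl, m, hm, rfl⟩
  rintro r ⟨g', hg', m, hm, rfl⟩
  obtain ⟨m', hm', e⟩ := exists_vecOf_eq_of_mk_eq hg' hm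
  rw [e]
  exact h m' hm'

theorem eNorm_vecOf_hMat_mul_gMat (s t : ℝ) (m : Fin 2 → ℤ) :
    eNorm (vecOf 2 (hMat t * gMat s) m) =
      √((m 0 + t * (s * m 0 + m 1)) ^ 2 + (s * m 0 + m 1) ^ 2) := by
  have h : ((hMat t * gMat s : SLR 2) : Matrix (Fin 2) (Fin 2) ℝ) =
      !![1, t; 0, 1] * !![1, 0; s, 1] := rfl
  rw [eNorm, vecOf, EuclideanSpace.norm_eq, h]
  simp only [WithLp.equiv_symm_apply, Fin.sum_univ_two, Real.norm_eq_abs, sq_abs,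
    Matrix.mul_fin_two, Matrix.mulVec, dotProduct, Matrix.of_apply, Matrix.cons_val_zero,
    Matrix.cons_val_one]
  ring_nf

theorem abs_fst_le_eNorm (s t : ℝ) (m : Fin 2 → ℤ) :
    |m 0 + t * (s * m 0 + m 1)| ≤ eNorm (vecOf 2 (hMat t * gMat s) m) := by
  rw [eNorm_vecOf_hMat_mul_gMat]
  exact Real.abs_le_sqrt (by nlinarith [sq_nonneg (s * m 0 + m 1)])

theorem abs_snd_le_eNorm (s t : ℝ) (m : Fin 2 → ℤ) :
    |s * m 0 + m 1| ≤ eNorm (vecOf 2 (hMat t * gMat s) m) := by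
  rw [eNorm_vecOf_hMat_mul_gMat]
  exact Real.abs_le_sqrt (by nlinarith [sq_nonneg (m 0 + t * (s * m 0 + m 1))])

theorem one_le_abs_intCast {k : ℤ} (hk : k ≠ 0) : (1 : ℝ) ≤ |(k : ℝ)| := by
  exact_mod_cast Int.one_le_abs hk

theorem one_le_eNorm_of_fst_eq_zero (s t : ℝ) {m : Fin 2 → ℤ} (hm : m ≠ 0) (h0 : m 0 = 0) :
    1 ≤ eNorm (vecOf 2 (hMat t * gMat s) m) := by
  have h1 : m 1 ≠ 0 := fun h1 => hm (by ext i; fin_cases i <;> simp [h0, h1])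
  have := abs_snd_le_eNorm s t m
  simp only [h0, Int.cast_zero, mul_zero, zero_add] at this
  exact (one_le_abs_intCast h1).trans this

theorem one_div_eNorm_le (s t : ℝ) (m : Fin 2 → ℤ) (hm : m ≠ 0) :
    1 / eNorm (vecOf 2 (hMat t * gMat s) m) ≤ 1 + |t| := by
  have hx := abs_fst_le_eNorm s t m
  have hy := abs_snd_le_eNorm s t m
  have hz := one_le_eNorm_of_fst_eq_zero s t hm
  set r := eNorm (vecOf 2 (hMat t * gMat s) m)
  have ht := abs_nonneg t
  have hr : 1 ≤ (1 + |t|) * r := by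
    by_cases h0 : m 0 = 0
    · nlinarith [hz h0]
    · have h1 := one_le_abs_intCast h0
      have h2 := abs_sub (m 0 + t * (s * m 0 + m 1) : ℝ) (t * (s * m 0 + m 1))
      rw [add_sub_cancel_right, abs_mul] at h2
      nlinarith [mul_le_mul_of_nonneg_left hy ht]
  have hr0 : 0 < r := pos_of_mul_pos_right (by linarith) (by linarith : (0 : ℝ) ≤ 1 + |t|)
  rwa [div_le_iff₀ hr0]

theorem Irrational.mul_intCast_add_intCast_ne_zero {s : ℝ} (hs : Irrational s) {q : ℤ}
    (hq : q ≠ 0) (p : ℤ) : s * q + p ≠ 0 :=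
  ((hs.mul_intCast hq).add_intCast p).ne_zero

theorem alpha1_horocycle_pos {s : ℝ} (hs : Irrational s) (t : ℝ) :
    0 < alpha1 2 (QuotientGroup.mk (hMat t * gMat s)) := by
  have hm : (![1, 0] : Fin 2 → ℤ) ≠ 0 := fun h => by simpa using congrFun h 0
  refine lt_of_lt_of_le ?_ (le_alpha1_mk (one_div_eNorm_le s t) hm)
  have h := abs_snd_le_eNorm s t ![1, 0]
  have h2 : 0 < |s * ((![1, 0] : Fin 2 → ℤ) 0 : ℤ) + ((![1, 0] : Fin 2 → ℤ) 1 : ℤ)| :=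
    abs_pos.2 (hs.mul_intCast_add_intCast_ne_zero (by simp) _)
  exact one_div_pos.2 (h2.trans_le h)

/-- The pairs `(p, q)` with `|s - p / q| < q ^ (-ν)`. -/
def approxSet (s ν : ℝ) : Set (ℤ × ℕ+) :=
  {pq : ℤ × ℕ+ | |s - (pq.1 : ℝ) / ((pq.2 : ℕ) : ℝ)| < ((pq.2 : ℕ) : ℝ) ^ (-ν)}

theorem exists_mul_rpow_le_abs {s ν : ℝ} (hs : Irrational s) (hfin : (approxSet s ν).Finite) :
    ∃ c : ℝ, 0 < c ∧ ∀ q p : ℤ, q ≠ 0 → c * |(q : ℝ)| ^ (1 - ν) ≤ |s * q + p| := by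
  let w : ℤ × ℕ+ → ℝ := fun a => |s * (a.2 : ℕ) - a.1| / ((a.2 : ℕ) : ℝ) ^ (1 - ν)
  have hw : ∀ a, 0 < w a := fun a => by
    have hq : (0 : ℝ) < ((a.2 : ℕ) : ℝ) := by exact_mod_cast a.2.pos
    have h := hs.mul_intCast_add_intCast_ne_zero (q := ((a.2 : ℕ) : ℤ))
      (by exact_mod_cast a.2.ne_zero) (-a.1)
    push_cast at h
    rw [← sub_eq_add_neg] at h
    exact div_pos (abs_pos.2 h) (Real.rpow_pos_of_pos hq _)
  obtain ⟨a, -, ha⟩ := Set.exists_min_image (insert (0, 1) (approxSet s ν)) w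
    (hfin.insert _) (Set.insert_nonempty _ _)
  have key : ∀ (p : ℤ) (q : ℕ+),
      min (w a) 1 * ((q : ℕ) : ℝ) ^ (1 - ν) ≤ |s * (q : ℕ) - p| := by
    intro p q
    have hq : (0 : ℝ) < ((q : ℕ) : ℝ) := by exact_mod_cast q.pos
    rw [← le_div_iff₀ (Real.rpow_pos_of_pos hq _)]
    by_cases hpq : (p, q) ∈ approxSet s ν
    · exact (min_le_left _ _).trans (ha _ (Set.mem_insert_of_mem _ hpq))
    · refine (min_le_right _ _).trans ?_
      have h : ((q : ℕ) : ℝ) ^ (-ν) ≤ |s - p / ((q : ℕ) : ℝ)| := not_lt.1 hpq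
      rw [le_div_iff₀ (Real.rpow_pos_of_pos hq _), one_mul, sub_eq_add_neg,
        Real.rpow_add hq, Real.rpow_one]
      calc ((q : ℕ) : ℝ) * ((q : ℕ) : ℝ) ^ (-ν) ≤ ((q : ℕ) : ℝ) * |s - p / ((q : ℕ) : ℝ)| := by
            gcongr
        _ = |s * (q : ℕ) - p| := by
            rw [← abs_of_pos hq, ← abs_mul, abs_of_pos hq]
            congr 1
            field_simp
  refine ⟨min (w a) 1, lt_min (hw a) one_pos, fun q p hq => ?_⟩
  have hn : 0 < q.natAbs := Int.natAbs_pos.2 hq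
  have hc : ((q.natAbs : ℕ) : ℝ) = |(q : ℝ)| := by
    rw [Nat.cast_natAbs, Int.cast_abs]
  rcases le_total 0 q with h | h
  · have := key (-p) ⟨q.natAbs, hn⟩
    simp only [PNat.mk_coe, hc] at this
    have hq' : |(q : ℝ)| = q := abs_of_nonneg (by exact_mod_cast h)
    rw [hq'] at this ⊢
    simpa using this
  · have := key p ⟨q.natAbs, hn⟩
    simp only [PNat.mk_coe, hc] at this
    have hq' : |(q : ℝ)| = -q := abs_of_nonpos (by exact_mod_cast h)
    rw [hq'] at this ⊢
    rw [← abs_neg (s * q + p)]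
    convert this using 2
    ring

theorem one_div_le_mul_rpow {c ν k T y r : ℝ} (hc : 0 < c) (hν : 1 ≤ ν) (hk : 1 ≤ k)
    (hT : 1 ≤ T) (hr : 0 < r) (hxr : k ≤ r + T * r) (hyr : y ≤ r) (hy : c * k ^ (1 - ν) ≤ y) :
    1 / r ≤ (2 + (2 ^ (ν - 1) / c) ^ ν⁻¹) * T ^ (1 - ν⁻¹) := by
  have hν0 : 0 < ν := by linarith
  have hT0 : 0 < T := by linarith
  have hk0 : 0 < k := by linarith
  have hκ : 0 ≤ 1 - ν⁻¹ := sub_nonneg.2 (inv_le_one_of_one_le₀ hν)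
  have hTκ : 1 ≤ T ^ (1 - ν⁻¹) := Real.one_le_rpow hT hκ
  have hB : 0 ≤ (2 ^ (ν - 1) / c) ^ ν⁻¹ := by positivity
  have hkr : k ≤ 2 * T * r := by nlinarith
  have h1 : c ≤ r * (2 * T * r) ^ (ν - 1) := by
    calc c = c * k ^ (1 - ν) * k ^ (ν - 1) := by
          rw [mul_assoc, ← Real.rpow_add hk0]; simp
      _ ≤ r * (2 * T * r) ^ (ν - 1) := by
          gcongr
          exact hy.trans hyr
  have h2 : r * (2 * T * r) ^ (ν - 1) = 2 ^ (ν - 1) * T ^ (ν - 1) * r ^ ν := by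
    rw [Real.mul_rpow (by positivity) hr.le, Real.mul_rpow (by norm_num) hT0.le,
      Real.rpow_sub_one hr.ne' ν]
    field_simp
  have h3 : (1 / r) ^ ν ≤ 2 ^ (ν - 1) / c * T ^ (ν - 1) := by
    rw [h2] at h1
    rw [Real.div_rpow zero_le_one hr.le, Real.one_rpow, div_le_iff₀ (by positivity)]
    rw [div_mul_eq_mul_div, div_mul_eq_mul_div, le_div_iff₀ hc, one_mul]
    exact h1
  calc 1 / r = ((1 / r) ^ ν) ^ ν⁻¹ := (Real.rpow_rpow_inv (by positivity) hν0.ne').symm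
    _ ≤ (2 ^ (ν - 1) / c * T ^ (ν - 1)) ^ ν⁻¹ := by gcongr
    _ = (2 ^ (ν - 1) / c) ^ ν⁻¹ * T ^ (1 - ν⁻¹) := by
        rw [Real.mul_rpow (by positivity) (by positivity), ← Real.rpow_mul hT0.le,
          sub_mul, mul_inv_cancel₀ hν0.ne', one_mul]
    _ ≤ _ := by gcongr; linarith

theorem alpha1_horocycle_le_mul_rpow {s ν : ℝ} (hs : Irrational s) (hν : 1 ≤ ν)
    (hfin : (approxSet s ν).Finite) :
    ∃ C : ℝ, 0 < C ∧ ∀ t : ℝ, 1 ≤ |t| →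
      alpha1 2 (QuotientGroup.mk (hMat t * gMat s)) ≤ C * |t| ^ (1 - ν⁻¹) := by
  obtain ⟨c, hc, h⟩ := exists_mul_rpow_le_abs hs hfin
  refine ⟨2 + (2 ^ (ν - 1) / c) ^ ν⁻¹, by positivity, fun t ht => ?_⟩
  refine alpha1_mk_le (by positivity) fun m hm => ?_
  have hx := abs_fst_le_eNorm s t m
  have hy := abs_snd_le_eNorm s t m
  have hz := one_le_eNorm_of_fst_eq_zero s t hm
  set r := eNorm (vecOf 2 (hMat t * gMat s) m)
  by_cases h0 : m 0 = 0
  · have hr : 1 / r ≤ 1 := by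
      rw [div_le_one (by linarith [hz h0])]
      exact hz h0
    have hκ : 0 ≤ 1 - ν⁻¹ := sub_nonneg.2 (inv_le_one_of_one_le₀ hν)
    have hTκ : 1 ≤ |t| ^ (1 - ν⁻¹) := Real.one_le_rpow ht hκ
    have hB : 0 ≤ (2 ^ (ν - 1) / c) ^ ν⁻¹ := by positivity
    nlinarith
  · have h2 := abs_sub (m 0 + t * (s * m 0 + m 1) : ℝ) (t * (s * m 0 + m 1))
    rw [add_sub_cancel_right, abs_mul] at h2
    have hr : 0 < r := (abs_pos.2 (hs.mul_intCast_add_intCast_ne_zero h0 (m 1))).trans_le hy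
    refine one_div_le_mul_rpow hc hν (one_le_abs_intCast h0) ht hr ?_ hy (h _ _ h0)
    nlinarith [mul_le_mul_of_nonneg_left hy (abs_nonneg t)]

theorem tendsto_abs_comap : Tendsto (fun t : ℝ => |t|) (comap (fun t : ℝ => |t|) atTop) atTop :=
  tendsto_comap

/-- The function whose limsup is taken along the horocycle. -/
def horocycleRatio (s t : ℝ) : ℝ :=
  Real.log (alpha1 2 (QuotientGroup.mk (hMat t * gMat s))) / Real.log |t|

theorem eventually_horocycleRatio_lt {s κ C : ℝ} (hs : Irrational s) (hC : 0 < C)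
    (h : ∀ t : ℝ, 1 ≤ |t| →
      alpha1 2 (QuotientGroup.mk (hMat t * gMat s)) ≤ C * |t| ^ κ) {ε : ℝ} (hε : 0 < ε) :
    ∀ᶠ t in comap (fun t : ℝ => |t|) atTop, horocycleRatio s t < κ + ε := by
  have hlim : Tendsto (fun t : ℝ => Real.log C / Real.log |t|)
      (comap (fun t : ℝ => |t|) atTop) (nhds 0) :=
    (Real.tendsto_log_atTop.comp tendsto_abs_comap).const_div_atTop _
  filter_upwards [hlim.eventually (gt_mem_nhds hε),
    tendsto_abs_comap.eventually (eventually_gt_atTop 1)] with t h1 h2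
  have hl : 0 < Real.log |t| := Real.log_pos h2
  have h3 := Real.log_le_log (alpha1_horocycle_pos hs t) (h t h2.le)
  rw [Real.log_mul hC.ne' (by positivity), Real.log_rpow (by linarith)] at h3
  rw [div_lt_iff₀ hl] at h1
  rw [horocycleRatio, div_lt_iff₀ hl]
  nlinarith

theorem alpha1_horocycle_le_two_mul (s : ℝ) (t : ℝ) (ht : 1 ≤ |t|) :
    alpha1 2 (QuotientGroup.mk (hMat t * gMat s)) ≤ 2 * |t| ^ (1 : ℝ) := by
  rw [Real.rpow_one]
  exact (alpha1_mk_le (by positivity) (one_div_eNorm_le s t)).trans (by linarith)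

theorem isBoundedUnder_horocycleRatio {s : ℝ} (hs : Irrational s) :
    IsBoundedUnder (· ≤ ·) (comap (fun t : ℝ => |t|) atTop) (horocycleRatio s) :=
  ⟨1 + 1, eventually_map.2 <| (eventually_horocycleRatio_lt hs two_pos
    (alpha1_horocycle_le_two_mul s) one_pos).mono fun _ h => h.le⟩

theorem exists_mem_approxSet_lt_rpow {s ν : ℝ} (hν : 0 < ν) (hinf : (approxSet s ν).Infinite)
    (R : ℝ) : ∃ a ∈ approxSet s ν, R < ((a.2 : ℕ) : ℝ) ^ ν := by
  by_contra! hcon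
  have hev : ∀ᶠ n : ℕ in atTop, R < (n : ℝ) ^ ν :=
    ((tendsto_rpow_atTop hν).comp tendsto_natCast_atTop_atTop).eventually_gt_atTop R
  obtain ⟨N, hN⟩ := eventually_atTop.1 hev
  set B : ℤ := ⌈N * (|s| + 1)⌉
  refine hinf (Set.Finite.subset
    ((Set.finite_Icc (-B) B).prod (Set.finite_Iic (⟨N + 1, N.succ_pos⟩ : ℕ+))) ?_)
  intro a ha
  have hlt : (a.2 : ℕ) < N := by
    by_contra! h
    exact absurd (hN _ h) (not_lt.2 (hcon a ha))
  have hq1 : (1 : ℝ) ≤ ((a.2 : ℕ) : ℝ) := by exact_mod_cast a.2.2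
  have hq : (0 : ℝ) < ((a.2 : ℕ) : ℝ) := by linarith
  have h1 : |s - a.1 / ((a.2 : ℕ) : ℝ)| < 1 :=
    lt_of_lt_of_le ha (Real.rpow_le_one_of_one_le_of_nonpos hq1 (by linarith))
  have h2 : |(a.1 : ℝ) / ((a.2 : ℕ) : ℝ)| ≤ |s| + 1 := by
    have := abs_sub s (s - a.1 / ((a.2 : ℕ) : ℝ))
    rw [_root_.sub_sub_cancel] at this
    linarith
  rw [abs_div, abs_of_pos hq, div_le_iff₀ hq] at h2
  have h3 : |(a.1 : ℝ)| ≤ B := by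
    refine le_trans ?_ (Int.le_ceil _)
    have : ((a.2 : ℕ) : ℝ) ≤ N := by exact_mod_cast hlt.le
    nlinarith [abs_nonneg s]
  have h4 : |a.1| ≤ B := by exact_mod_cast h3
  refine ⟨abs_le.1 h4, ?_⟩
  change (a.2 : ℕ) ≤ N + 1
  omega

theorem frequently_le_horocycleRatio {s ν : ℝ} (hs : Irrational s) (hν : 0 < ν)
    (hinf : (approxSet s ν).Infinite) :
    ∃ᶠ t in comap (fun t : ℝ => |t|) atTop, 1 - ν⁻¹ ≤ horocycleRatio s t := by
  refine ((atTop_basis.comap (fun t : ℝ => |t|)).frequently_iff).2 fun R _ => ?_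
  obtain ⟨⟨p, q⟩, ha, hR⟩ := exists_mem_approxSet_lt_rpow hν hinf (max R 1)
  simp only [approxSet, Set.mem_ofPred_eq] at ha hR
  set Q : ℝ := ((q : ℕ) : ℝ) with hQ
  have hQ0 : 0 < Q := by rw [hQ]; exact_mod_cast q.pos
  have hy := hs.mul_intCast_add_intCast_ne_zero (q := ((q : ℕ) : ℤ))
    (by exact_mod_cast q.ne_zero) (-p)
  push_cast at hy
  rw [← hQ] at hy
  set y : ℝ := s * Q + -p with hydef
  have hy0 : 0 < |y| := abs_pos.2 hy
  have hyQ : |y| < Q * Q ^ (-ν) := by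
    have : y = Q * (s - p / Q) := by rw [hydef]; field_simp; ring
    rw [this, abs_mul, abs_of_pos hQ0]
    gcongr
  have hT : |-Q / y| = Q / |y| := by rw [abs_div, abs_neg, abs_of_pos hQ0]
  have hlarge : Q ^ ν < Q / |y| := by
    rw [lt_div_iff₀ hy0]
    calc Q ^ ν * |y| < Q ^ ν * (Q * Q ^ (-ν)) := by gcongr
      _ = Q := by rw [Real.rpow_neg hQ0.le]; field_simp
  have hT1 : 1 < |-Q / y| := by rw [hT]; exact (le_max_right _ _).trans_lt (hR.trans hlarge)
  refine ⟨-Q / y, ?_, ?_⟩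
  · change R ≤ |-Q / y|
    rw [hT]
    exact (le_max_left _ _).trans (hR.trans hlarge).le
  have hm : (![(q : ℕ), -p] : Fin 2 → ℤ) ≠ 0 := fun h => by simpa using congrFun h 0
  have hle := le_alpha1_mk (one_div_eNorm_le s (-Q / y)) hm
  have hnorm : eNorm (vecOf 2 (hMat (-Q / y) * gMat s) ![(q : ℕ), -p]) = |y| := by
    rw [eNorm_vecOf_hMat_mul_gMat]
    simp only [Matrix.cons_val_zero, Matrix.cons_val_one, Int.cast_natCast, Int.cast_neg]
    rw [← hQ, ← hydef, div_mul_cancel₀ _ hy, add_neg_cancel, ← Real.sqrt_sq_eq_abs]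
    simp
  rw [hnorm] at hle
  have hlog := Real.log_le_log (by positivity) hle
  rw [one_div, Real.log_inv] at hlog
  have hl : 0 < Real.log |-Q / y| := Real.log_pos hT1
  rw [horocycleRatio, le_div_iff₀ hl]
  refine le_trans ?_ hlog
  rw [hT, Real.log_div hQ0.ne' hy0.ne']
  have h5 := Real.log_le_log (by positivity) hlarge.le
  rw [Real.log_rpow hQ0, Real.log_div hQ0.ne' hy0.ne'] at h5
  have h6 : Real.log Q ≤ ν⁻¹ * (Real.log Q - Real.log |y|) := by
    rw [inv_mul_eq_div, le_div_iff₀ hν]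
    linarith
  linarith

theorem infinite_approxSet_one (s : ℝ) : (approxSet s 1).Infinite := by
  refine Set.infinite_of_injective_forall_mem
    (f := fun q : ℕ+ => ((⌊s * (q : ℕ)⌋ : ℤ), q)) (fun a b h => (Prod.ext_iff.1 h).2) fun q => ?_
  have hq : (0 : ℝ) < ((q : ℕ) : ℝ) := by exact_mod_cast q.pos
  have h1 := Int.floor_le (s * (q : ℕ))
  have h2 := Int.lt_floor_add_one (s * (q : ℕ))
  have h3 : s - (⌊s * (q : ℕ)⌋ : ℝ) / ((q : ℕ) : ℝ) =
      (s * (q : ℕ) - ⌊s * (q : ℕ)⌋) / ((q : ℕ) : ℝ) := by field_simp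
  simp only [approxSet, Set.mem_ofPred_eq]
  rw [h3, abs_div, abs_of_pos hq, Real.rpow_neg_one, ← one_div, abs_of_nonneg (by linarith)]
  gcongr
  linarith

theorem isCoboundedUnder_horocycleRatio {s : ℝ} (hs : Irrational s) :
    IsCoboundedUnder (· ≤ ·) (comap (fun t : ℝ => |t|) atTop) (horocycleRatio s) :=
  IsCoboundedUnder.of_frequently_ge
    (frequently_le_horocycleRatio hs one_pos (infinite_approxSet_one s))

theorem limsup_horocycleRatio_le {s κ C : ℝ} (hs : Irrational s) (hC : 0 < C)
    (h : ∀ t : ℝ, 1 ≤ |t| →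
      alpha1 2 (QuotientGroup.mk (hMat t * gMat s)) ≤ C * |t| ^ κ) :
    limsup (horocycleRatio s) (comap (fun t : ℝ => |t|) atTop) ≤ κ :=
  le_of_forall_pos_le_add fun _ hε => limsup_le_of_le (isCoboundedUnder_horocycleRatio hs)
    ((eventually_horocycleRatio_lt hs hC h hε).mono fun _ h => h.le)

theorem le_limsup_horocycleRatio {s ν : ℝ} (hs : Irrational s) (hν : 0 < ν)
    (hinf : (approxSet s ν).Infinite) :
    1 - ν⁻¹ ≤ limsup (horocycleRatio s) (comap (fun t : ℝ => |t|) atTop) :=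
  le_limsup_of_frequently_le (frequently_le_horocycleRatio hs hν hinf)
    (isBoundedUnder_horocycleRatio hs)

theorem ofReal_le_approxExp {s ν : ℝ} (hinf : (approxSet s ν).Infinite) :
    ENNReal.ofReal ν ≤ approxExp s :=
  le_iSup₂_of_le ν hinf le_rfl

theorem limsup_horocycleRatio_le_of_approxExp_ne_top {s : ℝ} (hs : Irrational s)
    (h : approxExp s ≠ ⊤) :
    limsup (horocycleRatio s) (comap (fun t : ℝ => |t|) atTop) ≤ 1 - (approxExp s).toReal⁻¹ := by
  have h1 : 1 ≤ (approxExp s).toReal := by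
    have := ENNReal.toReal_mono h (ofReal_le_approxExp (infinite_approxSet_one s))
    simpa using this
  have hlim : Tendsto (fun ν : ℝ => 1 - ν⁻¹) (nhdsWithin (approxExp s).toReal
      (Set.Ioi (approxExp s).toReal)) (nhds (1 - (approxExp s).toReal⁻¹)) :=
    ((tendsto_inv₀ (by linarith)).const_sub 1).mono_left nhdsWithin_le_nhds
  refine ge_of_tendsto hlim (eventually_nhdsWithin_of_forall fun ν hν => ?_)
  have hν : (approxExp s).toReal < ν := hν
  have hfin : (approxSet s ν).Finite := by
    by_contra hinf
    have := (ENNReal.ofReal_le_iff_le_toReal h).1 (ofReal_le_approxExp hinf)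
    linarith
  obtain ⟨C, hC, hbound⟩ := alpha1_horocycle_le_mul_rpow hs (h1.trans hν.le) hfin
  exact limsup_horocycleRatio_le hs hC hbound

/-- For irrational `s`, `limsup_{|t|→∞} log α₁(h_t Λ_s)/log|t| = 1 - 1/μ(s)`
(interpreted as `1` when `μ(s) = ∞`). -/
theorem horocycle_diophantine (s : ℝ) (hs : Irrational s) :
    ENNReal.ofReal (Filter.limsup
        (fun t : ℝ => Real.log (alpha1 2 (QuotientGroup.mk (hMat t * gMat s))) / Real.log |t|)
        (Filter.comap (fun t : ℝ => |t|) atTop)) = 1 - (approxExp s)⁻¹ := by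
  change ENNReal.ofReal (limsup (horocycleRatio s) (comap (fun t : ℝ => |t|) atTop)) = _
  set L := limsup (horocycleRatio s) (comap (fun t : ℝ => |t|) atTop) with hL
  refine le_antisymm ?_ ?_
  · by_cases h : approxExp s = ⊤
    · rw [h, ENNReal.inv_top, tsub_zero, ENNReal.ofReal_le_one]
      exact limsup_horocycleRatio_le hs two_pos (alpha1_horocycle_le_two_mul s)
    · have h1 : 1 ≤ approxExp s := by
        simpa using ofReal_le_approxExp (infinite_approxSet_one s)
      have hpos : 0 < (approxExp s).toReal :=
        ENNReal.toReal_pos (one_pos.trans_le h1).ne' h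
      refine (ENNReal.ofReal_le_ofReal
        (limsup_horocycleRatio_le_of_approxExp_ne_top hs h)).trans_eq ?_
      rw [ENNReal.ofReal_sub _ (by positivity), ENNReal.ofReal_one,
        ENNReal.ofReal_inv_of_pos hpos, ENNReal.ofReal_toReal h]
  · rw [tsub_le_iff_tsub_le, ENNReal.le_inv_iff_le_inv]
    refine iSup₂_le fun ν hinf => ?_
    rcases le_or_gt ν 0 with hν | hν
    · simp [ENNReal.ofReal_of_nonpos hν]
    rw [ENNReal.le_inv_iff_le_inv, ← ENNReal.ofReal_inv_of_pos hν, tsub_le_iff_right,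
      ← ENNReal.ofReal_one]
    refine (ENNReal.ofReal_le_ofReal ?_).trans ENNReal.ofReal_add_le
    linarith [le_limsup_horocycleRatio hs hν hinf]
end
end
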